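/- Let G be the 1-skeleton of a triangulation of the 2-sphere, and let 𝒫 = {D_v} and 𝒫̃ = {D̃_v} be circle packings in the Riemann sphere Ĉ (collections of pairwise interiorwise-disjoint closed disks) both realizing G as contact graph. Then there is a Möbius or anti-Möbius transformation of Ĉ carrying 𝒫 to 𝒫̃ (sending D_v to D̃_v for every vertex v). -/

import Mathlib

open Metric Real

/-- The Riemann sphere, modeled as the one-point compactification of `ℂ`. -/
abbrev RS := OnePoint ℂ

/-- The Möbius transformation of the Riemann sphere with matrix `[[a,b],[c,d]]`. -/
noncomputable def moeb (a b c d : ℂ) (z : RS) : RS :=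
  match (z : Option ℂ) with
  | Option.none => if c = 0 then (OnePoint.infty : RS) else (((a / c : ℂ) : RS))
  | Option.some w =>
      if c * w + d = 0 then (OnePoint.infty : RS)
      else (((a * w + b) / (c * w + d) : ℂ) : RS)

/-- `f` is a Möbius transformation of the Riemann sphere. -/
def IsMoebius (f : RS → RS) : Prop :=
  ∃ a b c d : ℂ, a * d - b * c ≠ 0 ∧ f = moeb a b c d

/-- Complex conjugation extended to the Riemann sphere. -/
noncomputable def conjRS (z : RS) : RS :=
  match (z : Option ℂ) with
  | Option.none => (OnePoint.infty : RS)
  | Option.some w => (((starRingEnd ℂ) w : ℂ) : RS)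

/-- `f` is an anti-Möbius transformation (a Möbius transformation composed with
complex conjugation). -/
def IsAntiMoebius (f : RS → RS) : Prop :=
  ∃ g : RS → RS, IsMoebius g ∧ f = fun z => g (conjRS z)

/-- The planar closed disk `closedBall c r`, viewed inside the Riemann sphere. -/
def coeDisk (c : ℂ) (r : ℝ) : Set RS :=
  (fun z : ℂ => (z : RS)) '' Metric.closedBall c r

/-- The planar circle `sphere c r`, viewed inside the Riemann sphere. -/
def coeCircle (c : ℂ) (r : ℝ) : Set RS :=
  (fun z : ℂ => (z : RS)) '' Metric.sphere c r

/-- A closed disk in the Riemann sphere: a Möbius image of a planar closed disk. -/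
def IsDiskRS (C : Set RS) : Prop :=
  ∃ f : RS → RS, IsMoebius f ∧ ∃ c : ℂ, ∃ r : ℝ, 0 < r ∧ C = f '' coeDisk c r

/-- A circle in the Riemann sphere: a Möbius image of a planar circle. -/
def IsCircleRS (S : Set RS) : Prop :=
  ∃ f : RS → RS, IsMoebius f ∧ ∃ c : ℂ, ∃ r : ℝ, 0 < r ∧ S = f '' coeCircle c r

/-- External intersection angle of two planar disks, from centers and radii. -/
noncomputable def extAngle (c₁ : ℂ) (r₁ : ℝ) (c₂ : ℂ) (r₂ : ℝ) : ℝ :=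
  Real.arccos ((dist c₁ c₂ ^ 2 - r₁ ^ 2 - r₂ ^ 2) / (2 * r₁ * r₂))

/-- The external intersection angle between two disks on the Riemann sphere equals
`θ`: some Möbius transformation carries both to planar disks whose external
intersection angle is `θ`.  (Möbius transformations preserve these angles.) -/
def AngleIsRS (C₁ C₂ : Set RS) (θ : ℝ) : Prop :=
  ∃ f : RS → RS, IsMoebius f ∧ ∃ c₁ c₂ : ℂ, ∃ r₁ r₂ : ℝ, 0 < r₁ ∧ 0 < r₂ ∧
    f '' C₁ = coeDisk c₁ r₁ ∧ f '' C₂ = coeDisk c₂ r₂ ∧ extAngle c₁ r₁ c₂ r₂ = θ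

/-- Two circles on the Riemann sphere meet orthogonally: some Möbius transformation
carries them to planar circles satisfying the orthogonality relation
`dist(c₁,c₂)² = r₁² + r₂²`. -/
def OrthCirclesRS (S₁ S₂ : Set RS) : Prop :=
  ∃ f : RS → RS, IsMoebius f ∧ ∃ c₁ c₂ : ℂ, ∃ r₁ r₂ : ℝ, 0 < r₁ ∧ 0 < r₂ ∧
    f '' S₁ = coeCircle c₁ r₁ ∧ f '' S₂ = coeCircle c₂ r₂ ∧
    dist c₁ c₂ ^ 2 = r₁ ^ 2 + r₂ ^ 2

/-- `(G, F)` is (the 1-skeleton and face set of) a triangulation of the 2-sphere: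
every face is a triangle of `G`, every edge of `G` lies in exactly two faces, every
vertex lies in a face, `G` is connected, and the Euler characteristic
`|V| - |E| + |F|` equals `2`. -/
def IsSphereTriangulation {V : Type*} [Fintype V] [DecidableEq V]
    (G : SimpleGraph V) [DecidableRel G.Adj] (F : Finset (Finset V)) : Prop :=
  (∀ f ∈ F, f.card = 3) ∧
  (∀ f ∈ F, ∀ u ∈ f, ∀ v ∈ f, u ≠ v → G.Adj u v) ∧
  (∀ u v : V, G.Adj u v → (F.filter fun f => u ∈ f ∧ v ∈ f).card = 2) ∧
  (∀ v : V, ∃ f ∈ F, v ∈ f) ∧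
  G.Connected ∧
  ((Fintype.card V : ℤ) - (G.edgeFinset.card : ℤ) + (F.card : ℤ) = 2)

/-!
The closed disks of the Riemann sphere correspond to the Hermitian forms `X` on `ℂ²` with
`⟨X, X⟩ = 1` for the Lorentz product, on which Möbius transformations act isometrically. Disks with
disjoint interiors have `⟨X, Y⟩ ≤ -1`, with equality exactly for tangent disks. A packing is
determined up to Möbius and anti-Möbius transformations by its Gram matrix, so both packings have to
be shown to have the same Gram matrix.

Fix an edge `xy` and send the tangency point of `D_x` and `D_y` to infinity. The curvature of `D_u`
is then proportional to `κ u = -⟨X_u, X_x⟩ - ⟨X_u, X_y⟩`. Around any other disk `D_v` the petals,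
that is the disks tangent to `D_v`, form a closed chain. The half angle at `v` between consecutive
petals `a` and `a'` is `arcsin √(w_a w_a')` with `w_a = κ v / (κ v + κ a)`, and these half angles
add up to `π`. This sum is strictly monotone in the weights, so a vertex at which the ratio of the
two curvature functions is maximal passes the maximal ratio on to its neighbours. In this way the
maximal ratio reaches a common neighbour of `x` and `y`, where both curvatures are `2`. Hence the
curvature functions agree, and those of the three edges of a triangle at `v` determine all the
products `⟨X_u, X_v⟩`.

That consecutive petals are tangent follows by counting. Sweeping a straight-line drawing from left
to right shows that it has at most `3n - 6` edges. The contact graph attains the bound, so no edge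
can be added to it, and consecutive petals are adjacent. The cyclic order of the petals of `v` might
depend on the packing, but the contact graph of the petals is outerplanar, and the Hamiltonian cycle
of an outerplanar graph is unique.
-/

namespace CirclePacking

/-! ### Noncrossing straight-line drawings -/

section Drawing

variable {W : Type*} {x y : W → ℝ}

/-- Slope of the line through the points drawn at `(x v, y v)` and `(x w, y w)`. -/
noncomputable def chordSlope (x y : W → ℝ) (v w : W) : ℝ := (y w - y v) / (x w - x v)

/-- Height at abscissa `ξ` of the line through the endpoints of `e`. -/
noncomputable def lineHeight (x y : W → ℝ) (e : W × W) (ξ : ℝ) : ℝ :=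
  y e.1 + chordSlope x y e.1 e.2 * (ξ - x e.1)

lemma lineHeight_left (x y : W → ℝ) (e : W × W) : lineHeight x y e (x e.1) = y e.1 := by
  simp [lineHeight]

lemma lineHeight_right (y : W → ℝ) {e : W × W} (he : x e.1 < x e.2) :
    lineHeight x y e (x e.2) = y e.2 := by
  have : x e.2 - x e.1 ≠ 0 := by linarith
  unfold lineHeight chordSlope
  field_simp
  ring

lemma lineHeight_eq_right {e : W × W} (he : x e.1 < x e.2) (ξ : ℝ) :
    lineHeight x y e ξ = y e.2 + chordSlope x y e.1 e.2 * (ξ - x e.2) := by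
  rw [← lineHeight_right y he, lineHeight, lineHeight]
  ring

lemma lineHeight_sub (x y : W → ℝ) (e f : W × W) (ξ : ℝ) :
    lineHeight x y e ξ - lineHeight x y f ξ = lineHeight x y e 0 - lineHeight x y f 0 +
      (chordSlope x y e.1 e.2 - chordSlope x y f.1 f.2) * ξ := by
  unfold lineHeight
  ring

lemma lineHeight_neg (x y : W → ℝ) (e : W × W) (ξ : ℝ) :
    lineHeight x (-y) e ξ = -lineHeight x y e ξ := by
  simp only [lineHeight, chordSlope, Pi.neg_apply]
  ring

lemma le_affine_of_le_of_le {p q ξ₁ ξ ξ₂ m : ℝ} (h₁ : ξ₁ < ξ) (h₂ : ξ < ξ₂)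
    (hm₁ : m ≤ p + q * ξ₁) (hm₂ : m ≤ p + q * ξ₂) : m ≤ p + q * ξ := by
  rcases le_total 0 q with hq | hq <;> nlinarith

lemma exists_affine_eq_zero {p q ξ₁ ξ₂ : ℝ} (h : ξ₁ < ξ₂) (h₁ : p + q * ξ₁ < 0)
    (h₂ : 0 < p + q * ξ₂) : ∃ ξ, ξ₁ < ξ ∧ ξ < ξ₂ ∧ p + q * ξ = 0 := by
  have hq : 0 < q := by nlinarith
  have hξ : q * (-p / q) = -p := by field_simp
  exact ⟨-p / q, by nlinarith, by nlinarith, by linarith⟩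

/-- A noncrossing straight-line drawing with vertex `w` at `(x w, y w)`, in which every edge is
listed with its left endpoint first: edges pass through no other vertex and two edges with a
common interior point coincide. -/
structure IsNoncrossing (x y : W → ℝ) (E : Finset (W × W)) : Prop where
  lt : ∀ e ∈ E, x e.1 < x e.2
  ne_vertex : ∀ e ∈ E, ∀ w, x e.1 < x w → x w < x e.2 → lineHeight x y e (x w) ≠ y w
  eq_of_meet : ∀ e ∈ E, ∀ f ∈ E, ∀ ξ, x e.1 < ξ → ξ < x e.2 → x f.1 < ξ → ξ < x f.2 →
    lineHeight x y e ξ = lineHeight x y f ξ → e = f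

namespace IsNoncrossing

variable {E : Finset (W × W)}

lemma reflect (h : IsNoncrossing x y E) : IsNoncrossing x (-y) E where
  lt := h.lt
  ne_vertex e he w h₁ h₂ := by
    simpa only [lineHeight_neg, Pi.neg_apply, ne_eq, neg_inj] using h.ne_vertex e he w h₁ h₂
  eq_of_meet e he f hf ξ h₁ h₂ h₃ h₄ := by
    simpa only [lineHeight_neg, neg_inj] using h.eq_of_meet e he f hf ξ h₁ h₂ h₃ h₄

lemma not_lt_of_lt (h : IsNoncrossing x y E) {e f : W × W} (he : e ∈ E) (hf : f ∈ E)
    {ξ₁ ξ₂ : ℝ} (h₁₂ : ξ₁ < ξ₂) (he₁ : x e.1 ≤ ξ₁) (he₂ : ξ₂ ≤ x e.2) (hf₁ : x f.1 ≤ ξ₁)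
    (hf₂ : ξ₂ ≤ x f.2) (hlt : lineHeight x y e ξ₁ < lineHeight x y f ξ₁) :
    ¬lineHeight x y f ξ₂ < lineHeight x y e ξ₂ := by
  intro hgt
  have hsub := lineHeight_sub x y e f
  obtain ⟨ξ, hξ₁, hξ₂, hξ⟩ := exists_affine_eq_zero h₁₂ (by rw [← hsub]; linarith)
    (by rw [← hsub]; linarith)
  obtain rfl := h.eq_of_meet e he f hf ξ (by linarith) (by linarith) (by linarith) (by linarith)
    (by linarith [hsub ξ])
  exact lt_irrefl _ hlt

lemma eq_of_chordSlope_eq_left (h : IsNoncrossing x y E) {v a b : W} (ha : (v, a) ∈ E)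
    (hb : (v, b) ∈ E) (hs : chordSlope x y v a = chordSlope x y v b) : a = b := by
  obtain ⟨ξ, hvξ, hξ⟩ := exists_between (lt_min (h.lt (v, a) ha) (h.lt (v, b) hb))
  rw [lt_min_iff] at hξ
  have := h.eq_of_meet _ ha _ hb ξ hvξ hξ.1 hvξ hξ.2 (by simp only [lineHeight, hs])
  exact congrArg Prod.snd this

lemma eq_of_chordSlope_eq_right (h : IsNoncrossing x y E) {a b v : W} (ha : (a, v) ∈ E)
    (hb : (b, v) ∈ E) (hs : chordSlope x y a v = chordSlope x y b v) : a = b := by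
  obtain ⟨ξ, hξ, hξv⟩ := exists_between (max_lt (h.lt (a, v) ha) (h.lt (b, v) hb))
  rw [max_lt_iff] at hξ
  have := h.eq_of_meet _ ha _ hb ξ hξ.1 hξv hξ.2 hξv
    (by rw [lineHeight_eq_right (h.lt _ ha), lineHeight_eq_right (h.lt _ hb)]; simp only [hs])
  exact congrArg Prod.fst this

lemma insert_edge [DecidableEq W] (h : IsNoncrossing x y E) {a b : W} (hab : x a < x b)
    (hvertex : ∀ w, x a < x w → x w < x b → lineHeight x y (a, b) (x w) ≠ y w)
    (hmeet : ∀ f ∈ E, ∀ ξ, x a < ξ → ξ < x b → x f.1 < ξ → ξ < x f.2 →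
      lineHeight x y (a, b) ξ = lineHeight x y f ξ → (a, b) = f) :
    IsNoncrossing x y (insert (a, b) E) where
  lt := Finset.forall_mem_insert _ _ _ |>.2 ⟨hab, h.lt⟩
  ne_vertex := Finset.forall_mem_insert _ _ _ |>.2 ⟨hvertex, h.ne_vertex⟩
  eq_of_meet := by
    refine Finset.forall_mem_insert _ _ _ |>.2 ⟨Finset.forall_mem_insert _ _ _ |>.2
      ⟨fun _ _ _ _ _ _ ↦ rfl, hmeet⟩, fun e he ↦ Finset.forall_mem_insert _ _ _ |>.2
      ⟨fun ξ h₁ h₂ h₃ h₄ heq ↦ ?_, h.eq_of_meet e he⟩⟩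
    exact (hmeet e he ξ h₃ h₄ h₁ h₂ heq.symm).symm

end IsNoncrossing

end Drawing

/-! ### Counting edges by a left-to-right sweep -/

section Sweep

variable {W : Type*} {x y : W → ℝ} {E : Finset (W × W)}

/-- `e` has the smallest slope among the edges whose left endpoint is that of `e`. -/
def IsLowestRightEdge (x y : W → ℝ) (E : Finset (W × W)) (e : W × W) : Prop :=
  ∀ a, (e.1, a) ∈ E → chordSlope x y e.1 e.2 ≤ chordSlope x y e.1 a

/-- `e` has the largest slope among the edges whose right endpoint is that of `e`. -/
def IsLowestLeftEdge (x y : W → ℝ) (E : Finset (W × W)) (e : W × W) : Prop :=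
  ∀ u, (u, e.2) ∈ E → chordSlope x y u e.2 ≤ chordSlope x y e.1 e.2

/-- Among the edges passing strictly above `w`, the edge `e` is the closest one. -/
structure IsDirectlyAbove (x y : W → ℝ) (E : Finset (W × W)) (w : W) (e : W × W) : Prop where
  left_lt : x e.1 < x w
  lt_right : x w < x e.2
  lt_height : y w < lineHeight x y e (x w)
  height_le : ∀ g ∈ E, x g.1 < x w → x w < x g.2 → y w < lineHeight x y g (x w) →
    lineHeight x y e (x w) ≤ lineHeight x y g (x w)

/-- `w` is the leftmost vertex of the closed sector at `v` between the edges `(v, a)` and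
`(v, b)`, where `(v, a)` comes directly below `(v, b)` in the order of slopes. -/
structure IsLeftmostInSector (x y : W → ℝ) (E : Finset (W × W)) (v a b w : W) : Prop where
  lower_mem : (v, a) ∈ E
  upper_mem : (v, b) ∈ E
  slope_lt : chordSlope x y v a < chordSlope x y v b
  slope_le : ∀ d, (v, d) ∈ E → chordSlope x y v d < chordSlope x y v b →
    chordSlope x y v d ≤ chordSlope x y v a
  lt : x v < x w
  le_lower : x w ≤ x a
  le_upper : x w ≤ x b
  height_le : lineHeight x y (v, a) (x w) ≤ y w
  le_height : y w ≤ lineHeight x y (v, b) (x w)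
  empty : ∀ c, x v < x c → x c < x w →
    y c < lineHeight x y (v, a) (x c) ∨ lineHeight x y (v, b) (x c) < y c

lemma lineHeight_lt_iff_chordSlope_lt {v a b : W} {ξ : ℝ} (hξ : x v < ξ) :
    lineHeight x y (v, a) ξ < lineHeight x y (v, b) ξ ↔
      chordSlope x y v a < chordSlope x y v b := by
  rw [lineHeight, lineHeight, add_lt_add_iff_left, mul_lt_mul_iff_left₀ (sub_pos.2 hξ)]

lemma IsNoncrossing.exists_isLeftmostInSector [Finite W] (h : IsNoncrossing x y E) {v b : W}
    (hb : (v, b) ∈ E) (hlow : ¬IsLowestRightEdge x y E (v, b)) :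
    ∃ a w, IsLeftmostInSector x y E v a b w := by
  have hvb : x v < x b := h.lt _ hb
  simp only [IsLowestRightEdge, not_forall, not_le, exists_prop] at hlow
  obtain ⟨a, ⟨ha, hab⟩, hamax⟩ := Set.exists_max_image
    {a | (v, a) ∈ E ∧ chordSlope x y v a < chordSlope x y v b} (chordSlope x y v)
    (Set.toFinite _) hlow
  have hva : x v < x a := h.lt _ ha
  have hle {c : W} (hc : x v < x c) :
      lineHeight x y (v, a) (x c) ≤ lineHeight x y (v, b) (x c) :=
    ((lineHeight_lt_iff_chordSlope_lt hc).2 hab).le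
  have hya : lineHeight x y (v, a) (x a) = y a := lineHeight_right y hva
  have hyb : lineHeight x y (v, b) (x b) = y b := lineHeight_right y hvb
  have ha_mem := And.intro hva (And.intro hya.le (hya ▸ hle hva))
  obtain ⟨w, hw, hwmin⟩ := Set.exists_min_image
    {w | x v < x w ∧ lineHeight x y (v, a) (x w) ≤ y w ∧ y w ≤ lineHeight x y (v, b) (x w)} x
    (Set.toFinite _) ⟨a, ha_mem⟩
  refine ⟨a, w, ha, hb, hab, fun d hd hdb ↦ hamax d ⟨hd, hdb⟩, hw.1, hwmin a ha_mem,
    hwmin b ⟨hvb, hyb ▸ hle hvb, hyb.ge⟩, hw.2.1, hw.2.2, fun c hvc hcw ↦ ?_⟩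
  by_contra! hc
  exact hcw.not_ge (hwmin c ⟨hvc, hc⟩)

namespace IsLeftmostInSector

variable {v a b w : W}

lemma isLowestLeftEdge (hs : IsLeftmostInSector x y E v a b b) (h : IsNoncrossing x y E) :
    IsLowestLeftEdge x y E (v, b) := by
  intro u hu
  by_contra! hslope
  have hub : x u < x b := h.lt _ hu
  have hbelow {ξ : ℝ} (hξ : ξ < x b) :
      lineHeight x y (u, b) ξ < lineHeight x y (v, b) ξ := by
    rw [lineHeight_eq_right hub, lineHeight_eq_right hs.lt]
    nlinarith
  have hab : lineHeight x y (v, a) (x b) < lineHeight x y (u, b) (x b) := by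
    rw [lineHeight_right y (e := (u, b)) hub, ← lineHeight_right y (e := (v, b)) hs.lt]
    exact (lineHeight_lt_iff_chordSlope_lt hs.lt).2 hs.slope_lt
  rcases le_or_gt (x u) (x v) with huv | hvu
  · refine h.not_lt_of_lt hu hs.lower_mem hs.lt huv le_rfl le_rfl hs.le_lower ?_ hab
    simpa only [lineHeight_left x y (v, a), ← lineHeight_left x y (v, b)] using hbelow hs.lt
  · have hyu := hbelow hub
    rw [lineHeight_left x y (u, b)] at hyu
    refine h.not_lt_of_lt hu hs.lower_mem hub le_rfl le_rfl hvu.le hs.le_lower ?_ hab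
    rw [lineHeight_left x y (u, b)]
    exact (hs.empty u hvu hub).resolve_right hyu.not_gt

lemma isDirectlyAbove (hs : IsLeftmostInSector x y E v a b w) (h : IsNoncrossing x y E)
    (hx : Function.Injective x) (hwb : x w < x b) : IsDirectlyAbove x y E w (v, b) where
  left_lt := hs.lt
  lt_right := hwb
  lt_height := hs.le_height.lt_of_ne fun heq ↦ h.ne_vertex _ hs.upper_mem w hs.lt hwb heq.symm
  height_le := by
    rintro ⟨c, d⟩ hg hcw hwd hyg
    by_contra! hlt
    have hag : lineHeight x y (v, a) (x w) < lineHeight x y (c, d) (x w) :=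
      hs.height_le.trans_lt hyg
    rcases lt_trichotomy (x c) (x v) with hcv | hcv | hvc
    · rcases (h.ne_vertex _ hg v hcv (hs.lt.trans hwd)).lt_or_gt with hv | hv
      · exact h.not_lt_of_lt hg hs.lower_mem hs.lt hcv.le hwd.le le_rfl hs.le_lower
          (by rwa [lineHeight_left x y (v, a)]) hag
      · exact h.not_lt_of_lt hs.upper_mem hg hs.lt le_rfl hwb.le hcv.le hwd.le
          (by rwa [lineHeight_left x y (v, b)]) hlt
    · obtain rfl := hx hcv
      have hda := hs.slope_le d hg ((lineHeight_lt_iff_chordSlope_lt hcw).1 hlt)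
      exact hda.not_gt ((lineHeight_lt_iff_chordSlope_lt hcw).1 hag)
    · rcases hs.empty c hvc hcw with hc | hc
      · exact h.not_lt_of_lt hg hs.lower_mem hcw le_rfl hwd.le hvc.le hs.le_lower
          (by rwa [lineHeight_left x y (c, d)]) hag
      · exact h.not_lt_of_lt hs.upper_mem hg hcw hvc.le hwb.le le_rfl hwd.le
          (by rwa [lineHeight_left x y (c, d)]) hlt

end IsLeftmostInSector

variable [Fintype W]

open Classical in
/-- The vertices with no edge passing strictly below them. -/
noncomputable def lowerVertices (x y : W → ℝ) (E : Finset (W × W)) : Finset W :=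
  {w | ∀ e ∈ E, x e.1 < x w → x w < x e.2 → y w ≤ lineHeight x y e (x w)}

/-- The vertices with no edge passing strictly above them, encoded through the reflection
`y ↦ -y`. -/
noncomputable def upperVertices (x y : W → ℝ) (E : Finset (W × W)) : Finset W :=
  lowerVertices x (-y) E

lemma mem_lowerVertices {w : W} : w ∈ lowerVertices x y E ↔
    ∀ e ∈ E, x e.1 < x w → x w < x e.2 → y w ≤ lineHeight x y e (x w) := by
  simp [lowerVertices]

lemma mem_upperVertices {w : W} : w ∈ upperVertices x y E ↔
    ∀ e ∈ E, x e.1 < x w → x w < x e.2 → lineHeight x y e (x w) ≤ y w := by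
  simp [upperVertices, mem_lowerVertices, lineHeight_neg]

lemma upperVertices_reflect (x y : W → ℝ) (E : Finset (W × W)) :
    upperVertices x (-y) E = lowerVertices x y E := by
  rw [upperVertices, neg_neg]

lemma first_mem_lowerVertices {a : W} (ha : ∀ w, x a ≤ x w) : a ∈ lowerVertices x y E :=
  mem_lowerVertices.2 fun e _ h _ ↦ absurd h (ha e.1).not_gt

lemma last_mem_lowerVertices {b : W} (hb : ∀ w, x w ≤ x b) : b ∈ lowerVertices x y E :=
  mem_lowerVertices.2 fun e _ _ h ↦ absurd h (hb e.2).not_gt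

lemma IsLeftmostInSector.notMem_lowerVertices {v a b : W}
    (hs : IsLeftmostInSector x y E v a b b) (hx : Function.Injective x) :
    b ∉ lowerVertices x y E := by
  have hba : x b < x a := hs.le_lower.lt_of_ne fun heq ↦ hs.slope_lt.ne (by rw [hx heq])
  have hheight : lineHeight x y (v, a) (x b) < y b := by
    rw [← lineHeight_right y (e := (v, b)) hs.lt]
    exact (lineHeight_lt_iff_chordSlope_lt hs.lt).2 hs.slope_lt
  exact fun hb ↦ (mem_lowerVertices.1 hb _ hs.lower_mem hs.lt hba).not_gt hheight

namespace IsNoncrossing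

-- Follow the face just below the left end of `(v, b)` to the right until it meets a vertex.
lemma edge_trichotomy (h : IsNoncrossing x y E) (hx : Function.Injective x) {e : W × W}
    (he : e ∈ E) : IsLowestRightEdge x y E e ∨
      (IsLowestLeftEdge x y E e ∧ e.2 ∉ lowerVertices x y E) ∨
      ∃ w, IsDirectlyAbove x y E w e := by
  obtain ⟨v, b⟩ := e
  refine or_iff_not_imp_left.2 fun hlow ↦ ?_
  obtain ⟨a, w, hs⟩ := h.exists_isLeftmostInSector he hlow
  rcases hs.le_upper.eq_or_lt with hwb | hwb
  · obtain rfl := hx hwb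
    exact Or.inl ⟨hs.isLowestLeftEdge h, hs.notMem_lowerVertices hx⟩
  · exact Or.inr ⟨w, hs.isDirectlyAbove h hx hwb⟩

lemma card_lt_of_isLowestRightEdge [Nonempty W] (h : IsNoncrossing x y E)
    {S : Finset (W × W)} (hSE : S ⊆ E) (hS : ∀ e ∈ S, IsLowestRightEdge x y E e) :
    S.card < Fintype.card W := by
  classical
  obtain ⟨last, hlast⟩ := Finite.exists_max x
  have hmaps : S.image Prod.fst ⊂ Finset.univ := by
    refine Finset.ssubset_univ_iff.2 fun huniv ↦ ?_
    obtain ⟨e, he, rfl⟩ := Finset.mem_image.1 (huniv ▸ Finset.mem_univ last)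
    exact (h.lt e (hSE he)).not_ge (hlast e.2)
  refine (Finset.card_image_of_injOn ?_).symm.trans_lt (Finset.card_lt_card hmaps)
  rintro ⟨v, b⟩ hb ⟨_, b'⟩ hb' rfl
  obtain rfl := h.eq_of_chordSlope_eq_left (hSE hb) (hSE hb')
    ((hS _ hb _ (hSE hb')).antisymm (hS _ hb' _ (hSE hb)))
  rfl

lemma card_add_card_lowerVertices_le (h : IsNoncrossing x y E) {S : Finset (W × W)}
    (hSE : S ⊆ E) (hS : ∀ e ∈ S, IsLowestLeftEdge x y E e ∧ e.2 ∉ lowerVertices x y E) :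
    S.card + (lowerVertices x y E).card ≤ Fintype.card W := by
  classical
  rw [← Nat.le_sub_iff_add_le (Finset.card_le_univ _), ← Finset.card_compl]
  refine Finset.card_le_card_of_injOn Prod.snd (fun e he ↦ by simpa using (hS e he).2) ?_
  rintro ⟨v, b⟩ hv ⟨v', _⟩ hv' rfl
  obtain rfl := h.eq_of_chordSlope_eq_right (hSE hv) (hSE hv')
    (((hS _ hv').1 _ (hSE hv)).antisymm ((hS _ hv).1 _ (hSE hv')))
  rfl

lemma card_add_card_upperVertices_le (h : IsNoncrossing x y E) {S : Finset (W × W)}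
    (hSE : S ⊆ E) (hS : ∀ e ∈ S, ∃ w, IsDirectlyAbove x y E w e) :
    S.card + (upperVertices x y E).card ≤ Fintype.card W := by
  classical
  rcases isEmpty_or_nonempty W
  · simp [Finset.eq_empty_of_isEmpty]
  choose! f hf using hS
  rw [← Nat.le_sub_iff_add_le (Finset.card_le_univ _), ← Finset.card_compl]
  refine Finset.card_le_card_of_injOn f (fun e he ↦ ?_) fun e he g hg hfg ↦ ?_
  · have hd := hf e he
    simpa [mem_upperVertices] using
      ⟨_, _, hSE he, hd.left_lt, hd.lt_right, hd.lt_height⟩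
  · have h₁ := hf e he
    have h₂ := hfg ▸ hf g hg
    exact h.eq_of_meet e (hSE he) g (hSE hg) _ h₁.left_lt h₁.lt_right h₂.left_lt h₂.lt_right
      ((h₁.height_le g (hSE hg) h₂.left_lt h₂.lt_right h₂.lt_height).antisymm
        (h₂.height_le e (hSE he) h₁.left_lt h₁.lt_right h₁.lt_height))

theorem card_edges_le [Nonempty W] (h : IsNoncrossing x y E) (hx : Function.Injective x) :
    E.card + (lowerVertices x y E).card + (upperVertices x y E).card + 1 ≤
      3 * Fintype.card W := by
  classical
  have hcover : E ⊆ E.filter (IsLowestRightEdge x y E) ∪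
      (E.filter (fun e ↦ IsLowestLeftEdge x y E e ∧ e.2 ∉ lowerVertices x y E) ∪
        E.filter fun e ↦ ∃ w, IsDirectlyAbove x y E w e) := fun e he ↦ by
    simpa [he] using h.edge_trichotomy hx he
  have hright := h.card_lt_of_isLowestRightEdge (S := E.filter (IsLowestRightEdge x y E))
    (Finset.filter_subset _ _) fun e he ↦ (Finset.mem_filter.1 he).2
  have hleft := h.card_add_card_lowerVertices_le
    (S := E.filter fun e ↦ IsLowestLeftEdge x y E e ∧ e.2 ∉ lowerVertices x y E)
    (Finset.filter_subset _ _) fun e he ↦ (Finset.mem_filter.1 he).2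
  have habove := h.card_add_card_upperVertices_le
    (S := E.filter fun e ↦ ∃ w, IsDirectlyAbove x y E w e)
    (Finset.filter_subset _ _) fun e he ↦ (Finset.mem_filter.1 he).2
  have hcard := (Finset.card_le_card hcover).trans (Finset.card_union_le _ _)
  have hcard' := Finset.card_union_le
    (E.filter fun e ↦ IsLowestLeftEdge x y E e ∧ e.2 ∉ lowerVertices x y E)
    (E.filter fun e ↦ ∃ w, IsDirectlyAbove x y E w e)
  omega

end IsNoncrossing

end Sweep

/-! ### Saturated drawings -/

section Saturated

variable {W : Type*} {x y : W → ℝ} {E : Finset (W × W)} {a b : W}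

/-- `a` and `b` belong to `D`, and `b` is the next element of `D` to the right of `a`. -/
structure IsConsecutive (x : W → ℝ) (D : Finset W) (a b : W) : Prop where
  left_mem : a ∈ D
  right_mem : b ∈ D
  lt : x a < x b
  notMem : ∀ c, x a < x c → x c < x b → c ∉ D

lemma exists_first_last [Finite W] [Nontrivial W] (hx : Function.Injective x) :
    ∃ a b, x a < x b ∧ (∀ w, x a ≤ x w) ∧ ∀ w, x w ≤ x b := by
  obtain ⟨a, ha⟩ := Finite.exists_min x
  obtain ⟨b, hb⟩ := Finite.exists_max x
  obtain ⟨c, hc⟩ := exists_ne a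
  have hac : x a < x c := (ha c).lt_of_ne fun h ↦ hc (hx h).symm
  exact ⟨a, b, hac.trans_le (hb c), ha, hb⟩

variable [Fintype W]

/-- A noncrossing drawing with the largest number of edges that `IsNoncrossing.card_edges_le`
permits. -/
structure IsSaturated (x y : W → ℝ) (E : Finset (W × W)) : Prop extends IsNoncrossing x y E where
  injective : Function.Injective x
  card_eq : E.card + (lowerVertices x y E).card + (upperVertices x y E).card + 1 =
    3 * Fintype.card W

lemma pair_subset_lowerVertices [DecidableEq W] (y : W → ℝ) (E : Finset (W × W))
    (ha : ∀ w, x a ≤ x w) (hb : ∀ w, x w ≤ x b) : {a, b} ⊆ lowerVertices x y E := by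
  simp only [Finset.insert_subset_iff, Finset.singleton_subset_iff]
  exact ⟨first_mem_lowerVertices ha, last_mem_lowerVertices hb⟩

lemma two_le_card_lowerVertices [Nontrivial W] (hx : Function.Injective x) (y : W → ℝ)
    (E : Finset (W × W)) : 2 ≤ (lowerVertices x y E).card := by
  classical
  obtain ⟨a, b, hab, ha, hb⟩ := exists_first_last hx
  rw [← Finset.card_pair (ne_of_apply_ne x hab.ne)]
  exact Finset.card_le_card (pair_subset_lowerVertices y E ha hb)

lemma isConsecutive_lowerVertices_of_card_eq_two (hcard : (lowerVertices x y E).card = 2)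
    (hab : x a < x b) (ha : ∀ w, x a ≤ x w) (hb : ∀ w, x w ≤ x b) :
    IsConsecutive x (lowerVertices x y E) a b where
  left_mem := first_mem_lowerVertices ha
  right_mem := last_mem_lowerVertices hb
  lt := hab
  notMem c hac hcb := by
    classical
    have heq : {a, b} = lowerVertices x y E :=
      Finset.eq_of_subset_of_card_le (pair_subset_lowerVertices y E ha hb)
        (by rw [hcard, Finset.card_pair (ne_of_apply_ne x hab.ne)])
    rw [← heq, Finset.mem_insert, Finset.mem_singleton]
    rintro (rfl | rfl)
    · exact lt_irrefl _ hac
    · exact lt_irrefl _ hcb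

namespace IsNoncrossing

lemma isSaturated_of_subset_lowerVertices [Nontrivial W] (h : IsNoncrossing x y E)
    (hx : Function.Injective x) {D : Finset W} (hD : D ⊆ lowerVertices x y E)
    (hcard : E.card + D.card + 3 = 3 * Fintype.card W) :
    IsSaturated x y E ∧ lowerVertices x y E = D ∧ (upperVertices x y E).card = 2 := by
  have hle := h.card_edges_le hx
  have hlower := Finset.card_le_card hD
  have hupper : 2 ≤ (upperVertices x y E).card := two_le_card_lowerVertices hx (-y) E
  exact ⟨⟨h, hx, by omega⟩, (Finset.eq_of_subset_of_card_le hD (by omega)).symm, by omega⟩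

lemma le_lineHeight_sub (h : IsNoncrossing x y E) (hx : Function.Injective x)
    (ha : a ∈ lowerVertices x y E) (hb : b ∈ lowerVertices x y E) {m : ℝ} (hm : m ≤ 0)
    (hvertex : ∀ w, x a < x w → x w < x b → m ≤ y w - lineHeight x y (a, b) (x w))
    {e : W × W} (he : e ∈ E) {ξ : ℝ} (haξ : x a < ξ) (hξb : ξ < x b) (heξ : x e.1 < ξ)
    (hξe : ξ < x e.2) : m ≤ lineHeight x y e ξ - lineHeight x y (a, b) ξ := by
  have hya : lineHeight x y (a, b) (x a) = y a := lineHeight_left x y (a, b)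
  have hyb : lineHeight x y (a, b) (x b) = y b := lineHeight_right y (haξ.trans hξb)
  have hleft : ∃ ξ₁ < ξ, m ≤ lineHeight x y e ξ₁ - lineHeight x y (a, b) ξ₁ := by
    rcases lt_trichotomy (x e.1) (x a) with hlt | heq | hgt
    · have := mem_lowerVertices.1 ha e he hlt (haξ.trans hξe)
      exact ⟨x a, haξ, by linarith⟩
    · exact ⟨x e.1, heξ, by rw [lineHeight_left, hx heq, hya]; linarith⟩
    · exact ⟨x e.1, heξ, by rw [lineHeight_left]; exact hvertex _ hgt (heξ.trans hξb)⟩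
  have hright : ∃ ξ₂ > ξ, m ≤ lineHeight x y e ξ₂ - lineHeight x y (a, b) ξ₂ := by
    rcases lt_trichotomy (x e.2) (x b) with hlt | heq | hgt
    · exact ⟨x e.2, hξe, by
        rw [lineHeight_right y (h.lt e he)]; exact hvertex _ (haξ.trans hξe) hlt⟩
    · exact ⟨x e.2, hξe, by rw [lineHeight_right y (h.lt e he), hx heq, hyb]; linarith⟩
    · have := mem_lowerVertices.1 hb e he (heξ.trans hξb) hgt
      exact ⟨x b, hξb, by linarith⟩
  obtain ⟨ξ₁, hξ₁, hm₁⟩ := hleft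
  obtain ⟨ξ₂, hξ₂, hm₂⟩ := hright
  rw [lineHeight_sub] at hm₁ hm₂ ⊢
  exact le_affine_of_le_of_le hξ₁ hξ₂ hm₁ hm₂

lemma lineHeight_lt_of_isConsecutive (h : IsNoncrossing x y E) (hx : Function.Injective x)
    (hab : IsConsecutive x (lowerVertices x y E) a b) {w : W} (haw : x a < x w)
    (hwb : x w < x b) : lineHeight x y (a, b) (x w) < y w := by
  by_contra! hle
  obtain ⟨u, ⟨hau, hub⟩, hmin⟩ := Set.exists_min_image {u | x a < x u ∧ x u < x b}
    (fun u ↦ y u - lineHeight x y (a, b) (x u)) (Set.toFinite _) ⟨w, haw, hwb⟩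
  have hu := hab.notMem u hau hub
  simp only [mem_lowerVertices, not_forall, not_le] at hu
  obtain ⟨e, he, heu, hue, hlt⟩ := hu
  have := h.le_lineHeight_sub hx hab.left_mem hab.right_mem
    (m := y u - lineHeight x y (a, b) (x u)) (by linarith [hmin w ⟨haw, hwb⟩])
    (fun c hac hcb ↦ hmin c ⟨hac, hcb⟩) he hau hub heu hue
  linarith

lemma lineHeight_eq_of_isConsecutive (h : IsNoncrossing x y E) (hx : Function.Injective x)
    (hab : IsConsecutive x (lowerVertices x y E) a b) {e : W × W} (he : e ∈ E) {ξ : ℝ}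
    (haξ : x a < ξ) (hξb : ξ < x b) (heξ : x e.1 < ξ) (hξe : ξ < x e.2)
    (heq : lineHeight x y (a, b) ξ = lineHeight x y e ξ) (ζ : ℝ) :
    lineHeight x y e ζ = lineHeight x y (a, b) ζ := by
  have hnonneg {ζ : ℝ} (haζ : x a < ζ) (hζb : ζ < x b) (heζ : x e.1 < ζ) (hζe : ζ < x e.2) :
      0 ≤ lineHeight x y e ζ - lineHeight x y (a, b) ζ :=
    h.le_lineHeight_sub hx hab.left_mem hab.right_mem le_rfl
      (fun w haw hwb ↦ sub_nonneg.2 (h.lineHeight_lt_of_isConsecutive hx hab haw hwb).le)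
      he haζ hζb heζ hζe
  obtain ⟨ξ₁, hl, hξ₁⟩ := exists_between (max_lt haξ heξ)
  obtain ⟨ξ₂, hξ₂, hr⟩ := exists_between (lt_min hξb hξe)
  simp only [max_lt_iff, lt_min_iff] at hl hr
  have h₁ := hnonneg hl.1 (by linarith) hl.2 (by linarith)
  have h₂ := hnonneg (by linarith) hr.1 (by linarith) hr.2
  have h₀ := sub_eq_zero.2 heq.symm
  have hζ := lineHeight_sub x y e (a, b) ζ
  rw [lineHeight_sub] at h₀ h₁ h₂
  have hslope : chordSlope x y e.1 e.2 - chordSlope x y a b = 0 := by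
    apply le_antisymm <;> nlinarith
  rw [hslope] at h₀ hζ
  linarith

lemma insert_of_isConsecutive [DecidableEq W] (h : IsNoncrossing x y E)
    (hx : Function.Injective x) (hab : IsConsecutive x (lowerVertices x y E) a b) :
    IsNoncrossing x y (insert (a, b) E) := by
  have habove {w : W} := h.lineHeight_lt_of_isConsecutive hx hab (w := w)
  refine h.insert_edge hab.lt (fun w haw hwb ↦ (habove haw hwb).ne)
    fun e he ξ haξ hξb heξ hξe heq ↦ ?_
  have hsame := h.lineHeight_eq_of_isConsecutive hx hab he haξ hξb heξ hξe heq
  have hleft : e.1 = a := by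
    by_contra hne
    rcases (hx.ne hne).lt_or_gt with hlt | hgt
    · exact h.ne_vertex e he a hlt (haξ.trans hξe) ((hsame _).trans (lineHeight_left x y (a, b)))
    · have := habove hgt (heξ.trans hξb)
      rw [← hsame, lineHeight_left] at this
      exact lt_irrefl _ this
  have hright : e.2 = b := by
    by_contra hne
    rcases (hx.ne hne).lt_or_gt with hlt | hgt
    · have := habove (haξ.trans hξe) hlt
      rw [← hsame, lineHeight_right y (h.lt e he)] at this
      exact lt_irrefl _ this
    · exact h.ne_vertex e he b (heξ.trans hξb) hgt ((hsame _).trans (lineHeight_right y hab.lt))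
  rw [← hleft, ← hright]

end IsNoncrossing

namespace IsSaturated

lemma reflect (h : IsSaturated x y E) : IsSaturated x (-y) E where
  toIsNoncrossing := h.toIsNoncrossing.reflect
  injective := h.injective
  card_eq := by
    rw [upperVertices_reflect, ← h.card_eq, upperVertices]
    ring

lemma mem_of_isConsecutive (h : IsSaturated x y E)
    (hab : IsConsecutive x (lowerVertices x y E) a b) : (a, b) ∈ E := by
  classical
  by_contra hE
  have : Nonempty W := ⟨a⟩
  have hbound := (h.insert_of_isConsecutive h.injective hab).card_edges_le h.injective
  have hlower : lowerVertices x y E ⊆ lowerVertices x y (insert (a, b) E) := fun w hw ↦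
    mem_lowerVertices.2 <| Finset.forall_mem_insert _ _ _ |>.2
      ⟨fun haw hwb ↦ absurd hw (hab.notMem w haw hwb), mem_lowerVertices.1 hw⟩
  have hupper : upperVertices x y E ⊆ upperVertices x y (insert (a, b) E) := fun w hw ↦
    mem_upperVertices.2 <| Finset.forall_mem_insert _ _ _ |>.2
      ⟨fun haw hwb ↦ (h.lineHeight_lt_of_isConsecutive h.injective hab haw hwb).le,
        mem_upperVertices.1 hw⟩
  have hcard_lower := Finset.card_le_card hlower
  have hcard_upper := Finset.card_le_card hupper
  have hcard := h.card_eq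
  rw [Finset.card_insert_of_notMem hE] at hbound
  omega

lemma mem_of_first_last (h : IsSaturated x y E) (hupper : (upperVertices x y E).card = 2)
    (hab : x a < x b) (ha : ∀ w, x a ≤ x w) (hb : ∀ w, x w ≤ x b) : (a, b) ∈ E :=
  h.reflect.mem_of_isConsecutive (isConsecutive_lowerVertices_of_card_eq_two hupper hab ha hb)

lemma lt_lineHeight_of_first_last (h : IsSaturated x y E)
    (hupper : (upperVertices x y E).card = 2) (hab : x a < x b) (ha : ∀ w, x a ≤ x w)
    (hb : ∀ w, x w ≤ x b) {w : W} (haw : x a < x w) (hwb : x w < x b) :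
    y w < lineHeight x y (a, b) (x w) := by
  have := h.reflect.lineHeight_lt_of_isConsecutive h.injective
    (isConsecutive_lowerVertices_of_card_eq_two hupper hab ha hb) haw hwb
  simpa only [lineHeight_neg, Pi.neg_apply, neg_lt_neg_iff] using this

lemma two_lt_card_lowerVertices (h : IsSaturated x y E)
    (hupper : (upperVertices x y E).card = 2) (hW : 2 < Fintype.card W) :
    2 < (lowerVertices x y E).card := by
  have : Nontrivial W := Fintype.one_lt_card_iff_nontrivial.1 (by omega)
  obtain ⟨a, b, hab, ha, hb⟩ := exists_first_last h.injective
  by_contra! hle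
  have hlower := hle.antisymm (two_le_card_lowerVertices h.injective y E)
  classical
  obtain ⟨w, -, hw⟩ := Finset.exists_mem_notMem_of_card_lt_card
    ((Finset.card_le_two (a := a) (b := b)).trans_lt hW)
  simp only [Finset.mem_insert, Finset.mem_singleton, not_or] at hw
  have haw : x a < x w := (ha w).lt_of_ne (h.injective.ne (Ne.symm hw.1))
  have hwb : x w < x b := (hb w).lt_of_ne (h.injective.ne hw.2)
  exact lt_asymm (h.lt_lineHeight_of_first_last hupper hab ha hb haw hwb)
    (h.lineHeight_lt_of_isConsecutive h.injective
      (isConsecutive_lowerVertices_of_card_eq_two hlower hab ha hb) haw hwb)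

end IsSaturated

end Saturated

/-! ### Packings in the upper half plane -/

section HalfPlane

variable {U : Type*} {H : SimpleGraph U} {t s r : U → ℝ} {ε : ℝ} {a b u : U}

/-- The disks with centers `(t u, s u)` and radii `r u` form a packing of the closed upper half
plane with contact graph `H`. -/
structure IsHalfPlanePacking (H : SimpleGraph U) (t s r : U → ℝ) : Prop where
  radius_pos : ∀ u, 0 < r u
  radius_le : ∀ u, r u ≤ s u
  sep : ∀ u w, u ≠ w → (r u + r w) ^ 2 ≤ (t u - t w) ^ 2 + (s u - s w) ^ 2
  adj_iff : ∀ u w, u ≠ w → (H.Adj u w ↔ (t u - t w) ^ 2 + (s u - s w) ^ 2 = (r u + r w) ^ 2)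

namespace IsHalfPlanePacking

lemma height_pos (h : IsHalfPlanePacking H t s r) (u : U) : 0 < s u :=
  (h.radius_pos u).trans_le (h.radius_le u)

lemma dist_sq_eq (h : IsHalfPlanePacking H t s r) (hab : H.Adj a b) :
    (t a - t b) ^ 2 + (s a - s b) ^ 2 = (r a + r b) ^ 2 :=
  (h.adj_iff a b hab.ne).1 hab

lemma edge_outside_disk (h : IsHalfPlanePacking H t s r) (hab : H.Adj a b) (ha : u ≠ a)
    (hb : u ≠ b) {l : ℝ} (hl₀ : 0 ≤ l) (hl₁ : l ≤ 1) :
    r u ^ 2 < ((1 - l) * t a + l * t b - t u) ^ 2 + ((1 - l) * s a + l * s b - s u) ^ 2 := by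
  have hra := h.radius_pos a
  have hrb := h.radius_pos b
  have hpos : 0 < (1 - l) * r a + l * r b := by
    rcases hl₀.eq_or_lt with rfl | hl₀
    · linarith
    · nlinarith [mul_pos hl₀ hrb]
  calc r u ^ 2
      < r u ^ 2 + 2 * r u * ((1 - l) * r a + l * r b) + ((1 - l) * r a - l * r b) ^ 2 := by
        have := mul_pos (h.radius_pos u) hpos
        nlinarith [sq_nonneg ((1 - l) * r a - l * r b)]
    _ = (1 - l) * (r a + r u) ^ 2 + l * (r b + r u) ^ 2 - l * (1 - l) * (r a + r b) ^ 2 := by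
        ring
    _ ≤ (1 - l) * ((t a - t u) ^ 2 + (s a - s u) ^ 2) + l * ((t b - t u) ^ 2 + (s b - s u) ^ 2)
          - l * (1 - l) * ((t a - t b) ^ 2 + (s a - s b) ^ 2) := by
        rw [h.dist_sq_eq hab]
        have ha' := mul_le_mul_of_nonneg_left (h.sep a u ha.symm) (sub_nonneg.2 hl₁)
        have hb' := mul_le_mul_of_nonneg_left (h.sep b u hb.symm) hl₀
        linarith
    _ = _ := by ring

lemma edge_subset_disks (h : IsHalfPlanePacking H t s r) (hab : H.Adj a b) {l : ℝ} (hl₀ : 0 ≤ l)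
    (hl₁ : l ≤ 1) :
    ((1 - l) * t a + l * t b - t a) ^ 2 + ((1 - l) * s a + l * s b - s a) ^ 2 ≤ r a ^ 2 ∨
    ((1 - l) * t a + l * t b - t b) ^ 2 + ((1 - l) * s a + l * s b - s b) ^ 2 ≤ r b ^ 2 := by
  have hra := h.radius_pos a
  have hrb := h.radius_pos b
  refine (le_total (l * (r a + r b)) (r a)).imp (fun hle ↦ ?_) fun hle ↦ ?_
  · calc _ = (l * (r a + r b)) ^ 2 := by rw [mul_pow, ← h.dist_sq_eq hab]; ring
      _ ≤ r a ^ 2 := pow_le_pow_left₀ (by positivity) hle 2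
  · calc _ = ((1 - l) * (r a + r b)) ^ 2 := by rw [mul_pow, ← h.dist_sq_eq hab]; ring
      _ ≤ r b ^ 2 := pow_le_pow_left₀ (mul_nonneg (by linarith) (by linarith)) (by linarith) 2

lemma share_endpoint_of_meet (h : IsHalfPlanePacking H t s r) {a b c d : U} (hab : H.Adj a b)
    (hcd : H.Adj c d) {l m : ℝ} (hl₀ : 0 ≤ l) (hl₁ : l ≤ 1) (hm₀ : 0 ≤ m) (hm₁ : m ≤ 1)
    (ht : (1 - l) * t a + l * t b = (1 - m) * t c + m * t d)
    (hs : (1 - l) * s a + l * s b = (1 - m) * s c + m * s d) :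
    a = c ∨ a = d ∨ b = c ∨ b = d := by
  by_contra! hne
  have hmem := h.edge_subset_disks hab hl₀ hl₁
  rw [ht, hs] at hmem
  rcases hmem with hmem | hmem
  · exact hmem.not_gt (h.edge_outside_disk hcd hne.1 hne.2.1 hm₀ hm₁)
  · exact hmem.not_gt (h.edge_outside_disk hcd hne.2.2.1 hne.2.2.2 hm₀ hm₁)

end IsHalfPlanePacking

lemma exists_convexCombination_of_lt_of_lt (x y : U → ℝ) (e : U × U) {ξ : ℝ} (h₁ : x e.1 < ξ)
    (h₂ : ξ < x e.2) : ∃ l : ℝ, 0 ≤ l ∧ l ≤ 1 ∧ ξ = (1 - l) * x e.1 + l * x e.2 ∧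
      lineHeight x y e ξ = (1 - l) * y e.1 + l * y e.2 := by
  have hpos : 0 < x e.2 - x e.1 := by linarith
  refine ⟨(ξ - x e.1) / (x e.2 - x e.1), div_nonneg (by linarith) hpos.le,
    (div_le_one hpos).2 (by linarith), ?_, ?_⟩
  · field_simp
    ring
  · rw [lineHeight, chordSlope]
    field_simp
    ring

/-- Abscissae after the shear `(t, s) ↦ (t + ε s, s)`. Shearing puts the centers in general
position, since distinct centers may share their abscissa. -/
def shear (t s : U → ℝ) (ε : ℝ) (u : U) : ℝ := t u + ε * s u

/-- A shear by `ε > 0` small enough to preserve strict inequalities between abscissae and to keep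
every disk tangent to the real axis visible from below. -/
structure IsSmallShear (t s r : U → ℝ) (ε : ℝ) : Prop where
  pos : 0 < ε
  lt_of_lt : ∀ u w, t u < t w → shear t s ε u < shear t s ε w
  sq_mul_le : ∀ u w, ε ^ 2 * r u ≤ s w

lemma IsSmallShear.le_of_le (hε : IsSmallShear t s r ε) {u w : U}
    (h : shear t s ε u ≤ shear t s ε w) : t u ≤ t w :=
  le_of_not_gt fun hlt ↦ h.not_gt (hε.lt_of_lt _ _ hlt)

namespace IsHalfPlanePacking

lemma exists_isSmallShear [Finite U] (h : IsHalfPlanePacking H t s r) :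
    ∃ ε, IsSmallShear t s r ε := by
  have hlt : ∀ᶠ ε : ℝ in nhds 0, ∀ u w, t u < t w → shear t s ε u < shear t s ε w := by
    simp only [Filter.eventually_all, shear]
    intro u w huw
    exact Filter.Tendsto.eventually_lt (Continuous.tendsto' (by fun_prop) 0 (t u) (by simp))
      (Continuous.tendsto' (by fun_prop) 0 (t w) (by simp)) huw
  have hle : ∀ᶠ ε : ℝ in nhds 0, ∀ u w, ε ^ 2 * r u ≤ s w := by
    simp only [Filter.eventually_all]
    intro u w
    have htendsto : Filter.Tendsto (fun ε : ℝ ↦ ε ^ 2 * r u) (nhds 0) (nhds 0) :=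
      Continuous.tendsto' (by fun_prop) _ _ (by simp)
    exact htendsto.eventually_le_const (h.height_pos w)
  obtain ⟨ε, ⟨hlt, hle⟩, hpos⟩ :=
    ((eventually_nhdsWithin_of_eventually_nhds (hlt.and hle)).and
      (self_mem_nhdsWithin (s := Set.Ioi (0 : ℝ)))).exists
  exact ⟨ε, hpos, hlt, hle⟩

lemma eq_of_center_eq (h : IsHalfPlanePacking H t s r) {u w : U} (ht : t u = t w)
    (hs : s u = s w) : u = w := by
  by_contra hne
  have hsep := h.sep u w hne
  rw [ht, hs] at hsep
  nlinarith [h.radius_pos u, h.radius_pos w]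

lemma shear_injective (h : IsHalfPlanePacking H t s r) (hε : IsSmallShear t s r ε) :
    Function.Injective (shear t s ε) := by
  intro u w huw
  have ht : t u = t w := (hε.le_of_le huw.le).antisymm (hε.le_of_le huw.ge)
  have hs : ε * s u = ε * s w := by simpa only [shear, ht, add_right_inj] using huw
  exact h.eq_of_center_eq ht (mul_left_cancel₀ hε.pos.ne' hs)

lemma lineHeight_shear_ne (h : IsHalfPlanePacking H t s r) {e : U × U} (he : H.Adj e.1 e.2)
    {w : U} (h₁ : shear t s ε e.1 < shear t s ε w) (h₂ : shear t s ε w < shear t s ε e.2) :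
    lineHeight (shear t s ε) s e (shear t s ε w) ≠ s w := by
  intro heq
  obtain ⟨l, hl₀, hl₁, hx, hs⟩ := exists_convexCombination_of_lt_of_lt _ s e h₁ h₂
  have houtside := h.edge_outside_disk he (u := w) (by rintro rfl; exact lt_irrefl _ h₁)
    (by rintro rfl; exact lt_irrefl _ h₂) hl₀ hl₁
  have ht : (1 - l) * t e.1 + l * t e.2 = t w := by
    simp only [shear] at hx
    linear_combination -hx + ε * (hs - heq)
  rw [ht, ← hs, heq] at houtside
  nlinarith [h.radius_pos w]

lemma share_endpoint_of_lineHeight_eq (h : IsHalfPlanePacking H t s r) {e f : U × U}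
    (he : H.Adj e.1 e.2) (hf : H.Adj f.1 f.2) {ξ : ℝ} (he₁ : shear t s ε e.1 < ξ)
    (he₂ : ξ < shear t s ε e.2) (hf₁ : shear t s ε f.1 < ξ) (hf₂ : ξ < shear t s ε f.2)
    (heq : lineHeight (shear t s ε) s e ξ = lineHeight (shear t s ε) s f ξ) :
    e.1 = f.1 ∨ e.2 = f.2 := by
  obtain ⟨l, hl₀, hl₁, hxe, hse⟩ := exists_convexCombination_of_lt_of_lt _ s e he₁ he₂
  obtain ⟨m, hm₀, hm₁, hxf, hsf⟩ := exists_convexCombination_of_lt_of_lt _ s f hf₁ hf₂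
  have hs : (1 - l) * s e.1 + l * s e.2 = (1 - m) * s f.1 + m * s f.2 := by
    rw [← hse, ← hsf, heq]
  have ht : (1 - l) * t e.1 + l * t e.2 = (1 - m) * t f.1 + m * t f.2 := by
    simp only [shear] at hxe hxf
    linear_combination hxf - hxe - ε * hs
  rcases h.share_endpoint_of_meet he hf hl₀ hl₁ hm₀ hm₁ ht hs with heq | heq | heq | heq
  · exact Or.inl heq
  · exact absurd (he₁.trans hf₂) (by rw [heq]; exact lt_irrefl _)
  · exact absurd (hf₁.trans he₂) (by rw [heq]; exact lt_irrefl _)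
  · exact Or.inr heq

end IsHalfPlanePacking

section OrientedEdges

variable [Fintype U] {x : U → ℝ}

open Classical in
/-- The edges of `H`, each listed once with the endpoint of smaller abscissa first. -/
noncomputable def orientedEdges (H : SimpleGraph U) (x : U → ℝ) : Finset (U × U) :=
  {e | H.Adj e.1 e.2 ∧ x e.1 < x e.2}

lemma mem_orientedEdges {e : U × U} :
    e ∈ orientedEdges H x ↔ H.Adj e.1 e.2 ∧ x e.1 < x e.2 := by
  simp [orientedEdges]

lemma card_orientedEdges (hx : Function.Injective x) :
    (orientedEdges H x).card = H.edgeSet.ncard := by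
  have hinj : Set.InjOn (fun e : U × U ↦ s(e.1, e.2)) (orientedEdges H x : Set (U × U)) := by
    rintro ⟨a, b⟩ hab ⟨c, d⟩ hcd heq
    rw [Finset.mem_coe, mem_orientedEdges] at hab hcd
    rcases Sym2.eq_iff.1 heq with ⟨rfl, rfl⟩ | ⟨rfl, rfl⟩
    · rfl
    · exact absurd hab.2 hcd.2.not_gt
  rw [← Set.ncard_coe_finset, ← hinj.ncard_image]
  congr 1
  ext e
  induction e with | _ a b
  simp only [Set.mem_image, Finset.mem_coe, mem_orientedEdges, SimpleGraph.mem_edgeSet]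
  constructor
  · rintro ⟨⟨c, d⟩, ⟨hcd, -⟩, heq⟩
    rw [← SimpleGraph.mem_edgeSet, ← heq]
    exact hcd
  · intro hab
    rcases (hx.ne hab.ne).lt_or_gt with hlt | hlt
    · exact ⟨(a, b), ⟨hab, hlt⟩, rfl⟩
    · exact ⟨(b, a), ⟨hab.symm, hlt⟩, Sym2.eq_swap⟩

end OrientedEdges

/-- The disks of a half plane packing that touch the real axis. -/
noncomputable def bottomDisks [Fintype U] (s r : U → ℝ) : Finset U :=
  open Classical in {u | s u = r u}

lemma mem_bottomDisks [Fintype U] : u ∈ bottomDisks s r ↔ s u = r u := by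
  simp [bottomDisks]

namespace IsHalfPlanePacking

variable [Fintype U]

lemma isNoncrossing_shear (h : IsHalfPlanePacking H t s r)
    (hx : Function.Injective (shear t s ε)) :
    IsNoncrossing (shear t s ε) s (orientedEdges H (shear t s ε)) where
  lt e he := (mem_orientedEdges.1 he).2
  ne_vertex e he w := h.lineHeight_shear_ne (mem_orientedEdges.1 he).1
  eq_of_meet := by
    rintro ⟨a, b⟩ he ⟨c, d⟩ hf ξ he₁ he₂ hf₁ hf₂ heq
    obtain ⟨hab, hltab⟩ := mem_orientedEdges.1 he
    obtain ⟨hcd, hltcd⟩ := mem_orientedEdges.1 hf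
    rcases h.share_endpoint_of_lineHeight_eq hab hcd he₁ he₂ hf₁ hf₂ heq with
      hfst | hsnd
    · obtain rfl : a = c := hfst
      have hslope : chordSlope (shear t s ε) s a b = chordSlope (shear t s ε) s a d :=
        mul_right_cancel₀ (sub_ne_zero.2 he₁.ne') (add_left_cancel heq)
      have hline (η : ℝ) :
          lineHeight (shear t s ε) s (a, b) η = lineHeight (shear t s ε) s (a, d) η := by
        simp only [lineHeight, hslope]
      rcases lt_trichotomy (shear t s ε b) (shear t s ε d) with hlt | hbd | hlt
      · exact absurd (by rw [← hline]; exact lineHeight_right s hltab)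
          (h.lineHeight_shear_ne hcd hltab hlt)
      · rw [hx hbd]
      · exact absurd (by rw [hline]; exact lineHeight_right s hltcd)
          (h.lineHeight_shear_ne hab hltcd hlt)
    · obtain rfl : b = d := hsnd
      rw [lineHeight_eq_right hltab, lineHeight_eq_right hltcd] at heq
      have hslope : chordSlope (shear t s ε) s a b = chordSlope (shear t s ε) s c b :=
        mul_right_cancel₀ (sub_ne_zero.2 he₂.ne) (add_left_cancel heq)
      have hline (η : ℝ) :
          lineHeight (shear t s ε) s (a, b) η = lineHeight (shear t s ε) s (c, b) η := by
        simp only [lineHeight_eq_right hltab, lineHeight_eq_right hltcd, hslope]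
      rcases lt_trichotomy (shear t s ε a) (shear t s ε c) with hlt | hac | hlt
      · exact absurd (by rw [hline]; exact lineHeight_left _ s _)
          (h.lineHeight_shear_ne hab hlt hltcd)
      · rw [hx hac]
      · exact absurd (by rw [← hline]; exact lineHeight_left _ s _)
          (h.lineHeight_shear_ne hcd hlt hltab)

lemma bottomDisks_subset_lowerVertices (h : IsHalfPlanePacking H t s r)
    (hε : IsSmallShear t s r ε) :
    bottomDisks s r ⊆ lowerVertices (shear t s ε) s (orientedEdges H (shear t s ε)) := by
  intro u hu
  rw [mem_bottomDisks] at hu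
  refine mem_lowerVertices.2 fun e he h₁ h₂ ↦ ?_
  obtain ⟨l, hl₀, hl₁, hx, hs⟩ := exists_convexCombination_of_lt_of_lt _ s e h₁ h₂
  have houtside := h.edge_outside_disk (mem_orientedEdges.1 he).1 (u := u)
    (by rintro rfl; exact lt_irrefl _ h₁) (by rintro rfl; exact lt_irrefl _ h₂) hl₀ hl₁
  rw [← hs] at houtside
  set m := lineHeight (shear t s ε) s e (shear t s ε u)
  have hεm : ε ^ 2 * r u ≤ m := by
    rw [hs]
    nlinarith [hε.sq_mul_le u e.1, hε.sq_mul_le u e.2]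
  have ht : (1 - l) * t e.1 + l * t e.2 - t u = ε * (s u - m) := by
    rw [hs]
    simp only [shear] at hx
    linear_combination -hx
  rw [ht, hu] at houtside
  by_contra! hlt
  rw [hu] at hlt
  have hm : 0 ≤ m := hεm.trans' (by have := h.radius_pos u; positivity)
  have : ε ^ 2 * (r u - m) ≤ m := by nlinarith [sq_nonneg ε]
  nlinarith

end IsHalfPlanePacking

end HalfPlane

section SaturatedPacking

variable {U : Type*} {H : SimpleGraph U} {t s r : U → ℝ} {a b u : U}

lemma lineHeight_lt_iff {x y : U → ℝ} (hab : x a < x b) (w : U) :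
    lineHeight x y (a, b) (x w) < y w ↔
      (y b - y a) * (x w - x a) < (y w - y a) * (x b - x a) := by
  have hpos : 0 < x b - x a := sub_pos.2 hab
  rw [lineHeight, chordSlope, ← lt_sub_iff_add_lt', div_mul_eq_mul_div, div_lt_iff₀ hpos]

lemma lt_lineHeight_iff {x y : U → ℝ} (hab : x a < x b) (w : U) :
    y w < lineHeight x y (a, b) (x w) ↔
      (y w - y a) * (x b - x a) < (y b - y a) * (x w - x a) := by
  have hpos : 0 < x b - x a := sub_pos.2 hab
  rw [lineHeight, chordSlope, ← sub_lt_iff_lt_add', div_mul_eq_mul_div, lt_div_iff₀ hpos]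

/-- A half plane packing with at least three disks and, counting the contacts with the real axis,
as many contacts as noncrossing drawings permit. -/
structure IsSaturatedPacking [Fintype U] (H : SimpleGraph U) (t s r : U → ℝ) : Prop extends
    IsHalfPlanePacking H t s r where
  two_lt_card : 2 < Fintype.card U
  card_eq : H.edgeSet.ncard + (bottomDisks s r).card + 3 = 3 * Fintype.card U

namespace IsHalfPlanePacking

lemma four_mul_le_sq (h : IsHalfPlanePacking H t s r) (ha : s a = r a) (hb : s b = r b)
    (hab : a ≠ b) : 4 * r a * r b ≤ (t b - t a) ^ 2 := by
  have hsep := h.sep a b hab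
  rw [ha, hb] at hsep
  linarith

lemma sq_eq_four_mul (h : IsHalfPlanePacking H t s r) (ha : s a = r a) (hb : s b = r b)
    (hab : H.Adj a b) : (t b - t a) ^ 2 = 4 * r a * r b := by
  have hdist := h.dist_sq_eq hab
  rw [ha, hb] at hdist
  linarith

lemma injOn_bottomDisks [Fintype U] (h : IsHalfPlanePacking H t s r) :
    Set.InjOn t (bottomDisks s r) := by
  intro a ha b hb hab
  by_contra hne
  have hle := h.four_mul_le_sq (mem_bottomDisks.1 ha) (mem_bottomDisks.1 hb) hne
  rw [hab] at hle
  nlinarith [h.radius_pos a, h.radius_pos b]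

lemma not_adj_and_adj_of_lt (h : IsHalfPlanePacking H t s r) {a b c d : U} (ha : s a = r a)
    (hb : s b = r b) (hc : s c = r c) (hd : s d = r d) (hab : t a < t b) (hbc : t b < t c)
    (hcd : t c < t d) : ¬ (H.Adj a c ∧ H.Adj b d) := by
  rintro ⟨hac, hbd⟩
  have hne {u w : U} (hlt : t u < t w) : u ≠ w := by
    rintro rfl
    exact lt_irrefl _ hlt
  have hrc := h.radius_pos c
  have hrd := h.radius_pos d
  have hle : ((t c - t a) * (t d - t b)) ^ 2 ≤ ((t b - t a) * (t d - t c)) ^ 2 :=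
    calc ((t c - t a) * (t d - t b)) ^ 2 = (4 * r a * r b) * (4 * r c * r d) := by
          rw [mul_pow, h.sq_eq_four_mul ha hc hac, h.sq_eq_four_mul hb hd hbd]
          ring
      _ ≤ (t b - t a) ^ 2 * (t d - t c) ^ 2 :=
          mul_le_mul (h.four_mul_le_sq ha hb (hne hab)) (h.four_mul_le_sq hc hd (hne hcd))
            (by positivity) (sq_nonneg _)
      _ = _ := (mul_pow _ _ 2).symm
  have hpos : 0 < (t b - t a) * (t d - t c) := mul_pos (by linarith) (by linarith)
  have hptolemy : (t c - t a) * (t d - t b) =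
      (t b - t a) * (t d - t c) + (t c - t b) * (t d - t a) := by ring
  have hlt : (t b - t a) * (t d - t c) < (t c - t a) * (t d - t b) := by
    rw [hptolemy]
    exact lt_add_of_pos_right _ (mul_pos (by linarith) (by linarith))
  exact hle.not_gt (pow_lt_pow_left₀ hlt hpos.le two_ne_zero)

end IsHalfPlanePacking

namespace IsSaturatedPacking

variable [Fintype U]

lemma exists_isSaturated_shear (h : IsSaturatedPacking H t s r) : ∃ ε, IsSmallShear t s r ε ∧
    IsSaturated (shear t s ε) s (orientedEdges H (shear t s ε)) ∧
    lowerVertices (shear t s ε) s (orientedEdges H (shear t s ε)) = bottomDisks s r ∧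
    (upperVertices (shear t s ε) s (orientedEdges H (shear t s ε))).card = 2 := by
  have : Nontrivial U := Fintype.one_lt_card_iff_nontrivial.1 (by have := h.two_lt_card; omega)
  obtain ⟨ε, hε⟩ := h.exists_isSmallShear
  have hinj := h.shear_injective hε
  exact ⟨ε, hε, (h.isNoncrossing_shear hinj).isSaturated_of_subset_lowerVertices hinj
    (h.bottomDisks_subset_lowerVertices hε) (by rw [card_orientedEdges hinj, h.card_eq])⟩

lemma two_lt_card_bottomDisks (h : IsSaturatedPacking H t s r) : 2 < (bottomDisks s r).card := by
  obtain ⟨ε, -, hsat, hlower, hupper⟩ := h.exists_isSaturated_shear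
  exact hlower ▸ hsat.two_lt_card_lowerVertices hupper h.two_lt_card

lemma isConsecutive_shear (h : IsSaturatedPacking H t s r) {ε : ℝ} (hε : IsSmallShear t s r ε)
    (hab : IsConsecutive t (bottomDisks s r) a b) :
    IsConsecutive (shear t s ε) (bottomDisks s r) a b where
  left_mem := hab.left_mem
  right_mem := hab.right_mem
  lt := hε.lt_of_lt _ _ hab.lt
  notMem c hac hcb hc := by
    refine hab.notMem c ((hε.le_of_le hac.le).lt_of_ne fun heq ↦ ?_)
      ((hε.le_of_le hcb.le).lt_of_ne fun heq ↦ ?_) hc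
    · exact hac.ne (congrArg _ (h.injOn_bottomDisks hab.left_mem hc heq))
    · exact hcb.ne (congrArg _ (h.injOn_bottomDisks hc hab.right_mem heq))

lemma adj_of_isConsecutive (h : IsSaturatedPacking H t s r)
    (hab : IsConsecutive t (bottomDisks s r) a b) : H.Adj a b := by
  obtain ⟨ε, hε, hsat, hlower, -⟩ := h.exists_isSaturated_shear
  have hcons := h.isConsecutive_shear hε hab
  rw [← hlower] at hcons
  exact (mem_orientedEdges.1 (hsat.mem_of_isConsecutive hcons)).1

lemma above_edge_of_isConsecutive (h : IsSaturatedPacking H t s r)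
    (hab : IsConsecutive t (bottomDisks s r) a b) (hau : t a < t u) (hub : t u < t b) :
    (s b - s a) * (t u - t a) < (s u - s a) * (t b - t a) := by
  obtain ⟨ε, hε, hsat, hlower, -⟩ := h.exists_isSaturated_shear
  have hcons := h.isConsecutive_shear hε hab
  rw [← hlower] at hcons
  have hlt := (lineHeight_lt_iff hcons.lt u).1 (hsat.lineHeight_lt_of_isConsecutive
    hsat.injective hcons (hε.lt_of_lt _ _ hau) (hε.lt_of_lt _ _ hub))
  simp only [shear] at hlt
  linarith

lemma exists_outer_edge (h : IsSaturatedPacking H t s r) : ∃ a ∈ bottomDisks s r,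
    ∃ b ∈ bottomDisks s r, H.Adj a b ∧ (∀ u, t a ≤ t u ∧ t u ≤ t b) ∧
      ∀ u, u ≠ a → u ≠ b → (s u - s a) * (t b - t a) < (s b - s a) * (t u - t a) := by
  have : Nontrivial U := Fintype.one_lt_card_iff_nontrivial.1 (by have := h.two_lt_card; omega)
  obtain ⟨ε, hε, hsat, hlower, hupper⟩ := h.exists_isSaturated_shear
  obtain ⟨a, b, hab, ha, hb⟩ := exists_first_last hsat.injective
  refine ⟨a, hlower ▸ first_mem_lowerVertices ha, b, hlower ▸ last_mem_lowerVertices hb,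
    (mem_orientedEdges.1 (hsat.mem_of_first_last hupper hab ha hb)).1,
    fun u ↦ ⟨hε.le_of_le (ha u), hε.le_of_le (hb u)⟩, fun u hua hub ↦ ?_⟩
  have hau := (ha u).lt_of_ne (hsat.injective.ne hua.symm)
  have hub' := (hb u).lt_of_ne (hsat.injective.ne hub)
  have hlt := (lt_lineHeight_iff hab u).1
    (hsat.lt_lineHeight_of_first_last hupper hab ha hb hau hub')
  simp only [shear] at hlt
  linarith

end IsSaturatedPacking

end SaturatedPacking

/-! ### Angles seen from the point `i` -/

section PointI

variable {U : Type*} {H : SimpleGraph U} {t s r : U → ℝ} {a b u : U}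

/-- The disks whose boundary circle passes through `i = (0, 1)`. -/
def disksThroughI (t s r : U → ℝ) : Set U := {u | t u ^ 2 + (s u - 1) ^ 2 = r u ^ 2}

lemma exists_mem_ne_ne_of_nontrivial {S : Set U} (hS : S.Nontrivial) (hab : ¬ (a ∈ S ∧ b ∈ S)) :
    ∃ u ∈ S, u ≠ a ∧ u ≠ b := by
  by_cases ha : a ∈ S
  · obtain ⟨u, hu, hua⟩ := hS.exists_ne a
    exact ⟨u, hu, hua, fun hub ↦ hab ⟨ha, hub ▸ hu⟩⟩
  · obtain ⟨u, hu, hub⟩ := hS.exists_ne b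
    exact ⟨u, hu, fun hua ↦ ha (hua ▸ hu), hub⟩

lemma pos_of_forall_ne_zero {f : ℝ → ℝ} (hf : Continuous f) (h₀ : 0 < f 0)
    (hne : ∀ l, 0 < l → l ≤ 1 → f l ≠ 0) : 0 < f 1 := by
  by_contra! h₁
  obtain ⟨l, ⟨hl₀, hl₁⟩, hl⟩ := intermediate_value_Icc' zero_le_one hf.continuousOn ⟨h₁, h₀.le⟩
  refine hne l (hl₀.lt_of_ne ?_) hl₁ hl
  rintro rfl
  exact h₀.ne' hl

/-- A continuous function that is negative at the points strictly between the verticals through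
the centers of `a` and `b` and strictly below the line joining these centers, and positive outside
the closure of that region. -/
noncomputable def trapezoidGauge (t s : U → ℝ) (a b : U) (ξ η : ℝ) : ℝ :=
  max (max (t a - ξ) (ξ - t b)) ((η - s a) * (t b - t a) - (s b - s a) * (ξ - t a))

lemma trapezoidGauge_i_pos (ha : s a = r a) (hb : s b = r b) (hlt : t a < t b)
    (hout : ∀ u, r u ^ 2 ≤ t u ^ 2 + (s u - 1) ^ 2) (hpos : 0 < 1 + t a * t b) :
    0 < trapezoidGauge t s a b 0 1 := by
  by_contra! hle
  simp only [trapezoidGauge, max_le_iff, ha, hb] at hle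
  obtain ⟨⟨hta, htb⟩, hbelow⟩ := hle
  have hra : 2 * r a ≤ 1 + t a ^ 2 := by linarith [ha ▸ hout a]
  have hrb : 2 * r b ≤ 1 + t b ^ 2 := by linarith [hb ▸ hout b]
  have hra' := mul_le_mul_of_nonneg_right hra (by linarith : 0 ≤ t b)
  have hrb' := mul_le_mul_of_nonneg_right hrb (by linarith : 0 ≤ -t a)
  nlinarith [mul_pos (sub_pos.2 hlt) hpos]

namespace IsHalfPlanePacking

lemma not_below_center (h : IsHalfPlanePacking H t s r) (ha : s a = r a) (hua : u ≠ a)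
    (hu : u ∈ disksThroughI t s r) {l : ℝ} (hl₀ : 0 < l) (hl₁ : l ≤ 1) (ht : l * t u = t a) :
    s a < (1 - l) + l * s u := by
  by_contra! hle
  rw [disksThroughI, Set.mem_ofPred_eq] at hu
  have hru := h.radius_pos u
  have hη : 0 < (1 - l) + l * s u := by nlinarith [mul_pos hl₀ (h.height_pos u)]
  set η := (1 - l) + l * s u with hη_def
  have hdist : (t a - t u) ^ 2 + (η - s u) ^ 2 = ((1 - l) * r u) ^ 2 := by
    rw [hη_def, ← ht]
    linear_combination (1 - l) ^ 2 * hu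
  have hρ : 0 ≤ (1 - l) * r u := mul_nonneg (by linarith) hru.le
  have hηu : η - s u ≤ (1 - l) * r u :=
    (abs_le_of_sq_le_sq' (by nlinarith [sq_nonneg (t a - t u)]) hρ).2
  have hlt : (t a - t u) ^ 2 + (s a - s u) ^ 2 < (r a + r u) ^ 2 :=
    calc (t a - t u) ^ 2 + (s a - s u) ^ 2 ≤ ((1 - l) * r u + (s a - η)) ^ 2 := by
          nlinarith [mul_le_mul_of_nonneg_right hηu (sub_nonneg.2 hle)]
      _ < (r a + r u) ^ 2 :=
          pow_lt_pow_left₀ (by nlinarith [mul_pos hl₀ hru])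
            (add_nonneg hρ (sub_nonneg.2 hle)) two_ne_zero
  exact hlt.not_ge (h.sep a u hua.symm)

lemma segment_not_on_edge (h : IsHalfPlanePacking H t s r) (hab : H.Adj a b) (hlt : t a < t b)
    (hua : u ≠ a) (hub : u ≠ b) (hu : u ∈ disksThroughI t s r) {l : ℝ} (hl₀ : 0 ≤ l)
    (hl₁ : l ≤ 1) (hleft : t a ≤ l * t u) (hright : l * t u ≤ t b) :
    ((1 - l) + l * s u - s a) * (t b - t a) ≠ (s b - s a) * (l * t u - t a) := by
  intro heq
  rw [disksThroughI, Set.mem_ofPred_eq] at hu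
  have hpos : 0 < t b - t a := sub_pos.2 hlt
  obtain ⟨m, hm⟩ : ∃ m, m * (t b - t a) = l * t u - t a :=
    ⟨(l * t u - t a) / (t b - t a), div_mul_cancel₀ _ hpos.ne'⟩
  have hm₀ : 0 ≤ m := by nlinarith
  have hm₁ : m ≤ 1 := by nlinarith
  have hη : (1 - m) * s a + m * s b = (1 - l) + l * s u := by
    apply mul_right_cancel₀ hpos.ne'
    linear_combination (s b - s a) * hm - heq
  have houtside := h.edge_outside_disk hab hua hub hm₀ hm₁
  have hinside : (l * t u - t u) ^ 2 + ((1 - l) + l * s u - s u) ^ 2 = ((1 - l) * r u) ^ 2 := by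
    linear_combination (1 - l) ^ 2 * hu
  rw [show (1 - m) * t a + m * t b = l * t u by linarith, hη, hinside] at houtside
  have hru := h.radius_pos u
  exact houtside.not_ge (pow_le_pow_left₀ (mul_nonneg (by linarith) hru.le) (by nlinarith) 2)

lemma trapezoidGauge_segment_ne_zero (h : IsHalfPlanePacking H t s r) (ha : s a = r a)
    (hb : s b = r b) (hab : H.Adj a b) (hlt : t a < t b) (hua : u ≠ a) (hub : u ≠ b)
    (hu : u ∈ disksThroughI t s r) {l : ℝ} (hl₀ : 0 < l) (hl₁ : l ≤ 1) :
    trapezoidGauge t s a b (l * t u) ((1 - l) + l * s u) ≠ 0 := by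
  intro hzero
  have hpos : 0 < t b - t a := sub_pos.2 hlt
  have hle := hzero.le
  simp only [trapezoidGauge, max_le_iff, sub_nonpos] at hle
  obtain ⟨⟨hleft, hright⟩, hbelow⟩ := hle
  have hge := hzero.ge
  simp only [trapezoidGauge, le_max_iff, sub_nonneg] at hge
  rcases hge with (hge | hge) | hge
  · have ht := hge.antisymm hleft
    refine (h.not_below_center ha hua hu hl₀ hl₁ ht).not_ge ?_
    rw [ht] at hbelow
    nlinarith
  · have ht := hright.antisymm hge
    refine (h.not_below_center hb hub hu hl₀ hl₁ ht).not_ge ?_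
    rw [ht] at hbelow
    linarith [le_of_mul_le_mul_right hbelow hpos]
  · exact h.segment_not_on_edge hab hlt hua hub hu hl₀.le hl₁ hleft hright (hbelow.antisymm hge)

lemma trapezoidGauge_center_pos (h : IsHalfPlanePacking H t s r) (ha : s a = r a)
    (hb : s b = r b) (hab : H.Adj a b) (hlt : t a < t b) (hua : u ≠ a) (hub : u ≠ b)
    (hu : u ∈ disksThroughI t s r) (hi : 0 < trapezoidGauge t s a b 0 1) :
    0 < trapezoidGauge t s a b (t u) (s u) := by
  have := pos_of_forall_ne_zero
    (f := fun l ↦ trapezoidGauge t s a b (l * t u) ((1 - l) + l * s u))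
    (by unfold trapezoidGauge; fun_prop) (by simpa using hi)
    fun l ↦ h.trapezoidGauge_segment_ne_zero ha hb hab hlt hua hub hu
  simpa using this

lemma trapezoidGauge_center_neg (h : IsHalfPlanePacking H t s r) (ha : s a = r a)
    (hb : s b = r b) (hab : H.Adj a b) (hlt : t a < t b) (hua : u ≠ a) (hub : u ≠ b)
    (hu : u ∈ disksThroughI t s r) (hi : trapezoidGauge t s a b 0 1 < 0) :
    trapezoidGauge t s a b (t u) (s u) < 0 := by
  have := pos_of_forall_ne_zero
    (f := fun l ↦ -trapezoidGauge t s a b (l * t u) ((1 - l) + l * s u))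
    (by unfold trapezoidGauge; fun_prop) (by simpa using hi)
    fun l hl₀ hl₁ ↦ neg_ne_zero.2
      (h.trapezoidGauge_segment_ne_zero ha hb hab hlt hua hub hu hl₀ hl₁)
  simpa using this

lemma exists_mem_disksThroughI_ne (h : IsHalfPlanePacking H t s r) (ha : s a = r a)
    (hb : s b = r b) (hab : H.Adj a b) (hI : (disksThroughI t s r).Nontrivial)
    (hne : 1 + t a * t b ≠ 0) : ∃ u ∈ disksThroughI t s r, u ≠ a ∧ u ≠ b := by
  refine exists_mem_ne_ne_of_nontrivial hI fun ⟨haI, hbI⟩ ↦ hne ?_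
  rw [disksThroughI, Set.mem_ofPred_eq] at haI hbI
  have hsq : (1 + t a * t b) ^ 2 = 0 := by
    have hra : 2 * r a = 1 + t a ^ 2 := by rw [ha] at haI; linarith
    have hrb : 2 * r b = 1 + t b ^ 2 := by rw [hb] at hbI; linarith
    linear_combination -h.sq_eq_four_mul ha hb hab - 2 * r b * hra - (1 + t a ^ 2) * hrb
  exact pow_eq_zero_iff two_ne_zero |>.1 hsq

lemma trapezoidGauge_i_neg (h : IsHalfPlanePacking H t s r) (ha : s a = r a) (hb : s b = r b)
    (hab : H.Adj a b) (hlt : t a < t b) (hneg : 1 + t a * t b < 0) :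
    trapezoidGauge t s a b 0 1 < 0 := by
  have hta : t a < 0 := by nlinarith
  have htb : 0 < t b := by nlinarith
  have hra := h.radius_pos a
  have hrb := h.radius_pos b
  have hsq := h.sq_eq_four_mul ha hb hab
  have key : t b - t a < r a * t b - r b * t a := by
    apply lt_of_pow_lt_pow_left₀ 2 (by nlinarith)
    calc (t b - t a) ^ 2 < (t b - t a) ^ 2 * -(t a * t b) :=
          lt_mul_of_one_lt_right (pow_pos (sub_pos.2 hlt) 2) (by linarith)
      _ ≤ (r a * t b - r b * t a) ^ 2 := by
          rw [hsq]
          nlinarith [sq_nonneg (r a * t b + r b * t a)]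
  simp only [trapezoidGauge, max_lt_iff, ha, hb]
  exact ⟨⟨by linarith, by linarith⟩, by linarith⟩

end IsHalfPlanePacking

lemma one_add_mul_nonneg_of_isConsecutive [Fintype U] (h : IsSaturatedPacking H t s r)
    (hI : (disksThroughI t s r).Nontrivial) (hab : IsConsecutive t (bottomDisks s r) a b) :
    0 ≤ 1 + t a * t b := by
  by_contra! hneg
  have ha := mem_bottomDisks.1 hab.left_mem
  have hb := mem_bottomDisks.1 hab.right_mem
  have hadj := h.adj_of_isConsecutive hab
  obtain ⟨u, hu, hua, hub⟩ := h.exists_mem_disksThroughI_ne ha hb hadj hI hneg.ne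
  have hinside := h.trapezoidGauge_center_neg ha hb hadj hab.lt hua hub hu
    (h.trapezoidGauge_i_neg ha hb hadj hab.lt hneg)
  simp only [trapezoidGauge, max_lt_iff, sub_neg] at hinside
  obtain ⟨⟨hau, hub'⟩, hbelow⟩ := hinside
  exact lt_asymm hbelow (h.above_edge_of_isConsecutive hab hau hub')

lemma one_add_mul_nonpos_of_outer (h : IsHalfPlanePacking H t s r) (ha : s a = r a)
    (hb : s b = r b) (hab : H.Adj a b) (hlt : t a < t b)
    (hbetween : ∀ u, t a ≤ t u ∧ t u ≤ t b)
    (hbelow : ∀ u, u ≠ a → u ≠ b → (s u - s a) * (t b - t a) < (s b - s a) * (t u - t a))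
    (hout : ∀ u, r u ^ 2 ≤ t u ^ 2 + (s u - 1) ^ 2) (hI : (disksThroughI t s r).Nontrivial) :
    1 + t a * t b ≤ 0 := by
  by_contra! hpos
  obtain ⟨u, hu, hua, hub⟩ := h.exists_mem_disksThroughI_ne ha hb hab hI hpos.ne'
  have houtside := h.trapezoidGauge_center_pos ha hb hab hlt hua hub hu
    (trapezoidGauge_i_pos ha hb hlt hout hpos)
  simp only [trapezoidGauge, lt_max_iff, sub_pos] at houtside
  rcases houtside with (hlt' | hlt') | hlt'
  · exact hlt'.not_ge (hbetween u).1
  · exact hlt'.not_ge (hbetween u).2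
  · exact lt_asymm hlt' (hbelow u hua hub)

end PointI

section Angles

variable {p q ρ σ : ℝ}

lemma sin_arctan_sub_arctan (p q : ℝ) :
    sin (arctan q - arctan p) = (q - p) / (√(1 + p ^ 2) * √(1 + q ^ 2)) := by
  rw [sin_sub, sin_arctan, cos_arctan, sin_arctan, cos_arctan]
  field_simp

lemma cos_arctan_sub_arctan (p q : ℝ) :
    cos (arctan q - arctan p) = (1 + p * q) / (√(1 + p ^ 2) * √(1 + q ^ 2)) := by
  rw [cos_sub, sin_arctan, cos_arctan, sin_arctan, cos_arctan]
  field_simp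

lemma sqrt_eq_sin_arctan_sub_arctan (h : p ≤ q) (hsq : (q - p) ^ 2 = 4 * ρ * σ) :
    √(2 * ρ / (1 + p ^ 2) * (2 * σ / (1 + q ^ 2))) = sin (arctan q - arctan p) := by
  have hprod : 2 * ρ / (1 + p ^ 2) * (2 * σ / (1 + q ^ 2)) =
      (q - p) ^ 2 / ((1 + p ^ 2) * (1 + q ^ 2)) := by
    rw [hsq]
    field_simp
    ring
  rw [sin_arctan_sub_arctan, hprod, sqrt_div (by positivity), sqrt_sq (sub_nonneg.2 h),
    sqrt_mul (by positivity)]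

lemma arcsin_sqrt_eq_arctan_sub (h : p ≤ q) (hsq : (q - p) ^ 2 = 4 * ρ * σ)
    (hpq : 0 ≤ 1 + p * q) :
    arcsin √(2 * ρ / (1 + p ^ 2) * (2 * σ / (1 + q ^ 2))) = arctan q - arctan p := by
  have hmono := arctan_mono h
  have hπ := pi_pos
  rw [sqrt_eq_sin_arctan_sub_arctan h hsq]
  apply arcsin_sin (by linarith)
  by_contra! hgt
  have hcos := cos_neg_of_pi_div_two_lt_of_lt hgt
    (by linarith [arctan_lt_pi_div_two q, neg_pi_div_two_lt_arctan p])
  rw [cos_arctan_sub_arctan] at hcos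
  exact hcos.not_ge (by positivity)

lemma arcsin_sqrt_eq_pi_sub_arctan_sub (h : p ≤ q) (hsq : (q - p) ^ 2 = 4 * ρ * σ)
    (hpq : 1 + p * q ≤ 0) :
    arcsin √(2 * ρ / (1 + p ^ 2) * (2 * σ / (1 + q ^ 2))) = π - (arctan q - arctan p) := by
  have hmono := arctan_mono h
  rw [sqrt_eq_sin_arctan_sub_arctan h hsq, ← sin_pi_sub]
  apply arcsin_sin (by linarith [arctan_lt_pi_div_two q, neg_pi_div_two_lt_arctan p])
  by_contra! hgt
  have hcos : 0 < cos (arctan q - arctan p) :=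
    cos_pos_of_mem_Ioo ⟨by linarith [pi_pos], by linarith⟩
  rw [cos_arctan_sub_arctan] at hcos
  exact hcos.not_ge (div_nonpos_of_nonpos_of_nonneg hpq (by positivity))

end Angles

section Flower

variable {U : Type*} {H : SimpleGraph U} {t s r : U → ℝ}

/-- An enumeration of the disks touching the real axis from left to right. -/
structure IsBottomEnumeration (t s r : U → ℝ) {m : ℕ} (b : Fin (m + 1) → U) : Prop where
  strictMono : StrictMono (t ∘ b)
  range_eq : Set.range b = {u | s u = r u}

namespace IsBottomEnumeration

variable {m : ℕ} {b : Fin (m + 1) → U}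

lemma height_eq (hb : IsBottomEnumeration t s r b) (i : Fin (m + 1)) : s (b i) = r (b i) :=
  hb.range_eq.subset (Set.mem_range_self i)

variable [Fintype U]

lemma exists_eq (hb : IsBottomEnumeration t s r b) {u : U} (hu : u ∈ bottomDisks s r) :
    ∃ i, b i = u :=
  hb.range_eq.superset (mem_bottomDisks.1 hu)

lemma isConsecutive (hb : IsBottomEnumeration t s r b) (i : Fin m) :
    IsConsecutive t (bottomDisks s r) (b i.castSucc) (b i.succ) where
  left_mem := mem_bottomDisks.2 (hb.height_eq _)
  right_mem := mem_bottomDisks.2 (hb.height_eq _)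
  lt := hb.strictMono Fin.castSucc_lt_succ
  notMem c hac hcb hc := by
    obtain ⟨j, rfl⟩ := hb.exists_eq hc
    exact (Fin.le_castSucc_iff.2 (hb.strictMono.lt_iff_lt.1 hcb)).not_gt
      (hb.strictMono.lt_iff_lt.1 hac)

lemma eq_first (hb : IsBottomEnumeration t s r b) {u : U} (hu : u ∈ bottomDisks s r)
    (hle : ∀ w, t u ≤ t w) : b 0 = u := by
  obtain ⟨i, rfl⟩ := hb.exists_eq hu
  rw [le_antisymm (hb.strictMono.le_iff_le.1 (hle (b 0))) (Fin.zero_le i)]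

lemma eq_last (hb : IsBottomEnumeration t s r b) {u : U} (hu : u ∈ bottomDisks s r)
    (hle : ∀ w, t w ≤ t u) : b (Fin.last m) = u := by
  obtain ⟨i, rfl⟩ := hb.exists_eq hu
  rw [le_antisymm (Fin.le_last i) (hb.strictMono.le_iff_le.1 (hle (b (Fin.last m))))]

end IsBottomEnumeration

variable [Fintype U]

lemma IsHalfPlanePacking.exists_isBottomEnumeration (h : IsHalfPlanePacking H t s r) {m : ℕ}
    (hm : (bottomDisks s r).card = m + 1) :
    ∃ b : Fin (m + 1) → U, IsBottomEnumeration t s r b := by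
  classical
  have hcard : ((bottomDisks s r).image t).card = m + 1 := by
    rw [Finset.card_image_of_injOn h.injOn_bottomDisks, hm]
  let e := ((bottomDisks s r).image t).orderEmbOfFin hcard
  have hex (i : Fin (m + 1)) : ∃ u ∈ bottomDisks s r, t u = e i :=
    Finset.mem_image.1 (Finset.orderEmbOfFin_mem _ hcard i)
  choose b hb htb using hex
  refine ⟨b, fun i j hij ↦ ?_, Set.Subset.antisymm ?_ fun u hu ↦ ?_⟩
  · simpa only [Function.comp_apply, htb] using e.strictMono hij
  · rintro - ⟨i, rfl⟩
    exact mem_bottomDisks.1 (hb i)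
  · have hu := mem_bottomDisks.2 hu
    obtain ⟨i, hi⟩ : t u ∈ Set.range e := by
      rw [Finset.range_orderEmbOfFin]
      exact Finset.mem_coe.2 (Finset.mem_image_of_mem t hu)
    exact ⟨i, h.injOn_bottomDisks (hb i) hu (by rw [htb, hi])⟩

namespace IsSaturatedPacking

variable {m : ℕ} {b : Fin (m + 1) → U}

lemma adj_add_one (h : IsSaturatedPacking H t s r) (hb : IsBottomEnumeration t s r b)
    (i : Fin (m + 1)) : H.Adj (b i) (b (i + 1)) := by
  cases i using Fin.lastCases with
  | last =>
    obtain ⟨a, ha, c, hc, hac, hbetween, -⟩ := h.exists_outer_edge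
    rw [Fin.last_add_one, hb.eq_first ha fun u ↦ (hbetween u).1,
      hb.eq_last hc fun u ↦ (hbetween u).2]
    exact hac.symm
  | cast i =>
    rw [Fin.coeSucc_eq_succ]
    exact h.adj_of_isConsecutive (hb.isConsecutive i)

lemma one_add_mul_last_nonpos (h : IsSaturatedPacking H t s r) (hb : IsBottomEnumeration t s r b)
    (hout : ∀ u, r u ^ 2 ≤ t u ^ 2 + (s u - 1) ^ 2) (hI : (disksThroughI t s r).Nontrivial) :
    1 + t (b 0) * t (b (Fin.last m)) ≤ 0 := by
  obtain ⟨a, ha, c, hc, hac, hbetween, hbelow⟩ := h.exists_outer_edge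
  rw [hb.eq_first ha fun u ↦ (hbetween u).1, hb.eq_last hc fun u ↦ (hbetween u).2]
  have hlt : t a < t c := (hbetween c).1.lt_of_ne fun heq ↦
    hac.ne (h.injOn_bottomDisks ha hc heq)
  exact one_add_mul_nonpos_of_outer h.toIsHalfPlanePacking (mem_bottomDisks.1 ha)
    (mem_bottomDisks.1 hc) hac hlt hbetween hbelow hout hI

lemma sum_arcsin_eq_pi (h : IsSaturatedPacking H t s r) (hb : IsBottomEnumeration t s r b)
    (hout : ∀ u, r u ^ 2 ≤ t u ^ 2 + (s u - 1) ^ 2) (hI : (disksThroughI t s r).Nontrivial) :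
    ∑ i, arcsin √(2 * r (b i) / (1 + t (b i) ^ 2) *
      (2 * r (b (i + 1)) / (1 + t (b (i + 1)) ^ 2))) = π := by
  have hinner (i : Fin m) : arcsin √(2 * r (b i.castSucc) / (1 + t (b i.castSucc) ^ 2) *
      (2 * r (b (i.castSucc + 1)) / (1 + t (b (i.castSucc + 1)) ^ 2))) =
      arctan (t (b i.succ)) - arctan (t (b i.castSucc)) := by
    have hcons := hb.isConsecutive i
    rw [Fin.coeSucc_eq_succ]
    exact arcsin_sqrt_eq_arctan_sub hcons.lt.le
      (h.sq_eq_four_mul (hb.height_eq _) (hb.height_eq _) (h.adj_of_isConsecutive hcons))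
      (one_add_mul_nonneg_of_isConsecutive h hI hcons)
  have houter : arcsin √(2 * r (b (Fin.last m)) / (1 + t (b (Fin.last m)) ^ 2) *
      (2 * r (b (Fin.last m + 1)) / (1 + t (b (Fin.last m + 1)) ^ 2))) =
      π - (arctan (t (b (Fin.last m))) - arctan (t (b 0))) := by
    have hadj := h.adj_add_one hb (Fin.last m)
    rw [Fin.last_add_one] at hadj ⊢
    rw [mul_comm]
    exact arcsin_sqrt_eq_pi_sub_arctan_sub (hb.strictMono.monotone (Fin.zero_le _))
      (h.sq_eq_four_mul (hb.height_eq _) (hb.height_eq _) hadj.symm)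
      (h.one_add_mul_last_nonpos hb hout hI)
  rw [Fin.sum_univ_castSucc, houter, Finset.sum_congr rfl fun i _ ↦ hinner i,
    Finset.sum_sub_distrib]
  have hsucc := Fin.sum_univ_succ fun i ↦ arctan (t (b i))
  have hcast := Fin.sum_univ_castSucc fun i ↦ arctan (t (b i))
  linarith

lemma exists_flower (h : IsSaturatedPacking H t s r)
    (hout : ∀ u, r u ^ 2 ≤ t u ^ 2 + (s u - 1) ^ 2) (hI : (disksThroughI t s r).Nontrivial) :
    ∃ m, 2 ≤ m ∧ ∃ b : Fin (m + 1) → U, Function.Injective b ∧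
      Set.range b = {u | s u = r u} ∧ (∀ i, H.Adj (b i) (b (i + 1))) ∧
      (∀ i j k l, i < j → j < k → k < l → ¬ (H.Adj (b i) (b k) ∧ H.Adj (b j) (b l))) ∧
      ∑ i, arcsin √(2 * r (b i) / (1 + t (b i) ^ 2) *
        (2 * r (b (i + 1)) / (1 + t (b (i + 1)) ^ 2))) = π := by
  have hcard := h.two_lt_card_bottomDisks
  obtain ⟨m, hm⟩ : ∃ m, (bottomDisks s r).card = m + 1 := ⟨_, (Nat.sub_add_cancel (by omega)).symm⟩
  obtain ⟨b, hb⟩ := h.exists_isBottomEnumeration hm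
  exact ⟨m, by omega, b, hb.strictMono.injective.of_comp, hb.range_eq, h.adj_add_one hb,
    fun i j k l hij hjk hkl ↦ h.not_adj_and_adj_of_lt (hb.height_eq _) (hb.height_eq _)
      (hb.height_eq _) (hb.height_eq _) (hb.strictMono hij) (hb.strictMono hjk)
      (hb.strictMono hkl), h.sum_arcsin_eq_pi hb hout hI⟩

end IsSaturatedPacking

end Flower

/-! ### Outerplanar cycles -/

section Outerplanar

variable {V M : Type*} {G : SimpleGraph V} {m n : ℕ}

lemma add_one_mem_of_forall_ne {S : Set (Fin (m + 1))} {i : Fin (m + 1)}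
    (hS : ∀ k ≠ i, k + 1 ∈ S → k ∈ S) (hne : S.Nonempty) : i + 1 ∈ S := by
  suffices hback : ∀ d : Fin (m + 1), i + d + 1 ∈ S → i + 1 ∈ S by
    obtain ⟨j, hj⟩ := hne
    exact hback (j - 1 - i) (by rwa [add_sub_cancel, sub_add_cancel])
  intro d
  induction d using Fin.induction with
  | zero => rw [add_zero]; exact id
  | succ d ih =>
    intro hd
    by_cases hi : i + d.succ = i
    · rwa [hi] at hd
    · refine ih ?_
      have hmem := hS _ hi hd
      rwa [← Fin.coeSucc_eq_succ, ← add_assoc] at hmem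

lemma apply_add_two_mem_of_closed {c : Fin (m + 1) → V} (hc : Function.Injective c)
    (hadj : ∀ k, G.Adj (c k) (c (k + 1))) {i : Fin (m + 1)} {T : Set V} (hi : c (i + 1) ∉ T)
    (hT : ∀ u ∈ T, ∀ w, G.Adj u w → w ∈ T ∨ w = c i ∨ w = c (i + 1)) (hne : (c ⁻¹' T).Nonempty) :
    c (i + 1 + 1) ∈ T := by
  refine add_one_mem_of_forall_ne (S := c ⁻¹' T) (fun k hk hmem ↦ ?_) hne
  rcases hT _ hmem _ (hadj k).symm with hkT | hki | hki
  · exact hkT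
  · exact absurd (hc hki ▸ hmem) hi
  · exact absurd (hc hki) hk

/-- The vertices `b 0, …, b m` form a cycle of `G` in this cyclic order, and no two edges of `G`
between them cross when the vertices are placed on a circle in this order. -/
structure IsOuterplanarCycle (G : SimpleGraph V) (b : Fin (m + 1) → V) : Prop where
  two_le : 2 ≤ m
  injective : Function.Injective b
  adj_add_one : ∀ i, G.Adj (b i) (b (i + 1))
  not_adj_and_adj : ∀ i j k l, i < j → j < k → k < l → ¬ (G.Adj (b i) (b k) ∧ G.Adj (b j) (b l))

lemma sym2_add_one_injective {b : Fin (m + 1) → V} (hm : 2 ≤ m) (hb : Function.Injective b) :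
    Function.Injective fun i ↦ s(b i, b (i + 1)) := by
  intro i j hij
  rcases Sym2.eq_iff.1 hij with ⟨heq, -⟩ | ⟨hi, hj⟩
  · exact hb heq
  · have htwo : j + (1 + 1) = j := by rw [← add_assoc, ← hb hi, hb hj]
    have hval := congrArg Fin.val (add_eq_left.1 htwo)
    rw [Fin.val_add, Fin.val_one', Nat.mod_eq_of_lt (by omega : 1 < m + 1),
      Nat.mod_eq_of_lt (by omega)] at hval
    exact absurd hval two_ne_zero

lemma exists_lt_or_gt_of_ne {p q : Fin (m + 1)} (h : p ≠ q + 1) : ∃ j, j < p ∨ q < j := by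
  by_cases hq : q = Fin.last m
  · exact ⟨0, .inl (Fin.pos_iff_ne_zero.2 fun hp ↦ h (by rw [hq, Fin.last_add_one, hp]))⟩
  · exact ⟨q + 1, .inr (Fin.lt_add_one_iff.2 (Fin.lt_last_iff_ne_last.2 hq))⟩

lemma exists_perm_of_range_eq {b : Fin (m + 1) → V} {b' : Fin (n + 1) → V}
    (hb : Function.Injective b) (hb' : Function.Injective b')
    (hrange : Set.range b = Set.range b') :
    ∃ e : Fin (n + 1) ≃ Fin (m + 1), ∀ i, b (e i) = b' i := by
  refine ⟨(Equiv.ofInjective b' hb').trans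
    ((Equiv.setCongr hrange.symm).trans (Equiv.ofInjective b hb).symm), fun i ↦ ?_⟩
  exact Equiv.apply_ofInjective_symm hb _

namespace IsOuterplanarCycle

variable {b : Fin (m + 1) → V}

lemma mem_Icc_of_adj (hb : IsOuterplanarCycle G b) {p q j k : Fin (m + 1)}
    (hpq : G.Adj (b p) (b q)) (hjk : G.Adj (b j) (b k)) (hj : j ∈ Set.Ioo p q) :
    k ∈ Set.Icc p q := by
  refine ⟨le_of_not_gt fun hk ↦ ?_, le_of_not_gt fun hk ↦ ?_⟩
  · exact hb.not_adj_and_adj k p j q hk hj.1 hj.2 ⟨hjk.symm, hpq⟩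
  · exact hb.not_adj_and_adj p j q k hj.1 hj.2 hk ⟨hpq, hjk⟩

/-- A Hamiltonian cycle cannot pass from one side of a chord to the other. -/
lemma eq_add_one_or_of_lt (hb : IsOuterplanarCycle G b) {σ : Equiv.Perm (Fin (m + 1))}
    (hσ : ∀ k, G.Adj (b (σ k)) (b (σ (k + 1)))) {i p q : Fin (m + 1)} (hpq : p < q)
    (hi : ({σ i, σ (i + 1)} : Set _) = {p, q}) : q = p + 1 ∨ p = q + 1 := by
  by_contra! hcon
  have hend (k) : k = σ i ∨ k = σ (i + 1) ↔ k = p ∨ k = q := Set.ext_iff.1 hi k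
  have hlast := (hend _).1 (.inr rfl)
  have hadj : G.Adj (b p) (b q) := by
    rcases (hend _).1 (.inl rfl) with h | h <;> rcases hlast with h' | h' <;> have := hσ i <;>
      simp_all [SimpleGraph.adj_comm]
  have hinner : σ (i + 1 + 1) ∈ Set.Ioo p q := by
    refine apply_add_two_mem_of_closed (G := G.comap b) σ.injective hσ ?_ (fun j hj k hjk ↦ ?_)
      ⟨σ.symm (p + 1), ?_⟩
    · rcases hlast with h | h <;> simp [h]
    · rw [hend]
      have hk := hb.mem_Icc_of_adj hadj hjk hj
      rcases hk.1.eq_or_lt with h | h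
      · exact .inr (.inl h.symm)
      · exact hk.2.eq_or_lt.symm.imp (⟨h, ·⟩) .inr
    · rw [Set.mem_preimage, Equiv.apply_symm_apply]
      exact ⟨Fin.lt_add_one_iff.2 (hpq.trans_le (Fin.le_last q)),
        (Fin.add_one_le_of_lt hpq).lt_of_ne hcon.1.symm⟩
  have houter : σ (i + 1 + 1) ∈ (Set.Icc p q)ᶜ := by
    obtain ⟨j, hj⟩ := exists_lt_or_gt_of_ne hcon.2
    refine apply_add_two_mem_of_closed (G := G.comap b) σ.injective hσ ?_ (fun j hj k hjk ↦ ?_)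
      ⟨σ.symm j, ?_⟩
    · rcases hlast with h | h <;> simp [h, hpq.le]
    · rw [hend]
      by_contra! hk
      have hkIcc := not_not.1 hk.1
      exact hj (hb.mem_Icc_of_adj hadj hjk.symm ⟨hkIcc.1.lt_of_ne hk.2.1.symm,
        hkIcc.2.lt_of_ne hk.2.2⟩)
    · simpa [imp_iff_not_or] using hj
  exact houter (Set.Ioo_subset_Icc_self hinner)

lemma eq_add_one_or (hb : IsOuterplanarCycle G b) {σ : Equiv.Perm (Fin (m + 1))}
    (hσ : ∀ k, G.Adj (b (σ k)) (b (σ (k + 1)))) (i : Fin (m + 1)) :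
    σ (i + 1) = σ i + 1 ∨ σ i = σ (i + 1) + 1 := by
  rcases lt_trichotomy (σ i) (σ (i + 1)) with hlt | heq | hgt
  · exact hb.eq_add_one_or_of_lt hσ hlt rfl
  · exact absurd (congrArg b heq) (hσ i).ne
  · exact (hb.eq_add_one_or_of_lt hσ hgt (Set.pair_comm _ _)).symm

lemma sum_eq_of_range_eq [AddCommMonoid M] (hb : IsOuterplanarCycle G b) {b' : Fin (n + 1) → V}
    (hb' : Function.Injective b') (hadj : ∀ i, G.Adj (b' i) (b' (i + 1)))
    (hrange : Set.range b = Set.range b') (g : Sym2 V → M) :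
    ∑ i, g s(b' i, b' (i + 1)) = ∑ i, g s(b i, b (i + 1)) := by
  obtain ⟨σ, hσ⟩ := exists_perm_of_range_eq hb.injective hb' hrange
  obtain rfl : n = m := by simpa using Fintype.card_congr σ
  have hedge (i) : ∃ j, s(b j, b (j + 1)) = s(b' i, b' (i + 1)) := by
    rw [← hσ i, ← hσ (i + 1)]
    rcases hb.eq_add_one_or (σ := σ) (fun k ↦ by rw [hσ, hσ]; exact hadj k) i with h | h
    · exact ⟨σ i, by rw [h]⟩
    · exact ⟨σ (i + 1), by rw [h, Sym2.eq_swap]⟩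
  choose τ hτ using hedge
  have hτinj : Function.Injective τ := fun i j hij ↦
    sym2_add_one_injective hb.two_le hb' (by simp only [← hτ, hij])
  rw [← (Finite.injective_iff_bijective.1 hτinj).sum_comp fun i ↦ g s(b i, b (i + 1))]
  exact Finset.sum_congr rfl fun i _ ↦ by rw [hτ]

end IsOuterplanarCycle

end Outerplanar

/-! ### The maximum principle -/

section MaximumPrinciple

variable {V : Type*} {G : SimpleGraph V} {I I' : V → V → ℝ} {m : ℕ} {x y v : V}

/-- The curvature, up to a factor depending only on `x` and `y`, of the disk `u` after the tangency
point of the disks `x` and `y` is sent to infinity, in terms of the Gram matrix `I` of a packing. -/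
def tangencyCurvature (I : V → V → ℝ) (x y u : V) : ℝ := -I u x - I u y

/-- For tangent disks `v` and `a`, the product of the weights of two consecutive petals `a`, `a'` is
the squared sine of half the angle at the center of `v` between them. -/
noncomputable def petalWeight (I : V → V → ℝ) (x y v a : V) : ℝ :=
  tangencyCurvature I x y v / (tangencyCurvature I x y v + tangencyCurvature I x y a)

/-- The cycle `b` enumerates the neighbours of `v`, and the half angles between consecutive petals,
measured with the tangency point of `x` and `y` at infinity, add up to `π`. -/
structure IsFlower (G : SimpleGraph V) (I : V → V → ℝ) (x y v : V) (b : Fin (m + 1) → V) : Prop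
    extends IsOuterplanarCycle G b where
  range_eq : Set.range b = G.neighborSet v
  sum_eq_pi : ∑ i, arcsin √(petalWeight I x y v (b i) * petalWeight I x y v (b (i + 1))) = π

/-- The matrix `I` has the entries of a matrix of Lorentz products of disks which have disjoint
interiors, and in which disks adjacent in `G` are tangent. -/
structure IsContactGram (G : SimpleGraph V) (I : V → V → ℝ) : Prop where
  self : ∀ v, I v v = 1
  le_neg_one : ∀ u v, u ≠ v → I u v ≤ -1
  eq_neg_one : ∀ u v, G.Adj u v → I u v = -1

/-- The properties of the matrix of Lorentz products of the disks of a packing with contact graph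
`G` on which rigidity rests. -/
structure IsPackingGram (G : SimpleGraph V) (I : V → V → ℝ) : Prop extends
    IsContactGram G I where
  exists_flower : ∀ x y, G.Adj x y → ∀ v, v ≠ x → v ≠ y →
    ∃ m, ∃ b : Fin (m + 1) → V, IsFlower G I x y v b

lemma eq_of_sum_arcsin_sqrt_mul_eq {w w' : Fin (m + 1) → ℝ} (hpos : ∀ i, 0 < w' i)
    (hle : ∀ i, w' i ≤ w i) (hone : ∀ i, w i ≤ 1)
    (hsum : ∑ i, arcsin √(w' i * w' (i + 1)) = ∑ i, arcsin √(w i * w (i + 1))) : w' = w := by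
  have hpos' (i) : 0 < w i := (hpos i).trans_le (hle i)
  have hmul (i) : w' i * w' (i + 1) ≤ w i * w (i + 1) :=
    mul_le_mul (hle _) (hle _) (hpos _).le (hpos' _).le
  have hmem {a : ℝ} (ha : a ≤ 1) : √a ∈ Set.Icc (-1 : ℝ) 1 :=
    ⟨by linarith [sqrt_nonneg a], sqrt_le_one.2 ha⟩
  have hterm := (Finset.sum_eq_sum_iff_of_le fun i _ ↦
    monotone_arcsin (sqrt_le_sqrt (hmul i))).1 hsum
  funext i
  have hprod : w i * w (i + 1) ≤ 1 := mul_le_one₀ (hone _) (hpos' _).le (hone _)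
  have heq := injOn_arcsin (hmem ((hmul i).trans hprod)) (hmem hprod)
    (hterm i (Finset.mem_univ i))
  rw [sqrt_inj (mul_pos (hpos _) (hpos _)).le (mul_pos (hpos' _) (hpos' _)).le] at heq
  exact (hle i).eq_of_not_lt fun hlt ↦
    (mul_lt_mul hlt (hle _) (hpos _) (hpos' _).le).ne heq

namespace IsContactGram

lemma tangencyCurvature_left (h : IsContactGram G I) (hxy : G.Adj x y) :
    tangencyCurvature I x y x = 0 := by
  rw [tangencyCurvature, h.self, h.eq_neg_one _ _ hxy, sub_self]

lemma tangencyCurvature_right (h : IsContactGram G I) (hxy : G.Adj x y) :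
    tangencyCurvature I x y y = 0 := by
  rw [tangencyCurvature, h.self, h.eq_neg_one _ _ hxy.symm, neg_neg, sub_self]

lemma tangencyCurvature_pos (h : IsContactGram G I) (hx : v ≠ x) (hy : v ≠ y) :
    0 < tangencyCurvature I x y v := by
  rw [tangencyCurvature]
  linarith [h.le_neg_one v x hx, h.le_neg_one v y hy]

lemma tangencyCurvature_nonneg (h : IsContactGram G I) (hxy : G.Adj x y) (u : V) :
    0 ≤ tangencyCurvature I x y u := by
  by_cases hx : u = x
  · rw [hx, h.tangencyCurvature_left hxy]
  by_cases hy : u = y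
  · rw [hy, h.tangencyCurvature_right hxy]
  exact (h.tangencyCurvature_pos hx hy).le

lemma tangencyCurvature_eq_two (h : IsContactGram G I) (hx : G.Adj v x) (hy : G.Adj v y) :
    tangencyCurvature I x y v = 2 := by
  rw [tangencyCurvature, h.eq_neg_one _ _ hx, h.eq_neg_one _ _ hy]
  norm_num

end IsContactGram

namespace IsPackingGram

lemma petalWeight_pos (h : IsPackingGram G I) (hxy : G.Adj x y) (hx : v ≠ x) (hy : v ≠ y) (a : V) :
    0 < petalWeight I x y v a :=
  div_pos (h.tangencyCurvature_pos hx hy)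
    (add_pos_of_pos_of_nonneg (h.tangencyCurvature_pos hx hy) (h.tangencyCurvature_nonneg hxy a))

lemma petalWeight_le_one (h : IsPackingGram G I) (hxy : G.Adj x y) (hx : v ≠ x) (hy : v ≠ y)
    (a : V) : petalWeight I x y v a ≤ 1 := by
  have hv := h.tangencyCurvature_pos hx hy
  have ha := h.tangencyCurvature_nonneg hxy a
  rw [petalWeight, div_le_one (by positivity)]
  exact le_add_of_nonneg_right ha

lemma petalWeight_le_petalWeight (h : IsPackingGram G I) (h' : IsPackingGram G I')
    (hxy : G.Adj x y) (hx : v ≠ x) (hy : v ≠ y) {L : ℝ} {a : V}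
    (hv : tangencyCurvature I x y v = L * tangencyCurvature I' x y v)
    (ha : tangencyCurvature I x y a ≤ L * tangencyCurvature I' x y a) :
    petalWeight I' x y v a ≤ petalWeight I x y v a := by
  have hpos := h.tangencyCurvature_pos hx hy
  have hpos' := h'.tangencyCurvature_pos hx hy
  have hnn := h.tangencyCurvature_nonneg hxy a
  have hnn' := h'.tangencyCurvature_nonneg hxy a
  rw [petalWeight, petalWeight, div_le_div_iff₀ (by positivity) (by positivity), hv]
  linarith [mul_le_mul_of_nonneg_left ha hpos'.le]

lemma tangencyCurvature_eq_of_petalWeight_eq (h : IsPackingGram G I) (h' : IsPackingGram G I')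
    (hxy : G.Adj x y) (hx : v ≠ x) (hy : v ≠ y) {L : ℝ} {a : V}
    (hv : tangencyCurvature I x y v = L * tangencyCurvature I' x y v)
    (hw : petalWeight I' x y v a = petalWeight I x y v a) :
    tangencyCurvature I x y a = L * tangencyCurvature I' x y a := by
  have hpos := h.tangencyCurvature_pos hx hy
  have hpos' := h'.tangencyCurvature_pos hx hy
  have hnn := h.tangencyCurvature_nonneg hxy a
  have hnn' := h'.tangencyCurvature_nonneg hxy a
  rw [petalWeight, petalWeight, div_eq_div_iff (by positivity) (by positivity), hv] at hw
  exact mul_left_cancel₀ hpos'.ne' (by linarith)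

/-- At a vertex maximising the curvature ratio all petal weights are compared in the same direction,
while the half angles have the same sum. -/
lemma tangencyCurvature_eq_of_adj (h : IsPackingGram G I) (h' : IsPackingGram G I')
    (hxy : G.Adj x y) (hx : v ≠ x) (hy : v ≠ y) {L : ℝ}
    (hv : tangencyCurvature I x y v = L * tangencyCurvature I' x y v)
    (hle : ∀ u, tangencyCurvature I x y u ≤ L * tangencyCurvature I' x y u)
    {a : V} (ha : G.Adj v a) : tangencyCurvature I x y a = L * tangencyCurvature I' x y a := by
  obtain ⟨m, b, hb⟩ := h.exists_flower x y hxy v hx hy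
  obtain ⟨m', b', hb'⟩ := h'.exists_flower x y hxy v hx hy
  obtain ⟨i, rfl⟩ : a ∈ Set.range b := hb.range_eq ▸ ha
  let halfAngle : Sym2 V → ℝ := Sym2.lift
    ⟨fun p q ↦ arcsin √(petalWeight I' x y v p * petalWeight I' x y v q),
      fun p q ↦ by simp only [mul_comm]⟩
  have hsum := hb.sum_eq_of_range_eq hb'.injective hb'.adj_add_one
    (hb.range_eq.trans hb'.range_eq.symm) halfAngle
  have hweights : (fun i ↦ petalWeight I' x y v (b i)) = fun i ↦ petalWeight I x y v (b i) :=
    eq_of_sum_arcsin_sqrt_mul_eq (fun i ↦ h'.petalWeight_pos hxy hx hy _)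
      (fun i ↦ h.petalWeight_le_petalWeight h' hxy hx hy hv (hle _))
      (fun i ↦ h.petalWeight_le_one hxy hx hy _)
      (hsum.symm.trans (hb'.sum_eq_pi.trans hb.sum_eq_pi.symm))
  exact h.tangencyCurvature_eq_of_petalWeight_eq h' hxy hx hy hv (congrFun hweights i)

lemma exists_max_ratio [Finite V] (h : IsPackingGram G I) (h' : IsPackingGram G I')
    (hxy : G.Adj x y) (hne : ∃ v, v ≠ x ∧ v ≠ y) :
    ∃ L v, v ≠ x ∧ v ≠ y ∧ tangencyCurvature I x y v = L * tangencyCurvature I' x y v ∧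
      ∀ u, tangencyCurvature I x y u ≤ L * tangencyCurvature I' x y u := by
  obtain ⟨v, ⟨hvx, hvy⟩, hmax⟩ := Set.exists_max_image {v | v ≠ x ∧ v ≠ y}
    (fun v ↦ tangencyCurvature I x y v / tangencyCurvature I' x y v) (Set.toFinite _) hne
  refine ⟨_, v, hvx, hvy, (div_mul_cancel₀ _ (h'.tangencyCurvature_pos hvx hvy).ne').symm,
    fun u ↦ ?_⟩
  by_cases hx : u = x
  · rw [hx, h.tangencyCurvature_left hxy, h'.tangencyCurvature_left hxy, mul_zero]
  by_cases hy : u = y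
  · rw [hy, h.tangencyCurvature_right hxy, h'.tangencyCurvature_right hxy, mul_zero]
  exact (div_le_iff₀ (h'.tangencyCurvature_pos hx hy)).1 (hmax u ⟨hx, hy⟩)

end IsPackingGram

lemma exists_mem_adj_adj_of_cycle {b : Fin (m + 1) → V} (hb : Function.Injective b)
    (hadj : ∀ i, G.Adj (b i) (b (i + 1))) {c d u : V} (hrange : Set.range b = G.neighborSet c)
    (hcd : G.Adj c d) {S : Set V} (hS : ∀ u ∈ S, ∀ a, G.Adj u a → a ≠ c → a ≠ d → a ∈ S)
    (hu : u ∈ S) (hcu : G.Adj c u) : ∃ z ∈ S, G.Adj z c ∧ G.Adj z d := by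
  obtain ⟨i, rfl⟩ : d ∈ Set.range b := hrange ▸ hcd
  obtain ⟨j, rfl⟩ : u ∈ Set.range b := hrange ▸ hcu
  have hc (k) : G.Adj c (b k) := by
    rw [← SimpleGraph.mem_neighborSet, ← hrange]
    exact Set.mem_range_self k
  have hmem : i + 1 ∈ b ⁻¹' S := add_one_mem_of_forall_ne
    (fun k hk hmem ↦ hS _ hmem _ (hadj k).symm (hc k).ne' (hb.ne hk)) ⟨j, hu⟩
  exact ⟨_, hmem, (hc _).symm, (hadj i).symm⟩

lemma exists_mem_adj_adj (hconn : G.Connected)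
    (hcycle : ∀ v, ∃ m, ∃ b : Fin (m + 1) → V, IsOuterplanarCycle G b ∧
      Set.range b = G.neighborSet v)
    (hxy : G.Adj x y) {S : Set V} (hS : ∀ u ∈ S, ∀ a, G.Adj u a → a ≠ x → a ≠ y → a ∈ S)
    (hx : x ∉ S) (hne : S.Nonempty) : ∃ z ∈ S, G.Adj z x ∧ G.Adj z y := by
  obtain ⟨v, hv⟩ := hne
  obtain ⟨w⟩ := hconn.preconnected v x
  obtain ⟨d, -, hu, ha⟩ := w.exists_boundary_dart S hv hx
  have hend : d.snd = x ∨ d.snd = y := by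
    by_contra! hne
    exact ha (hS _ hu _ d.adj hne.1 hne.2)
  obtain ⟨m, b, hb, hrange⟩ := hcycle d.snd
  rcases hend with rfl | rfl
  · exact exists_mem_adj_adj_of_cycle hb.injective hb.adj_add_one hrange hxy hS hu d.adj.symm
  · obtain ⟨z, hz, hzy, hzx⟩ := exists_mem_adj_adj_of_cycle hb.injective hb.adj_add_one hrange
      hxy.symm (fun u hu a hua hay hax ↦ hS u hu a hua hax hay) hu d.adj.symm
    exact ⟨z, hz, hzx, hzy⟩

namespace IsPackingGram

lemma exists_cycle (h : IsPackingGram G I)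
    (hedge : ∀ v, ∃ p q, G.Adj p q ∧ v ≠ p ∧ v ≠ q) (v : V) :
    ∃ m, ∃ b : Fin (m + 1) → V, IsOuterplanarCycle G b ∧ Set.range b = G.neighborSet v := by
  obtain ⟨p, q, hpq, hp, hq⟩ := hedge v
  obtain ⟨m, b, hb⟩ := h.exists_flower p q hpq v hp hq
  exact ⟨m, b, hb.toIsOuterplanarCycle, hb.range_eq⟩

lemma exists_triangle (h : IsPackingGram G I)
    (hedge : ∀ v, ∃ p q, G.Adj p q ∧ v ≠ p ∧ v ≠ q) (v : V) :
    ∃ p q, G.Adj v p ∧ G.Adj v q ∧ G.Adj p q := by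
  obtain ⟨m, b, hb, hrange⟩ := h.exists_cycle hedge v
  have hv (i) : b i ∈ G.neighborSet v := hrange ▸ Set.mem_range_self i
  exact ⟨b 0, b (0 + 1), hv _, hv _, hb.adj_add_one 0⟩

lemma tangencyCurvature_le [Finite V] (h : IsPackingGram G I) (h' : IsPackingGram G I')
    (hconn : G.Connected) (hedge : ∀ v, ∃ p q, G.Adj p q ∧ v ≠ p ∧ v ≠ q) (hxy : G.Adj x y)
    (u : V) : tangencyCurvature I x y u ≤ tangencyCurvature I' x y u := by
  have hne : ∃ v, v ≠ x ∧ v ≠ y := by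
    obtain ⟨p, q, hpq, hp, hq⟩ := hedge x
    by_cases hpy : p = y
    · exact ⟨q, hq.symm, hpy ▸ hpq.ne'⟩
    · exact ⟨p, hp.symm, hpy⟩
  obtain ⟨L, v, hvx, hvy, hv, hle⟩ := h.exists_max_ratio h' hxy hne
  obtain ⟨z, hz, hzx, hzy⟩ := exists_mem_adj_adj hconn (h.exists_cycle hedge) hxy
    (S := {u | u ≠ x ∧ u ≠ y ∧ tangencyCurvature I x y u = L * tangencyCurvature I' x y u})
    (fun u hu a hua hax hay ↦ ⟨hax, hay,
      h.tangencyCurvature_eq_of_adj h' hxy hu.1 hu.2.1 hu.2.2 hle hua⟩)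
    (fun hx ↦ hx.1 rfl) ⟨v, hvx, hvy, hv⟩
  have hL : L = 1 := by
    have hratio := hz.2.2
    rw [h.tangencyCurvature_eq_two hzx hzy, h'.tangencyCurvature_eq_two hzx hzy] at hratio
    linarith
  simpa only [hL, one_mul] using hle u

lemma eq [Finite V] (h : IsPackingGram G I) (h' : IsPackingGram G I') (hconn : G.Connected)
    (hedge : ∀ v, ∃ p q, G.Adj p q ∧ v ≠ p ∧ v ≠ q) : I = I' := by
  have hcurv {x y} (hxy : G.Adj x y) (u) : tangencyCurvature I x y u = tangencyCurvature I' x y u :=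
    le_antisymm (h.tangencyCurvature_le h' hconn hedge hxy u)
      (h'.tangencyCurvature_le h hconn hedge hxy u)
  funext u v
  obtain ⟨p, q, hvp, hvq, hpq⟩ := h.exists_triangle hedge v
  have h₁ := hcurv hvp u
  have h₂ := hcurv hvq u
  have h₃ := hcurv hpq u
  simp only [tangencyCurvature] at h₁ h₂ h₃
  linarith

end IsPackingGram

end MaximumPrinciple

/-! ### Disks as Hermitian forms -/

section Form

open scoped MatrixGroups ComplexConjugate

/-- The unimodular matrix with rows `(a, b)` and `(c, d)`. -/
def ofEntries (a b c d : ℂ) (h : a * d - b * c = 1) : SL(2, ℂ) :=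
  ⟨!![a, b; c, d], by rwa [Matrix.det_fin_two_of]⟩

section ofEntries

variable {a b c d : ℂ} (h : a * d - b * c = 1)

@[simp] lemma ofEntries_zero_zero : ofEntries a b c d h 0 0 = a := rfl

@[simp] lemma ofEntries_zero_one : ofEntries a b c d h 0 1 = b := rfl

@[simp] lemma ofEntries_one_zero : ofEntries a b c d h 1 0 = c := rfl

@[simp] lemma ofEntries_one_one : ofEntries a b c d h 1 1 = d := rfl

end ofEntries

/-- The Hermitian form `A |z|² + 2 Re (conj B z conj w) + C |w|²` on `ℂ²`. Forms with
`lorentz X X = 1` are the points of de Sitter space; such a form stands for the disk of the Riemann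
sphere on which it is nonpositive. -/
@[ext]
structure CircleForm where
  /-- The coefficient of `|z|²`. -/
  A : ℝ
  /-- The off-diagonal coefficient. -/
  B : ℂ
  /-- The coefficient of `|w|²`. -/
  C : ℝ

namespace CircleForm

variable {X Y : CircleForm}

/-- The value of a Hermitian form at the vector `(z, w)`. -/
noncomputable def eval (X : CircleForm) (z w : ℂ) : ℝ :=
  X.A * Complex.normSq z + 2 * (conj X.B * z * conj w).re + X.C * Complex.normSq w

/-- The polarisation of minus the determinant, a quadratic form of signature `(3, 1)`. -/
noncomputable def lorentz (X Y : CircleForm) : ℝ :=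
  (X.B * conj Y.B).re - (X.A * Y.C + Y.A * X.C) / 2

/-- The form `v ↦ X (g v)`. -/
noncomputable def pullback (g : SL(2, ℂ)) (X : CircleForm) : CircleForm where
  A := X.eval (g 0 0) (g 1 0)
  B := conj (X.A * g 0 0 * conj (g 0 1) + conj X.B * g 0 0 * conj (g 1 1) +
    X.B * g 1 0 * conj (g 0 1) + X.C * g 1 0 * conj (g 1 1))
  C := X.eval (g 0 1) (g 1 1)

lemma eval_eq (X : CircleForm) (z w : ℂ) : X.eval z w = X.A * (z.re ^ 2 + z.im ^ 2) +
    2 * (X.B.re * (z.re * w.re + z.im * w.im) + X.B.im * (z.im * w.re - z.re * w.im)) +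
    X.C * (w.re ^ 2 + w.im ^ 2) := by
  simp [eval, Complex.normSq_apply]
  ring

lemma lorentz_eq (X Y : CircleForm) : lorentz X Y =
    X.B.re * Y.B.re + X.B.im * Y.B.im - (X.A * Y.C + Y.A * X.C) / 2 := by
  simp [lorentz]

lemma pullback_A (g : SL(2, ℂ)) (X : CircleForm) :
    (X.pullback g).A = X.eval (g 0 0) (g 1 0) := rfl

lemma pullback_C (g : SL(2, ℂ)) (X : CircleForm) :
    (X.pullback g).C = X.eval (g 0 1) (g 1 1) := rfl

lemma pullback_B_re (g : SL(2, ℂ)) (X : CircleForm) : (X.pullback g).B.re =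
    X.A * ((g 0 0).re * (g 0 1).re + (g 0 0).im * (g 0 1).im) +
    X.C * ((g 1 0).re * (g 1 1).re + (g 1 0).im * (g 1 1).im) +
    X.B.re * ((g 0 0).re * (g 1 1).re + (g 0 0).im * (g 1 1).im +
      (g 1 0).re * (g 0 1).re + (g 1 0).im * (g 0 1).im) +
    X.B.im * ((g 0 0).im * (g 1 1).re - (g 0 0).re * (g 1 1).im +
      (g 1 0).re * (g 0 1).im - (g 1 0).im * (g 0 1).re) := by
  simp [pullback]
  ring

lemma pullback_B_im (g : SL(2, ℂ)) (X : CircleForm) : (X.pullback g).B.im =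
    X.A * ((g 0 0).re * (g 0 1).im - (g 0 0).im * (g 0 1).re) +
    X.C * ((g 1 0).re * (g 1 1).im - (g 1 0).im * (g 1 1).re) +
    X.B.re * ((g 0 0).re * (g 1 1).im - (g 0 0).im * (g 1 1).re +
      (g 1 0).re * (g 0 1).im - (g 1 0).im * (g 0 1).re) +
    X.B.im * ((g 0 0).re * (g 1 1).re + (g 0 0).im * (g 1 1).im -
      (g 1 0).re * (g 0 1).re - (g 1 0).im * (g 0 1).im) := by
  simp [pullback]
  ring

lemma eval_pullback (g : SL(2, ℂ)) (X : CircleForm) (z w : ℂ) :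
    (X.pullback g).eval z w = X.eval (g 0 0 * z + g 0 1 * w) (g 1 0 * z + g 1 1 * w) := by
  rw [eval_eq, eval_eq, pullback_B_re, pullback_B_im, pullback_A, pullback_C, eval_eq, eval_eq]
  simp only [Complex.add_re, Complex.add_im, Complex.mul_re, Complex.mul_im]
  ring

lemma lorentz_pullback (g : SL(2, ℂ)) (X Y : CircleForm) :
    lorentz (X.pullback g) (Y.pullback g) = lorentz X Y := by
  have hdet : g 0 0 * g 1 1 - g 0 1 * g 1 0 = 1 := by rw [← Matrix.det_fin_two, g.det_coe]
  suffices lorentz (X.pullback g) (Y.pullback g) =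
      Complex.normSq (g 0 0 * g 1 1 - g 0 1 * g 1 0) * lorentz X Y by
    rw [this, hdet, map_one, one_mul]
  rw [lorentz_eq, lorentz_eq, pullback_B_re, pullback_B_im, pullback_A, pullback_C,
    pullback_B_re, pullback_B_im, pullback_A, pullback_C, eval_eq, eval_eq, eval_eq, eval_eq,
    Complex.normSq_apply]
  simp only [Complex.sub_re, Complex.sub_im, Complex.mul_re, Complex.mul_im]
  ring

lemma pullback_one (X : CircleForm) : X.pullback 1 = X := by
  ext <;> simp [pullback, eval]

lemma pullback_mul (g h : SL(2, ℂ)) (X : CircleForm) :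
    X.pullback (g * h) = (X.pullback g).pullback h := by
  have hentry (i j : Fin 2) : (g * h) i j = g i 0 * h 0 j + g i 1 * h 1 j := by
    rw [Matrix.SpecialLinearGroup.coe_mul, Matrix.mul_apply, Fin.sum_univ_two]
  apply CircleForm.ext
  · rw [pullback_A, pullback_A, eval_pullback, hentry, hentry]
  · apply Complex.ext
    · simp only [pullback_B_re, pullback_B_im, pullback_A, pullback_C, eval_eq, hentry,
        Complex.add_re, Complex.add_im, Complex.mul_re, Complex.mul_im]
      ring
    · simp only [pullback_B_re, pullback_B_im, pullback_A, pullback_C, eval_eq, hentry,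
        Complex.add_re, Complex.add_im, Complex.mul_re, Complex.mul_im]
      ring
  · rw [pullback_C, pullback_C, eval_pullback, hentry, hentry]

lemma A_mul_eval_one (hX : lorentz X X = 1) (z : ℂ) :
    X.A * X.eval z 1 = Complex.normSq (X.A * z + X.B) - 1 := by
  rw [lorentz_eq] at hX
  simp only [eval_eq, Complex.normSq_apply, Complex.add_re, Complex.add_im, Complex.mul_re,
    Complex.mul_im, Complex.ofReal_re, Complex.ofReal_im, Complex.one_re, Complex.one_im]
  linear_combination (-1) * hX

/-- The form of the closed lower half plane. -/
noncomputable def lowerHalfPlane : CircleForm := ⟨0, Complex.I, 0⟩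

lemma lorentz_lowerHalfPlane (X : CircleForm) : lorentz X lowerHalfPlane = X.B.im := by
  simp [lorentz_eq, lowerHalfPlane]

lemma eval_lowerHalfPlane_one (z : ℂ) : lowerHalfPlane.eval z 1 = 2 * z.im := by
  simp [eval_eq, lowerHalfPlane]

lemma exists_A_pullback_ne_zero (hX : lorentz X X = 1) :
    ∃ g : SL(2, ℂ), (X.pullback g).A ≠ 0 := by
  rw [lorentz_eq] at hX
  by_contra! h
  have hA (c : ℂ) : X.eval 1 c = 0 := h (ofEntries 1 0 c 1 (by ring))
  have h0 := hA 0
  have hplus := hA (conj X.B)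
  have hminus := hA (-conj X.B)
  simp only [eval_eq, Complex.conj_re, Complex.conj_im, Complex.neg_re, Complex.neg_im,
    Complex.one_re, Complex.one_im, Complex.zero_re, Complex.zero_im] at h0 hplus hminus
  have hA0 : X.A = 0 := by linarith
  rw [hA0] at hX
  linarith

lemma exists_pullback_eq_lowerHalfPlane_of_A_ne_zero (hX : lorentz X X = 1) (hA : X.A ≠ 0) :
    ∃ g : SL(2, ℂ), X.pullback g = lowerHalfPlane := by
  have hC : X.C = (X.B.re ^ 2 + X.B.im ^ 2 - 1) / X.A := by
    rw [lorentz_eq] at hX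
    field_simp
    linarith
  have hA' : (X.A : ℂ) ≠ 0 := Complex.ofReal_ne_zero.2 hA
  -- The columns represent the two points of the circle on the vertical line through its center.
  refine ⟨ofEntries (Complex.I / 2 * (-X.B - Complex.I)) ((-X.B + Complex.I) / X.A)
    (Complex.I * X.A / 2) 1 (by field_simp; linear_combination (-2) * Complex.I_sq),
    CircleForm.ext ?_ (Complex.ext ?_ ?_) ?_⟩
  · simp [pullback_A, eval_eq, lowerHalfPlane, hC]
    field_simp
    ring
  · simp [pullback_B_re, lowerHalfPlane, hC]
    field_simp
    ring
  · simp [pullback_B_im, lowerHalfPlane, hC]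
    field_simp
    ring
  · simp [pullback_C, eval_eq, lowerHalfPlane, hC]
    field_simp
    ring

lemma exists_pullback_eq_lowerHalfPlane (hX : lorentz X X = 1) :
    ∃ g : SL(2, ℂ), X.pullback g = lowerHalfPlane := by
  obtain ⟨g, hg⟩ := exists_A_pullback_ne_zero hX
  obtain ⟨h, hh⟩ := exists_pullback_eq_lowerHalfPlane_of_A_ne_zero
    ((lorentz_pullback g X X).trans hX) hg
  exact ⟨g * h, by rw [pullback_mul, hh]⟩

end CircleForm

end Form

/-! ### The action on the Riemann sphere -/

section Sphere

open scoped MatrixGroups ComplexConjugate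

noncomputable instance : MulAction SL(2, ℂ) RS :=
  MulAction.compHom RS Matrix.SpecialLinearGroup.toGL

lemma smul_infty (g : SL(2, ℂ)) :
    g • (OnePoint.infty : RS) = if g 1 0 = 0 then OnePoint.infty else ((g 0 0 / g 1 0 : ℂ) : RS) :=
  OnePoint.smul_infty_eq_ite (Matrix.SpecialLinearGroup.toGL g)

lemma smul_coe (g : SL(2, ℂ)) (z : ℂ) :
    g • (z : RS) = if g 1 0 * z + g 1 1 = 0 then OnePoint.infty
      else (((g 0 0 * z + g 0 1) / (g 1 0 * z + g 1 1) : ℂ) : RS) :=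
  OnePoint.smul_some_eq_ite (g := Matrix.SpecialLinearGroup.toGL g)

lemma smul_eq_moeb (g : SL(2, ℂ)) :
    (fun p : RS ↦ g • p) = moeb (g 0 0) (g 0 1) (g 1 0) (g 1 1) := by
  funext p
  induction p using OnePoint.rec with
  | infty => rw [smul_infty]; rfl
  | coe z => rw [smul_coe]; rfl

lemma moeb_mul_left {k : ℂ} (hk : k ≠ 0) (a b c d : ℂ) :
    moeb (k * a) (k * b) (k * c) (k * d) = moeb a b c d := by
  funext p
  induction p using OnePoint.rec with
  | infty =>
    change (if k * c = 0 then OnePoint.infty else ((k * a / (k * c) : ℂ) : RS)) =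
      if c = 0 then OnePoint.infty else ((a / c : ℂ) : RS)
    simp only [mul_eq_zero, hk, false_or, mul_div_mul_left _ _ hk]
  | coe z =>
    change (if k * c * z + k * d = 0 then OnePoint.infty
      else (((k * a * z + k * b) / (k * c * z + k * d) : ℂ) : RS)) =
      if c * z + d = 0 then OnePoint.infty else (((a * z + b) / (c * z + d) : ℂ) : RS)
    simp only [mul_assoc, ← mul_add, mul_eq_zero, hk, false_or, mul_div_mul_left _ _ hk]

lemma isMoebius_iff {f : RS → RS} : IsMoebius f ↔ ∃ g : SL(2, ℂ), f = fun p ↦ g • p := by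
  constructor
  · rintro ⟨a, b, c, d, hdet, rfl⟩
    obtain ⟨k, hk⟩ := IsAlgClosed.exists_eq_mul_self (a * d - b * c)⁻¹
    have hk0 : k ≠ 0 := by
      rintro rfl
      exact inv_ne_zero hdet (by rw [hk, mul_zero])
    refine ⟨ofEntries (k * a) (k * b) (k * c) (k * d) ?_, ?_⟩
    · rw [← mul_inv_cancel₀ hdet, hk]
      ring
    · rw [smul_eq_moeb]
      exact (moeb_mul_left hk0 a b c d).symm
  · rintro ⟨g, rfl⟩
    refine ⟨g 0 0, g 0 1, g 1 0, g 1 1, ?_, smul_eq_moeb g⟩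
    rw [← Matrix.det_fin_two, g.det_coe]
    exact one_ne_zero

lemma conjRS_involutive : Function.Involutive conjRS := by
  intro p
  induction p using OnePoint.rec with
  | infty => rfl
  | coe z => exact congrArg _ (Complex.conj_conj z)

namespace CircleForm

variable {X Y : CircleForm}

/-- The value of a Hermitian form at the representative `(1, 0)` of `∞`, respectively `(z, 1)` of a
finite point `z`. Only its sign is independent of the choice of representatives. -/
noncomputable def value (X : CircleForm) (p : RS) : ℝ :=
  p.elim X.A fun z ↦ X.eval z 1

@[simp] lemma value_infty (X : CircleForm) : X.value OnePoint.infty = X.A := rfl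

@[simp] lemma value_coe (X : CircleForm) (z : ℂ) : X.value (z : RS) = X.eval z 1 := rfl

/-- The closed disk of the Riemann sphere on which the form is nonpositive. -/
def disk (X : CircleForm) : Set RS := {p | X.value p ≤ 0}

/-- The open disks on which the two forms are negative do not meet. -/
def OpenDisjoint (X Y : CircleForm) : Prop := ∀ p, 0 ≤ X.value p ∨ 0 ≤ Y.value p

lemma exists_eval_eq_mul_value {z w : ℂ} (h : z ≠ 0 ∨ w ≠ 0) : ∃ k : ℝ, 0 < k ∧
    ∀ X : CircleForm, X.eval z w = k *
      X.value (if w = 0 then OnePoint.infty else ((z / w : ℂ) : RS)) := by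
  by_cases hw : w = 0
  · have hz : z ≠ 0 := h.resolve_right (not_not.2 hw)
    refine ⟨Complex.normSq z, Complex.normSq_pos.2 hz, fun X ↦ ?_⟩
    simp [hw, eval, mul_comm]
  · refine ⟨Complex.normSq w, Complex.normSq_pos.2 hw, fun X ↦ ?_⟩
    obtain ⟨t, rfl⟩ : ∃ t, z = t * w := ⟨z / w, (div_mul_cancel₀ z hw).symm⟩
    rw [if_neg hw, mul_div_cancel_right₀ t hw, value_coe]
    simp only [eval_eq, Complex.normSq_apply, Complex.mul_re, Complex.mul_im, Complex.one_re,
      Complex.one_im]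
    ring

lemma exists_value_pullback_eq (g : SL(2, ℂ)) (p : RS) : ∃ k : ℝ, 0 < k ∧
    ∀ X : CircleForm, (X.pullback g).value p = k * X.value (g • p) := by
  have hdet : g 0 0 * g 1 1 - g 0 1 * g 1 0 = 1 := by rw [← Matrix.det_fin_two, g.det_coe]
  induction p using OnePoint.rec with
  | infty =>
    have hne : g 0 0 ≠ 0 ∨ g 1 0 ≠ 0 := by
      by_contra! h
      simp [h.1, h.2] at hdet
    simpa only [smul_infty, value_infty, pullback_A] using exists_eval_eq_mul_value hne
  | coe z =>
    have hne : g 0 0 * z + g 0 1 ≠ 0 ∨ g 1 0 * z + g 1 1 ≠ 0 := by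
      by_contra! h
      exact one_ne_zero (hdet.symm.trans (by linear_combination g 0 0 * h.2 - g 1 0 * h.1))
    simpa only [smul_coe, value_coe, eval_pullback, mul_one] using exists_eval_eq_mul_value hne

lemma mem_disk_pullback (g : SL(2, ℂ)) (X : CircleForm) (p : RS) :
    p ∈ (X.pullback g).disk ↔ g • p ∈ X.disk := by
  obtain ⟨k, hk, hvalue⟩ := exists_value_pullback_eq g p
  rw [disk, disk, Set.mem_ofPred_eq, Set.mem_ofPred_eq, hvalue, ← not_lt,
    mul_pos_iff_of_pos_left hk, not_lt]

lemma OpenDisjoint.pullback (h : OpenDisjoint X Y) (g : SL(2, ℂ)) :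
    OpenDisjoint (X.pullback g) (Y.pullback g) := by
  intro p
  obtain ⟨k, hk, hvalue⟩ := exists_value_pullback_eq g p
  rw [hvalue, hvalue]
  exact (h (g • p)).imp (mul_nonneg hk.le) (mul_nonneg hk.le)

lemma OpenDisjoint.eval_nonneg (h : OpenDisjoint X lowerHalfPlane) {z : ℂ} (hz : z.im < 0) :
    0 ≤ X.eval z 1 := by
  refine (h z).resolve_right (not_le.2 ?_)
  rw [value_coe, eval_lowerHalfPlane_one]
  linarith

lemma OpenDisjoint.normSq_sub_one_div_nonneg (hX : lorentz X X = 1)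
    (h : OpenDisjoint X lowerHalfPlane) (hA : X.A ≠ 0) {w : ℂ} (hw : (w.im - X.B.im) / X.A < 0) :
    0 ≤ (Complex.normSq w - 1) / X.A := by
  have hA' : (X.A : ℂ) ≠ 0 := Complex.ofReal_ne_zero.2 hA
  have heval := A_mul_eval_one hX ((w - X.B) / X.A)
  rw [mul_div_cancel₀ _ hA', sub_add_cancel] at heval
  rw [← heval, mul_div_cancel_left₀ _ hA]
  exact h.eval_nonneg (by rwa [Complex.div_ofReal_im, Complex.sub_im])

lemma OpenDisjoint.A_nonneg (hX : lorentz X X = 1) (h : OpenDisjoint X lowerHalfPlane) :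
    0 ≤ X.A := by
  by_contra! hA
  have hw : ((⟨0, |X.B.im| + 2⟩ : ℂ).im - X.B.im) / X.A < 0 :=
    div_neg_of_pos_of_neg (by change 0 < |X.B.im| + 2 - X.B.im; linarith [le_abs_self X.B.im]) hA
  refine absurd (h.normSq_sub_one_div_nonneg hX hA.ne hw) (not_le.2 (div_neg_of_pos_of_neg ?_ hA))
  rw [Complex.normSq_mk]
  nlinarith [abs_nonneg X.B.im]

lemma OpenDisjoint.B_im_le_neg_one (hX : lorentz X X = 1) (h : OpenDisjoint X lowerHalfPlane)
    (hA : 0 < X.A) : X.B.im ≤ -1 := by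
  by_contra! hB
  obtain ⟨τ, hτ, hτ1⟩ := exists_between (show max 0 (-X.B.im) < 1 from
    max_lt zero_lt_one (by linarith))
  obtain ⟨hτ0, hτB⟩ := max_lt_iff.1 hτ
  have hw : ((⟨0, -τ⟩ : ℂ).im - X.B.im) / X.A < 0 :=
    div_neg_of_neg_of_pos (by change -τ - X.B.im < 0; linarith) hA
  refine absurd (h.normSq_sub_one_div_nonneg hX hA.ne' hw)
    (not_le.2 (div_neg_of_neg_of_pos ?_ hA))
  rw [Complex.normSq_mk]
  nlinarith

lemma OpenDisjoint.eq_of_A_eq_zero (hX : lorentz X X = 1) (h : OpenDisjoint X lowerHalfPlane)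
    (hA : X.A = 0) : X.B = -Complex.I ∧ 0 ≤ X.C := by
  have hnorm : X.B.re ^ 2 + X.B.im ^ 2 = 1 := by
    rw [lorentz_eq, hA] at hX
    linarith
  have hhalf (x y : ℝ) (hy : y < 0) : 0 ≤ 2 * (X.B.re * x + X.B.im * y) + X.C := by
    simpa [eval_eq, hA] using h.eval_nonneg (z := ⟨x, y⟩) hy
  have him : X.B.im = -1 := by
    by_contra hne
    have hpos : 0 < 1 + X.B.im := by
      have : -1 < X.B.im := lt_of_le_of_ne (by nlinarith [sq_nonneg X.B.re]) (Ne.symm hne)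
      linarith
    -- The point `-k (B + i)` has linear part `-2 k (1 + Im B)`.
    have hk : (1 + |X.C|) / (1 + X.B.im) * (1 + X.B.im) = 1 + |X.C| :=
      div_mul_cancel₀ _ hpos.ne'
    have heval := hhalf (-((1 + |X.C|) / (1 + X.B.im)) * X.B.re) (-(1 + |X.C|))
      (by linarith [abs_nonneg X.C])
    set k := (1 + |X.C|) / (1 + X.B.im)
    have hlin : X.B.re * (-k * X.B.re) + X.B.im * (-(1 + |X.C|)) = -(1 + |X.C|) := by
      linear_combination (-k) * hnorm - (1 - X.B.im) * hk
    linarith [le_abs_self X.C, abs_nonneg X.C]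
  have hre : X.B.re = 0 := by
    rw [him] at hnorm
    exact pow_eq_zero_iff two_ne_zero |>.1 (by linarith)
  refine ⟨Complex.ext (by simp [hre]) (by simp [him]), ?_⟩
  by_contra! hC
  have := hhalf 0 (X.C / 4) (by linarith)
  rw [him] at this
  linarith

lemma OpenDisjoint.lorentz_lowerHalfPlane_le (hX : lorentz X X = 1)
    (h : OpenDisjoint X lowerHalfPlane) : lorentz X lowerHalfPlane ≤ -1 := by
  rw [lorentz_lowerHalfPlane]
  rcases (h.A_nonneg hX).eq_or_lt with hA | hA
  · simp [(h.eq_of_A_eq_zero hX hA.symm).1]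
  · exact h.B_im_le_neg_one hX hA

lemma OpenDisjoint.nonempty_inter_lowerHalfPlane_iff (hX : lorentz X X = 1)
    (h : OpenDisjoint X lowerHalfPlane) :
    (X.disk ∩ lowerHalfPlane.disk).Nonempty ↔ lorentz X lowerHalfPlane = -1 := by
  rw [lorentz_lowerHalfPlane]
  rcases (h.A_nonneg hX).eq_or_lt with hA | hA
  · have hinfty : OnePoint.infty ∈ X.disk ∩ lowerHalfPlane.disk := ⟨hA.ge, le_refl (0 : ℝ)⟩
    simp [(h.eq_of_A_eq_zero hX hA.symm).1, Set.nonempty_of_mem hinfty]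
  constructor
  · rintro ⟨p, hpX, hp⟩
    induction p using OnePoint.rec with
    | infty => exact absurd hpX (not_le.2 hA)
    | coe z =>
      have hz : z.im ≤ 0 := by
        have : lowerHalfPlane.eval z 1 ≤ 0 := hp
        rw [eval_lowerHalfPlane_one] at this
        linarith
      have hw : Complex.normSq (X.A * z + X.B) ≤ 1 := by
        have := mul_nonpos_of_nonneg_of_nonpos hA.le (show X.eval z 1 ≤ 0 from hpX)
        rw [A_mul_eval_one hX] at this
        linarith
      have him : (X.A * z + X.B).im ≤ X.B.im := by
        rw [Complex.add_im, Complex.im_ofReal_mul]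
        nlinarith
      rw [Complex.normSq_apply] at hw
      exact le_antisymm (h.B_im_le_neg_one hX hA) (by nlinarith [sq_nonneg (X.A * z + X.B).re])
  · intro hB
    refine ⟨((-X.B.re / X.A : ℝ) : ℂ), ?_, ?_⟩
    · have hw : X.A * ((-X.B.re / X.A : ℝ) : ℂ) + X.B = -Complex.I := by
        apply Complex.ext <;> simp [hB, mul_div_cancel₀ _ hA.ne']
      have hmul := A_mul_eval_one hX ((-X.B.re / X.A : ℝ) : ℂ)
      rw [hw, Complex.normSq_neg, Complex.normSq_I, sub_self] at hmul
      exact ((mul_eq_zero.1 hmul).resolve_left hA.ne').le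
    · change lowerHalfPlane.eval _ 1 ≤ 0
      rw [eval_lowerHalfPlane_one, Complex.ofReal_im, mul_zero]

lemma OpenDisjoint.lorentz_le (hX : lorentz X X = 1) (hY : lorentz Y Y = 1)
    (h : OpenDisjoint X Y) : lorentz X Y ≤ -1 := by
  obtain ⟨g, hg⟩ := exists_pullback_eq_lowerHalfPlane hY
  have hpull := h.pullback g
  rw [hg] at hpull
  rw [← lorentz_pullback g, hg]
  exact hpull.lorentz_lowerHalfPlane_le (by rw [lorentz_pullback, hX])

lemma OpenDisjoint.nonempty_inter_iff (hX : lorentz X X = 1) (hY : lorentz Y Y = 1)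
    (h : OpenDisjoint X Y) : (X.disk ∩ Y.disk).Nonempty ↔ lorentz X Y = -1 := by
  obtain ⟨g, hg⟩ := exists_pullback_eq_lowerHalfPlane hY
  have hpull := h.pullback g
  rw [hg] at hpull
  rw [← lorentz_pullback g, hg,
    ← hpull.nonempty_inter_lowerHalfPlane_iff (by rw [lorentz_pullback, hX]), ← hg]
  constructor
  · rintro ⟨p, hp⟩
    refine ⟨g⁻¹ • p, ?_, ?_⟩
    · simpa only [mem_disk_pullback, smul_inv_smul] using hp.1
    · simpa only [mem_disk_pullback, smul_inv_smul] using hp.2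
  · rintro ⟨p, hp⟩
    exact ⟨g • p, (mem_disk_pullback g X p).1 hp.1, (mem_disk_pullback g Y p).1 hp.2⟩

end CircleForm

end Sphere

/-! ### Packings of forms -/

section FormPacking

open scoped MatrixGroups ComplexConjugate

namespace CircleForm

variable {X Y : CircleForm}

/-- The form of the planar disk with center `ζ` and radius `r`. -/
noncomputable def ofPlanarDisk (ζ : ℂ) (r : ℝ) : CircleForm :=
  ⟨1 / r, -(ζ / r), (Complex.normSq ζ - r ^ 2) / r⟩

lemma lorentz_ofPlanarDisk_self (ζ : ℂ) {r : ℝ} (hr : r ≠ 0) :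
    lorentz (ofPlanarDisk ζ r) (ofPlanarDisk ζ r) = 1 := by
  simp only [lorentz_eq, ofPlanarDisk, Complex.normSq_apply, Complex.neg_re, Complex.neg_im,
    Complex.div_ofReal_re, Complex.div_ofReal_im]
  field_simp
  ring

lemma eval_ofPlanarDisk_one (ζ : ℂ) {r : ℝ} (hr : r ≠ 0) (z : ℂ) :
    (ofPlanarDisk ζ r).eval z 1 = (‖z - ζ‖ ^ 2 - r ^ 2) / r := by
  simp only [← Complex.normSq_eq_norm_sq, eval_eq, ofPlanarDisk, Complex.normSq_apply,
    Complex.neg_re, Complex.neg_im, Complex.div_ofReal_re, Complex.div_ofReal_im, Complex.sub_re,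
    Complex.sub_im, Complex.one_re, Complex.one_im]
  field_simp
  ring

lemma disk_ofPlanarDisk (ζ : ℂ) {r : ℝ} (hr : 0 < r) : (ofPlanarDisk ζ r).disk = coeDisk ζ r := by
  ext p
  induction p using OnePoint.rec with
  | infty =>
    have hA : ¬ (ofPlanarDisk ζ r).A ≤ 0 := not_le.2 (one_div_pos.2 hr)
    simpa [disk, coeDisk] using hA
  | coe z =>
    simp only [disk, coeDisk, Set.mem_ofPred_eq, value_coe, eval_ofPlanarDisk_one ζ hr.ne',
      Set.mem_image, OnePoint.coe_eq_coe, exists_eq_right, mem_closedBall, dist_eq_norm]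
    rw [← not_lt, div_pos_iff_of_pos_right hr, not_lt, sub_nonpos, sq_le_sq₀ (norm_nonneg _) hr.le]

lemma smul_image_disk (g : SL(2, ℂ)) (X : CircleForm) :
    (fun p ↦ g • p) '' (X.pullback g).disk = X.disk := by
  ext p
  constructor
  · rintro ⟨q, hq, rfl⟩
    exact (mem_disk_pullback g X q).1 hq
  · intro hp
    exact ⟨g⁻¹ • p, (mem_disk_pullback g X _).2 (by rwa [smul_inv_smul]), smul_inv_smul g p⟩

lemma exists_disk_eq_of_isDiskRS {D : Set RS} (hD : IsDiskRS D) :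
    ∃ X : CircleForm, lorentz X X = 1 ∧ X.disk = D := by
  obtain ⟨f, hf, ζ, r, hr, rfl⟩ := hD
  obtain ⟨g, rfl⟩ := isMoebius_iff.1 hf
  refine ⟨(ofPlanarDisk ζ r).pullback g⁻¹, ?_, ?_⟩
  · rw [lorentz_pullback, lorentz_ofPlanarDisk_self ζ hr.ne']
  · rw [← smul_image_disk g, ← pullback_mul, inv_mul_cancel, pullback_one, disk_ofPlanarDisk ζ hr]

lemma isOpen_value_neg (hX : lorentz X X = 1) : IsOpen {p | X.value p < 0} := by
  have hopen : IsOpen {z : ℂ | X.eval z 1 < 0} :=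
    isOpen_lt (by unfold eval; fun_prop) continuous_const
  refine OnePoint.isOpen_def.2 ⟨fun hA ↦ ?_, hopen⟩
  replace hA : X.A < 0 := hA
  refine Metric.isCompact_of_isClosed_isBounded hopen.isClosed_compl ?_
  refine Metric.isBounded_closedBall (x := -X.B / X.A) (r := 1 / -X.A) |>.subset fun z hz ↦ ?_
  have hz0 : 0 ≤ X.eval z 1 := not_lt.1 hz
  have hnorm : ‖X.A * z + X.B‖ ≤ 1 := by
    rw [← sq_le_one_iff₀ (norm_nonneg _), ← Complex.normSq_eq_norm_sq, ← sub_nonpos,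
      ← A_mul_eval_one hX]
    exact mul_nonpos_of_nonpos_of_nonneg hA.le hz0
  have hA' : (X.A : ℂ) ≠ 0 := Complex.ofReal_ne_zero.2 hA.ne
  have hcenter : z - -X.B / X.A = (X.A * z + X.B) / X.A := by
    field_simp
    ring
  rw [mem_closedBall, dist_eq_norm, hcenter, norm_div, Complex.norm_real, Real.norm_of_nonpos hA.le]
  exact div_le_div_of_nonneg_right hnorm (neg_pos.2 hA).le

lemma openDisjoint_of_disjoint_interior (hX : lorentz X X = 1) (hY : lorentz Y Y = 1)
    (h : Disjoint (interior X.disk) (interior Y.disk)) : OpenDisjoint X Y := by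
  intro p
  by_contra! hp
  have hmem {Z : CircleForm} (hZ : lorentz Z Z = 1) (hp : Z.value p < 0) : p ∈ interior Z.disk :=
    interior_maximal (t := {p | Z.value p < 0}) (fun _ hq ↦ le_of_lt (α := ℝ) hq)
      (isOpen_value_neg hZ) hp
  exact Set.disjoint_left.1 h (hmem hX hp.1) (hmem hY hp.2)

end CircleForm

open CircleForm

variable {V : Type*} {G : SimpleGraph V} {X : V → CircleForm}

/-- The disks of the forms `X v` have disjoint interiors and contact graph `G`. Tangency is
expressed by the Lorentz form. -/
structure IsFormPacking (G : SimpleGraph V) (X : V → CircleForm) : Prop where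
  lorentz_self : ∀ v, lorentz (X v) (X v) = 1
  openDisjoint : ∀ u v, u ≠ v → OpenDisjoint (X u) (X v)
  lorentz_eq_neg_one_iff : ∀ u v, u ≠ v → (lorentz (X u) (X v) = -1 ↔ G.Adj u v)

lemma IsFormPacking.lorentz_le (h : IsFormPacking G X) {u v : V} (huv : u ≠ v) :
    lorentz (X u) (X v) ≤ -1 :=
  (h.openDisjoint u v huv).lorentz_le (h.lorentz_self u) (h.lorentz_self v)

lemma IsFormPacking.lorentz_eq_neg_one (h : IsFormPacking G X) {u v : V} (huv : G.Adj u v) :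
    lorentz (X u) (X v) = -1 :=
  (h.lorentz_eq_neg_one_iff u v huv.ne).2 huv

lemma IsFormPacking.pullback (h : IsFormPacking G X) (g : SL(2, ℂ)) :
    IsFormPacking G fun v ↦ (X v).pullback g where
  lorentz_self v := (lorentz_pullback g _ _).trans (h.lorentz_self v)
  openDisjoint u v huv := (h.openDisjoint u v huv).pullback g
  lorentz_eq_neg_one_iff u v huv := by
    rw [lorentz_pullback]
    exact h.lorentz_eq_neg_one_iff u v huv

lemma exists_isFormPacking {D : V → Set RS} (hD : ∀ v, IsDiskRS (D v))
    (hdisj : ∀ u v, u ≠ v → Disjoint (interior (D u)) (interior (D v)))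
    (hcontact : ∀ u v, u ≠ v → ((D u ∩ D v).Nonempty ↔ G.Adj u v)) :
    ∃ X, IsFormPacking G X ∧ ∀ v, (X v).disk = D v := by
  choose X hX hdisk using fun v ↦ exists_disk_eq_of_isDiskRS (hD v)
  have hopen (u v : V) (huv : u ≠ v) : OpenDisjoint (X u) (X v) :=
    openDisjoint_of_disjoint_interior (hX u) (hX v) (by rw [hdisk, hdisk]; exact hdisj u v huv)
  refine ⟨X, ⟨hX, hopen, fun u v huv ↦ ?_⟩, hdisk⟩
  rw [← (hopen u v huv).nonempty_inter_iff (hX u) (hX v), hdisk, hdisk, hcontact u v huv]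

end FormPacking

/-! ### The flower of a disk -/

section FormFlower

open scoped MatrixGroups ComplexConjugate

namespace CircleForm

variable {X Y : CircleForm}

lemma pullback_lowerHalfPlane {g : SL(2, ℂ)} (hg : ∀ i j, (g i j).im = 0) :
    lowerHalfPlane.pullback g = lowerHalfPlane := by
  have hdet : g 0 0 * g 1 1 - g 0 1 * g 1 0 = 1 := by rw [← Matrix.det_fin_two, g.det_coe]
  have hre := congrArg Complex.re hdet
  simp only [Complex.sub_re, Complex.mul_re, hg, Complex.one_re] at hre
  refine CircleForm.ext ?_ (Complex.ext ?_ ?_) ?_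
  · simp [pullback_A, eval_eq, hg, lowerHalfPlane]
  · simp [pullback_B_re, hg, lowerHalfPlane]
  · simp [pullback_B_im, hg, lowerHalfPlane]
    linarith
  · simp [pullback_C, eval_eq, hg, lowerHalfPlane]

lemma eq_ofPlanarDisk (hX : lorentz X X = 1) (hA : X.A ≠ 0) :
    X = ofPlanarDisk (-X.B / X.A) (1 / X.A) := by
  rw [lorentz_eq] at hX
  have hA' : (X.A : ℂ) ≠ 0 := Complex.ofReal_ne_zero.2 hA
  refine CircleForm.ext ?_ ?_ ?_
  · simp [ofPlanarDisk]
  · simp only [ofPlanarDisk, Complex.ofReal_div, Complex.ofReal_one]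
    field_simp
  · simp only [ofPlanarDisk, Complex.normSq_apply, Complex.div_ofReal_re, Complex.div_ofReal_im,
      Complex.neg_re, Complex.neg_im]
    field_simp
    linarith

lemma lorentz_ofPlanarDisk (ζ ζ' : ℂ) {r r' : ℝ} (hr : r ≠ 0) (hr' : r' ≠ 0) :
    lorentz (ofPlanarDisk ζ r) (ofPlanarDisk ζ' r') =
      (r ^ 2 + r' ^ 2 - ((ζ.re - ζ'.re) ^ 2 + (ζ.im - ζ'.im) ^ 2)) / (2 * r * r') := by
  simp only [lorentz_eq, ofPlanarDisk, Complex.normSq_apply, Complex.neg_re, Complex.neg_im,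
    Complex.div_ofReal_re, Complex.div_ofReal_im]
  field_simp
  ring

lemma lorentz_ofPlanarDisk_le_neg_one_iff (ζ ζ' : ℂ) {r r' : ℝ} (hr : 0 < r) (hr' : 0 < r') :
    lorentz (ofPlanarDisk ζ r) (ofPlanarDisk ζ' r') ≤ -1 ↔
      (r + r') ^ 2 ≤ (ζ.re - ζ'.re) ^ 2 + (ζ.im - ζ'.im) ^ 2 := by
  rw [lorentz_ofPlanarDisk ζ ζ' hr.ne' hr'.ne', div_le_iff₀ (by positivity)]
  constructor <;> intro h <;> linarith

lemma lorentz_ofPlanarDisk_eq_neg_one_iff (ζ ζ' : ℂ) {r r' : ℝ} (hr : 0 < r) (hr' : 0 < r') :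
    lorentz (ofPlanarDisk ζ r) (ofPlanarDisk ζ' r') = -1 ↔
      (ζ.re - ζ'.re) ^ 2 + (ζ.im - ζ'.im) ^ 2 = (r + r') ^ 2 := by
  rw [lorentz_ofPlanarDisk ζ ζ' hr.ne' hr'.ne', div_eq_iff (by positivity)]
  constructor <;> intro h <;> linarith

lemma lorentz_ofPlanarDisk_lowerHalfPlane (ζ : ℂ) (r : ℝ) :
    lorentz (ofPlanarDisk ζ r) lowerHalfPlane = -(ζ.im / r) := by
  rw [lorentz_lowerHalfPlane, ofPlanarDisk, Complex.neg_im, Complex.div_ofReal_im]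

lemma add_B_sq_eq (hX : lorentz X X = 1) (hY : lorentz Y Y = 1) (hXY : lorentz X Y = -1) :
    (X.B.re + Y.B.re) ^ 2 + (X.B.im + Y.B.im) ^ 2 = (X.A + Y.A) * (X.C + Y.C) := by
  rw [lorentz_eq] at hX hY hXY
  linear_combination hX + hY + 2 * hXY

lemma neg_lorentz_sub_lorentz_eq {K : ℝ} (hA : X.A + Y.A = K) (hre : X.B.re + Y.B.re = 0)
    (him : X.B.im + Y.B.im = -K) (hC : X.C + Y.C = K) (Z : CircleForm) :
    -lorentz Z X - lorentz Z Y = K / 2 * Z.eval Complex.I 1 := by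
  simp only [lorentz_eq, eval_eq, Complex.I_re, Complex.I_im, Complex.one_re, Complex.one_im]
  linear_combination (-Z.B.re) * hre - Z.B.im * him + Z.C / 2 * hA + Z.A / 2 * hC

/-- The matrix of the affine map `z ↦ α z + β`. -/
noncomputable def realAffine {α : ℝ} (hα : 0 < α) (β : ℝ) : SL(2, ℂ) :=
  ofEntries (√α : ℝ) (β / √α : ℝ) 0 ((√α)⁻¹ : ℝ) (by
    rw [mul_zero, sub_zero, ← Complex.ofReal_mul, mul_inv_cancel₀ (sqrt_pos.2 hα).ne',
      Complex.ofReal_one])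

section realAffine

variable {α : ℝ} (hα : 0 < α) (β : ℝ) (X : CircleForm)

lemma pullback_realAffine_lowerHalfPlane :
    lowerHalfPlane.pullback (realAffine hα β) = lowerHalfPlane :=
  pullback_lowerHalfPlane fun i j ↦ by fin_cases i <;> fin_cases j <;> simp [realAffine]

lemma pullback_realAffine_A : (X.pullback (realAffine hα β)).A = α * X.A := by
  simp [pullback_A, eval_eq, realAffine, sq_sqrt hα.le, mul_comm]

lemma pullback_realAffine_B_re : (X.pullback (realAffine hα β)).B.re = X.A * β + X.B.re := by
  have := (sqrt_pos.2 hα).ne'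
  simp only [pullback_B_re, realAffine, ofEntries_zero_zero, ofEntries_zero_one,
    ofEntries_one_zero, ofEntries_one_one, Complex.ofReal_re, Complex.ofReal_im, Complex.zero_re,
    Complex.zero_im]
  field_simp
  ring

lemma pullback_realAffine_B_im : (X.pullback (realAffine hα β)).B.im = X.B.im := by
  simp [pullback_B_im, realAffine, (sqrt_pos.2 hα).ne']

lemma pullback_realAffine_C :
    (X.pullback (realAffine hα β)).C = (X.A * β ^ 2 + 2 * X.B.re * β + X.C) / α := by
  simp [pullback_C, eval_eq, realAffine, div_pow, sq_sqrt hα.le]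
  field_simp
  rw [sq_sqrt hα.le]
  ring

end realAffine

end CircleForm

open CircleForm

variable {V : Type*} {G : SimpleGraph V} {X : V → CircleForm} {u v w x y : V}

namespace IsFormPacking

lemma isContactGram (h : IsFormPacking G X) :
    IsContactGram G fun u w ↦ lorentz (X u) (X w) where
  self := h.lorentz_self
  le_neg_one _ _ huv := h.lorentz_le huv
  eq_neg_one _ _ huv := h.lorentz_eq_neg_one huv

lemma C_pos_of_A_eq_zero (h : IsFormPacking G X) (hv : X v = lowerHalfPlane) (huv : u ≠ v)
    (hwu : w ≠ u) (hwv : w ≠ v) (hA : (X u).A = 0) : 0 < (X u).C := by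
  have hdisj : OpenDisjoint (X u) lowerHalfPlane := hv ▸ h.openDisjoint u v huv
  obtain ⟨hB, hC⟩ := hdisj.eq_of_A_eq_zero (h.lorentz_self u) hA
  refine hC.lt_of_ne' fun hC0 ↦ ?_
  have hle := h.lorentz_le hwu
  have hle' := h.lorentz_le hwv
  rw [lorentz_eq, hA, hB, hC0] at hle
  rw [hv, lorentz_lowerHalfPlane] at hle'
  simp only [Complex.neg_re, Complex.neg_im, Complex.I_re, Complex.I_im] at hle
  linarith

lemma eval_ofReal_one_pos (h : IsFormPacking G X) (hv : X v = lowerHalfPlane) (huv : u ≠ v)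
    (hwu : w ≠ u) (hwv : w ≠ v) {s : ℝ} (hs : s ≠ -(X u).B.re / (X u).A) :
    0 < (X u).eval s 1 := by
  have hdisj : OpenDisjoint (X u) lowerHalfPlane := hv ▸ h.openDisjoint u v huv
  rcases (hdisj.A_nonneg (h.lorentz_self u)).eq_or_lt' with hA | hA
  · have hB := (hdisj.eq_of_A_eq_zero (h.lorentz_self u) hA).1
    simpa [eval_eq, hA, hB] using h.C_pos_of_A_eq_zero hv huv hwu hwv hA
  · have hBim := hdisj.B_im_le_neg_one (h.lorentz_self u) hA
    have hBre : 0 < ((X u).A * s + (X u).B.re) ^ 2 := by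
      refine sq_pos_of_ne_zero fun h0 ↦ hs ?_
      rw [eq_div_iff hA.ne']
      linarith
    refine (pos_iff_pos_of_mul_pos ?_).1 hA
    rw [A_mul_eval_one (h.lorentz_self u), Complex.normSq_apply]
    simp
    nlinarith

lemma exists_pullback_A_pos [Finite V] (h : IsFormPacking G X) (hxy : x ≠ y) (hx : v ≠ x)
    (hy : v ≠ y) : ∃ g : SL(2, ℂ), (X v).pullback g = lowerHalfPlane ∧
      ∀ u, u ≠ v → 0 < ((X u).pullback g).A := by
  obtain ⟨g, hg⟩ := exists_pullback_eq_lowerHalfPlane (h.lorentz_self v)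
  have hpack := h.pullback g
  obtain ⟨s, hs⟩ := (Set.finite_range fun u ↦
    -((X u).pullback g).B.re / ((X u).pullback g).A).exists_notMem
  refine ⟨g * ofEntries s (-1) 1 0 (by ring), ?_, fun u hu ↦ ?_⟩
  · rw [pullback_mul, hg, pullback_lowerHalfPlane fun i j ↦ ?_]
    fin_cases i <;> fin_cases j <;> simp
  · obtain ⟨w, hwu, hwv⟩ : ∃ w, w ≠ u ∧ w ≠ v := by
      by_cases hux : x = u
      · exact ⟨y, fun hyu ↦ hxy (hux.trans hyu.symm), hy.symm⟩
      · exact ⟨x, hux, hx.symm⟩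
    rw [pullback_mul]
    exact hpack.eval_ofReal_one_pos hg hu hwu hwv fun h ↦ hs ⟨u, h.symm⟩

end IsFormPacking

/-- The disk of `X v` is the lower half plane, those of the other `X u` are the planar disks with
centers `ζ u` and radii `r u`, and the disks of `X x` and `X y` touch at `i`: `X x + X y` is then
the multiple of the null form `|z - i w|²` with leading coefficient `K`. -/
structure IsFlowerPosition (X : V → CircleForm) (x y v : V) (ζ : V → ℂ) (r : V → ℝ) (K : ℝ) :
    Prop where
  eq_lowerHalfPlane : X v = lowerHalfPlane
  radius_pos : ∀ u, u ≠ v → 0 < r u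
  eq_ofPlanarDisk : ∀ u, u ≠ v → X u = ofPlanarDisk (ζ u) (r u)
  pos : 0 < K
  tangencyCurvature_eq : ∀ u,
    tangencyCurvature (fun u w ↦ lorentz (X u) (X w)) x y u = K / 2 * (X u).eval Complex.I 1

lemma IsFormPacking.exists_isFlowerPosition_of_A_pos (h : IsFormPacking G X) (hxy : G.Adj x y)
    (hx : v ≠ x) (hy : v ≠ y) (hv : X v = lowerHalfPlane) (hA : ∀ u, u ≠ v → 0 < (X u).A) :
    ∃ g : SL(2, ℂ), ∃ ζ r K, IsFlowerPosition (fun u ↦ (X u).pullback g) x y v ζ r K := by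
  have hApos : 0 < (X x).A + (X y).A := add_pos (hA x hx.symm) (hA y hy.symm)
  have hSneg : (X x).B.im + (X y).B.im < 0 := by
    have hSx := h.lorentz_le hx.symm
    have hSy := h.lorentz_le hy.symm
    rw [hv, lorentz_lowerHalfPlane] at hSx hSy
    linarith
  have hnull := add_B_sq_eq (h.lorentz_self x) (h.lorentz_self y) (h.lorentz_eq_neg_one hxy)
  have hα : 0 < -((X x).B.im + (X y).B.im) / ((X x).A + (X y).A) :=
    div_pos (neg_pos.2 hSneg) hApos
  set g := realAffine hα (-((X x).B.re + (X y).B.re) / ((X x).A + (X y).A)) with hg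
  have hA' (u : V) (hu : u ≠ v) : 0 < ((X u).pullback g).A := by
    rw [pullback_realAffine_A]
    exact mul_pos hα (hA u hu)
  refine ⟨g, fun u ↦ -((X u).pullback g).B / ((X u).pullback g).A,
    fun u ↦ 1 / ((X u).pullback g).A, -((X x).B.im + (X y).B.im), ?_,
    fun u hu ↦ one_div_pos.2 (hA' u hu),
    fun u hu ↦ eq_ofPlanarDisk ((h.pullback g).lorentz_self u) (hA' u hu).ne',
    neg_pos.2 hSneg, fun u ↦ ?_⟩
  · rw [hv, pullback_realAffine_lowerHalfPlane]
  · refine neg_lorentz_sub_lorentz_eq ?_ ?_ ?_ ?_ _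
    · rw [hg, pullback_realAffine_A, pullback_realAffine_A, ← mul_add, div_mul_cancel₀ _ hApos.ne']
    · rw [hg, pullback_realAffine_B_re, pullback_realAffine_B_re]
      field_simp
      ring
    · rw [hg, pullback_realAffine_B_im, pullback_realAffine_B_im, neg_neg]
    · rw [hg, pullback_realAffine_C, pullback_realAffine_C]
      have hSne := hSneg.ne
      field_simp
      linear_combination ((X x).A + (X y).A) * hnull

lemma IsFormPacking.exists_isFlowerPosition [Finite V] (h : IsFormPacking G X) (hxy : G.Adj x y)
    (hx : v ≠ x) (hy : v ≠ y) :
    ∃ g : SL(2, ℂ), ∃ ζ r K, IsFlowerPosition (fun u ↦ (X u).pullback g) x y v ζ r K := by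
  obtain ⟨g, hg, hA⟩ := h.exists_pullback_A_pos hxy.ne hx hy
  obtain ⟨g', ζ, r, K, hK⟩ := (h.pullback g).exists_isFlowerPosition_of_A_pos hxy hx hy hg hA
  refine ⟨g * g', ζ, r, K, ?_⟩
  simpa only [pullback_mul] using hK

end FormFlower

section FlowerPosition

open CircleForm
open scoped MatrixGroups

variable {V : Type*} {G : SimpleGraph V} {X : V → CircleForm} {u v x y : V} {ζ : V → ℂ}
  {r : V → ℝ} {K : ℝ}

namespace IsFlowerPosition

lemma tangencyCurvature_self (hpos : IsFlowerPosition X x y v ζ r K) :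
    tangencyCurvature (fun u w ↦ lorentz (X u) (X w)) x y v = K := by
  rw [hpos.tangencyCurvature_eq, hpos.eq_lowerHalfPlane, eval_lowerHalfPlane_one, Complex.I_im]
  ring

lemma tangencyCurvature_of_ne (hpos : IsFlowerPosition X x y v ζ r K) (hu : u ≠ v) :
    tangencyCurvature (fun u w ↦ lorentz (X u) (X w)) x y u =
      K / 2 * (((ζ u).re ^ 2 + ((ζ u).im - 1) ^ 2 - r u ^ 2) / r u) := by
  rw [hpos.tangencyCurvature_eq, hpos.eq_ofPlanarDisk u hu,
    eval_ofPlanarDisk_one _ (hpos.radius_pos u hu).ne', ← Complex.normSq_eq_norm_sq,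
    Complex.normSq_apply]
  simp only [Complex.sub_re, Complex.sub_im, Complex.I_re, Complex.I_im]
  ring

lemma im_eq_radius_iff (hpos : IsFlowerPosition X x y v ζ r K) (h : IsFormPacking G X)
    (hu : u ≠ v) : (ζ u).im = r u ↔ G.Adj v u := by
  rw [G.adj_comm, ← h.lorentz_eq_neg_one_iff u v hu, hpos.eq_lowerHalfPlane,
    hpos.eq_ofPlanarDisk u hu, lorentz_ofPlanarDisk_lowerHalfPlane, neg_inj,
    div_eq_one_iff_eq (hpos.radius_pos u hu).ne']

lemma petalWeight_eq (hpos : IsFlowerPosition X x y v ζ r K) (hu : u ≠ v)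
    (him : (ζ u).im = r u) :
    petalWeight (fun u w ↦ lorentz (X u) (X w)) x y v u = 2 * r u / (1 + (ζ u).re ^ 2) := by
  have hr := (hpos.radius_pos u hu).ne'
  have hK := hpos.pos.ne'
  have hden : 1 + (ζ u).re ^ 2 ≠ 0 := by positivity
  have hsum : K + K / 2 * (((ζ u).re ^ 2 + (r u - 1) ^ 2 - r u ^ 2) / r u) =
      K * (1 + (ζ u).re ^ 2) / (2 * r u) := by
    field_simp
    ring
  rw [petalWeight, hpos.tangencyCurvature_self, hpos.tangencyCurvature_of_ne hu, him, hsum]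
  field_simp

lemma isHalfPlanePacking (hpos : IsFlowerPosition X x y v ζ r K) (h : IsFormPacking G X) :
    IsHalfPlanePacking (G.induce {v}ᶜ) (fun u ↦ (ζ u).re) (fun u ↦ (ζ u).im) fun u ↦ r u where
  radius_pos u := hpos.radius_pos u u.2
  radius_le u := by
    have hle := h.lorentz_le u.2
    rw [hpos.eq_lowerHalfPlane, hpos.eq_ofPlanarDisk u u.2, lorentz_ofPlanarDisk_lowerHalfPlane,
      neg_le_neg_iff, one_le_div (hpos.radius_pos u u.2)] at hle
    exact hle
  sep u w huw := by
    rw [← lorentz_ofPlanarDisk_le_neg_one_iff _ _ (hpos.radius_pos u u.2) (hpos.radius_pos w w.2),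
      ← hpos.eq_ofPlanarDisk u u.2, ← hpos.eq_ofPlanarDisk w w.2]
    exact h.lorentz_le (Subtype.coe_ne_coe.2 huw)
  adj_iff u w huw := by
    rw [← lorentz_ofPlanarDisk_eq_neg_one_iff _ _ (hpos.radius_pos u u.2) (hpos.radius_pos w w.2),
      ← hpos.eq_ofPlanarDisk u u.2, ← hpos.eq_ofPlanarDisk w w.2,
      h.lorentz_eq_neg_one_iff _ _ (Subtype.coe_ne_coe.2 huw)]
    rfl

end IsFlowerPosition

lemma ncard_edgeSet_induce_add_ncard_neighborSet [Finite V] (G : SimpleGraph V) (v : V) :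
    (G.induce {v}ᶜ).edgeSet.ncard + (G.neighborSet v).ncard = G.edgeSet.ncard := by
  classical
  have := Fintype.ofFinite V
  have hle : G.degree v ≤ G.edgeFinset.card := by
    rw [← G.card_incidenceFinset_eq_degree]
    exact Finset.card_le_card (G.incidenceFinset_subset v)
  rw [← SimpleGraph.coe_edgeFinset, ← SimpleGraph.coe_edgeFinset, ← G.coe_neighborFinset,
    Set.ncard_coe_finset, Set.ncard_coe_finset, Set.ncard_coe_finset,
    G.card_edgeFinset_induce_compl_singleton, G.card_edgeFinset_deleteIncidenceSet,
    G.card_neighborFinset_eq_degree, Nat.sub_add_cancel hle]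

namespace IsFlowerPosition

lemma image_val_setOf_im_eq_radius (hpos : IsFlowerPosition X x y v ζ r K)
    (h : IsFormPacking G X) :
    Subtype.val '' {u : ({v}ᶜ : Set V) | (ζ u).im = r u} = G.neighborSet v := by
  ext u
  constructor
  · rintro ⟨u, hu, rfl⟩
    exact (hpos.im_eq_radius_iff h u.2).1 hu
  · exact fun hu ↦ ⟨⟨u, hu.ne'⟩, (hpos.im_eq_radius_iff h hu.ne').2 hu, rfl⟩

lemma isSaturatedPacking [Finite V] [Fintype ({v}ᶜ : Set V)]
    (hpos : IsFlowerPosition X x y v ζ r K) (h : IsFormPacking G X)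
    (hcard : G.edgeSet.ncard + 6 = 3 * Nat.card V) (hfour : 4 ≤ Nat.card V) :
    IsSaturatedPacking (G.induce {v}ᶜ) (fun u ↦ (ζ u).re) (fun u ↦ (ζ u).im) fun u ↦ r u := by
  have hU : Fintype.card ({v}ᶜ : Set V) + 1 = Nat.card V := by
    rw [← Nat.card_eq_fintype_card, Nat.card_coe_set_eq, ← Set.ncard_singleton v, add_comm,
      Set.ncard_add_ncard_compl]
  have hbottom : (bottomDisks (fun u : ({v}ᶜ : Set V) ↦ (ζ u).im) fun u ↦ r u).card =
      (G.neighborSet v).ncard := by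
    rw [← hpos.image_val_setOf_im_eq_radius h, Set.ncard_image_of_injective _
      Subtype.val_injective, ← Set.ncard_coe_finset]
    congr 1
    ext u
    exact mem_bottomDisks
  have hedges := ncard_edgeSet_induce_add_ncard_neighborSet G v
  exact ⟨hpos.isHalfPlanePacking h, by omega, by omega⟩

lemma radius_sq_le (hpos : IsFlowerPosition X x y v ζ r K) (h : IsFormPacking G X)
    (hxy : G.Adj x y) (hu : u ≠ v) : r u ^ 2 ≤ (ζ u).re ^ 2 + ((ζ u).im - 1) ^ 2 := by
  have hnn := h.isContactGram.tangencyCurvature_nonneg hxy u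
  rw [hpos.tangencyCurvature_of_ne hu, mul_nonneg_iff_of_pos_left (half_pos hpos.pos),
    le_div_iff₀ (hpos.radius_pos u hu), zero_mul, sub_nonneg] at hnn
  exact hnn

lemma dist_sq_I_eq_radius_sq (hpos : IsFlowerPosition X x y v ζ r K) (hu : u ≠ v)
    (hzero : tangencyCurvature (fun u w ↦ lorentz (X u) (X w)) x y u = 0) :
    (ζ u).re ^ 2 + ((ζ u).im - 1) ^ 2 = r u ^ 2 := by
  rw [hpos.tangencyCurvature_of_ne hu, mul_eq_zero_iff_left (half_pos hpos.pos).ne',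
    div_eq_zero_iff, or_iff_left (hpos.radius_pos u hu).ne',
    sub_eq_zero] at hzero
  exact hzero

lemma exists_isFlower [Finite V] (hpos : IsFlowerPosition X x y v ζ r K) (h : IsFormPacking G X)
    (hcard : G.edgeSet.ncard + 6 = 3 * Nat.card V) (hfour : 4 ≤ Nat.card V) (hxy : G.Adj x y)
    (hx : v ≠ x) (hy : v ≠ y) :
    ∃ m, ∃ b : Fin (m + 1) → V, IsFlower G (fun u w ↦ lorentz (X u) (X w)) x y v b := by
  have := Fintype.ofFinite ({v}ᶜ : Set V)
  obtain ⟨m, hm, b, hb, hrange, hadj, hcross, hsum⟩ :=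
    (hpos.isSaturatedPacking h hcard hfour).exists_flower
      (fun u ↦ hpos.radius_sq_le h hxy u.2)
      ⟨⟨x, hx.symm⟩, hpos.dist_sq_I_eq_radius_sq hx.symm
          (h.isContactGram.tangencyCurvature_left hxy),
        ⟨y, hy.symm⟩, hpos.dist_sq_I_eq_radius_sq hy.symm
          (h.isContactGram.tangencyCurvature_right hxy),
        fun heq ↦ hxy.ne (congrArg Subtype.val heq)⟩
  have hbottom (i : Fin (m + 1)) : (ζ (b i)).im = r (b i) := hrange.subset ⟨i, rfl⟩
  refine ⟨m, fun i ↦ b i, ⟨hm, Subtype.val_injective.comp hb, hadj, hcross⟩, ?_, ?_⟩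
  · rw [← hpos.image_val_setOf_im_eq_radius h, ← hrange, ← Set.range_comp]
    rfl
  · rw [← hsum]
    refine Finset.sum_congr rfl fun i _ ↦ ?_
    rw [hpos.petalWeight_eq (b i).2 (hbottom i), hpos.petalWeight_eq (b (i + 1)).2 (hbottom _)]

end IsFlowerPosition

lemma IsFormPacking.isPackingGram [Finite V] (h : IsFormPacking G X)
    (hcard : G.edgeSet.ncard + 6 = 3 * Nat.card V) (hfour : 4 ≤ Nat.card V) :
    IsPackingGram G fun u w ↦ lorentz (X u) (X w) where
  toIsContactGram := h.isContactGram
  exists_flower x y hxy v hx hy := by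
    obtain ⟨g, ζ, r, K, hpos⟩ := h.exists_isFlowerPosition hxy hx hy
    simpa only [lorentz_pullback] using hpos.exists_isFlower (h.pullback g) hcard hfour hxy hx hy

end FlowerPosition

/-! ### Packings with equal Gram matrices -/

section EqualGram

open scoped MatrixGroups ComplexConjugate

namespace CircleForm

variable {X Y X' Y' : CircleForm}

/-- The image of a form under complex conjugation of the Riemann sphere. -/
noncomputable def conjugate (X : CircleForm) : CircleForm := ⟨X.A, conj X.B, X.C⟩

lemma conjugate_pullback (g : SL(2, ℂ)) (X : CircleForm) :
    (X.pullback g).conjugate = X.conjugate.pullback (g.map (starRingEnd ℂ)) := by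
  have hentry (i j : Fin 2) : g.map (starRingEnd ℂ) i j = conj (g i j) := rfl
  refine CircleForm.ext ?_ ?_ ?_
  · simp [conjugate, pullback_A, eval_eq, hentry]
    ring
  · simp [conjugate, pullback, hentry]
  · simp [conjugate, pullback_C, eval_eq, hentry]
    ring

lemma conjRS_image_disk (X : CircleForm) : conjRS '' X.disk = X.conjugate.disk := by
  have hvalue (p : RS) : X.conjugate.value p = X.value (conjRS p) := by
    induction p using OnePoint.rec with
    | infty => rfl
    | coe z => simp [conjugate, conjRS, eval_eq]
  rw [conjRS_involutive.image_eq_preimage_symm]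
  ext p
  exact (congrArg (· ≤ 0) (hvalue p)).to_iff.symm

/-- The image of a form under the reflection `z ↦ -conj z`. -/
noncomputable def reflect (X : CircleForm) : CircleForm := ⟨X.A, -conj X.B, X.C⟩

lemma reflect_eq_pullback_conjugate (X : CircleForm) : X.reflect =
    X.conjugate.pullback (ofEntries Complex.I 0 0 (-Complex.I) (by simp)) := by
  refine CircleForm.ext ?_ (Complex.ext ?_ ?_) ?_ <;>
    simp [reflect, conjugate, pullback_A, pullback_B_re, pullback_B_im, pullback_C, eval_eq]

lemma lorentz_reflect_self (X : CircleForm) : lorentz X.reflect X.reflect = lorentz X X := by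
  simp [lorentz_eq, reflect]

/-- The form of the closed half plane `1 ≤ Im z`. -/
noncomputable def upperHalfPlane : CircleForm := ⟨0, -Complex.I, 2⟩

lemma lorentz_upperHalfPlane (X : CircleForm) : lorentz X upperHalfPlane = -X.B.im - X.A := by
  simp [lorentz_eq, upperHalfPlane]

lemma pullback_realAffine_one_upperHalfPlane (c : ℝ) :
    upperHalfPlane.pullback (realAffine one_pos c) = upperHalfPlane := by
  refine CircleForm.ext ?_ (Complex.ext ?_ ?_) ?_
  · simp [pullback_realAffine_A, upperHalfPlane]
  · simp [pullback_realAffine_B_re, upperHalfPlane]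
  · simp [pullback_realAffine_B_im]
  · simp [pullback_realAffine_C, upperHalfPlane]

lemma pullback_realAffine_eq_upperHalfPlane (hA : X.A = 0) (hB : X.B = -Complex.I)
    (hC : 0 < X.C) : X.pullback (realAffine (half_pos hC) 0) = upperHalfPlane := by
  refine CircleForm.ext ?_ (Complex.ext ?_ ?_) ?_
  · simp [pullback_realAffine_A, upperHalfPlane, hA]
  · simp [pullback_realAffine_B_re, upperHalfPlane, hB]
  · simp [pullback_realAffine_B_im, upperHalfPlane, hB]
  · simp [pullback_realAffine_C, upperHalfPlane]
    field_simp

lemma exists_A_pullback_eq_zero (hX : lorentz X X = 1) (hB : X.B.im = -1) :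
    ∃ g : SL(2, ℂ), lowerHalfPlane.pullback g = lowerHalfPlane ∧ (X.pullback g).A = 0 := by
  by_cases hA : X.A = 0
  · exact ⟨1, pullback_one _, by rw [pullback_one, hA]⟩
  refine ⟨ofEntries (-X.B.re / X.A : ℝ) (-1) 1 0 (by ring),
    pullback_lowerHalfPlane fun i j ↦ ?_, ?_⟩
  · fin_cases i <;> fin_cases j <;> simp
  · refine (mul_eq_zero_iff_left hA).1 ?_
    rw [pullback_A, ofEntries_zero_zero, ofEntries_one_zero, A_mul_eval_one hX,
      Complex.normSq_apply]
    simp [hB, mul_div_cancel₀ _ hA]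

lemma eq_of_A_eq_of_B_eq (hX : lorentz X X = 1) (hY : lorentz Y Y = 1) (hA0 : X.A ≠ 0)
    (hA : X.A = Y.A) (hB : X.B = Y.B) : X = Y := by
  refine CircleForm.ext hA hB (mul_left_cancel₀ hA0 ?_)
  rw [lorentz_eq] at hX hY
  rw [← hA, ← hB] at hY
  linarith

lemma eq_pullback_realAffine_one (hX : lorentz X X = 1) (hY : lorentz Y Y = 1) (hA0 : X.A ≠ 0)
    (hA : Y.A = X.A) (him : Y.B.im = X.B.im) {c : ℝ} (hre : Y.B.re / Y.A = X.B.re / X.A + c) :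
    Y = X.pullback (realAffine one_pos c) := by
  refine eq_of_A_eq_of_B_eq hY ((lorentz_pullback _ _ _).trans hX) (hA ▸ hA0) ?_
    (Complex.ext ?_ ?_)
  · rw [pullback_realAffine_A, one_mul, hA]
  · rw [pullback_realAffine_B_re]
    rw [hA] at hre
    field_simp at hre
    linarith
  · rw [pullback_realAffine_B_im, him]

lemma re_div_sub_sq_eq (hX : lorentz X X = 1) (hY : lorentz Y Y = 1) (hX' : lorentz X' X' = 1)
    (hY' : lorentz Y' Y' = 1) (hXY : lorentz X Y = lorentz X' Y') (hA : X.A = X'.A)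
    (hA' : Y.A = Y'.A) (him : X.B.im = X'.B.im) (him' : Y.B.im = Y'.B.im) (hA0 : X.A ≠ 0)
    (hA0' : Y.A ≠ 0) :
    (X.B.re / X.A - Y.B.re / Y.A) ^ 2 = (X'.B.re / X'.A - Y'.B.re / Y'.A) ^ 2 := by
  rw [lorentz_eq] at hX hY hX' hY'
  rw [lorentz_eq, lorentz_eq] at hXY
  rw [← hA, ← him] at hX' hXY
  rw [← hA', ← him'] at hY' hXY
  rw [← hA, ← hA']
  field_simp
  linear_combination Y.A ^ 2 * hX - Y.A ^ 2 * hX' + X.A ^ 2 * hY - X.A ^ 2 * hY' -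
    2 * X.A * Y.A * hXY

end CircleForm

lemma exists_eq_add_or_exists_eq_neg_add {S : Type*} {t t' : S → ℝ}
    (h : ∀ u w, (t u - t w) ^ 2 = (t' u - t' w) ^ 2) :
    ∃ c, (∀ u, t' u = t u + c) ∨ ∀ u, t' u = -t u + c := by
  rcases isEmpty_or_nonempty S with hS | ⟨⟨o⟩⟩
  · exact ⟨0, Or.inl isEmptyElim⟩
  by_cases hall : ∀ u, t' u = t u + (t' o - t o)
  · exact ⟨_, Or.inl hall⟩
  push Not at hall
  obtain ⟨w, hw⟩ := hall
  have hneg : t' w - t' o = -(t w - t o) := by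
    rcases sq_eq_sq_iff_eq_or_eq_neg.1 (h w o) with heq | heq
    · exact absurd (by linarith) hw
    · linarith
  have hne : t w - t o ≠ 0 := fun h0 ↦ hw (by linarith)
  refine ⟨t' o + t o, Or.inr fun u ↦ ?_⟩
  have hmul : (t u - t o) * (t w - t o) = (t' u - t' o) * (t' w - t' o) := by
    linear_combination (h u o + h w o - h u w) / 2
  rw [hneg] at hmul
  have := mul_right_cancel₀ hne (hmul.trans (mul_neg _ _ |>.trans (neg_mul _ _).symm))
  linarith

open CircleForm

variable {V : Type*} {G : SimpleGraph V} {X X' X'' : V → CircleForm} {x y w : V}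

/-- The families of disks of `X` and `X'` differ by a Möbius transformation. -/
def MoebiusEquiv (X X' : V → CircleForm) : Prop := ∃ g : SL(2, ℂ), ∀ u, X' u = (X u).pullback g

namespace MoebiusEquiv

lemma symm (h : MoebiusEquiv X X') : MoebiusEquiv X' X := by
  obtain ⟨g, hg⟩ := h
  exact ⟨g⁻¹, fun u ↦ by rw [hg, ← pullback_mul, mul_inv_cancel, pullback_one]⟩

lemma trans (h : MoebiusEquiv X X') (h' : MoebiusEquiv X' X'') : MoebiusEquiv X X'' := by
  obtain ⟨g, hg⟩ := h
  obtain ⟨g', hg'⟩ := h'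
  exact ⟨g * g', fun u ↦ by rw [hg', hg, pullback_mul]⟩

lemma conjugate (h : MoebiusEquiv X X') :
    MoebiusEquiv (fun u ↦ (X u).conjugate) fun u ↦ (X' u).conjugate := by
  obtain ⟨g, hg⟩ := h
  exact ⟨g.map (starRingEnd ℂ), fun u ↦ by simp only [hg, conjugate_pullback]⟩

lemma lorentz_eq (h : MoebiusEquiv X X') (u w : V) :
    lorentz (X' u) (X' w) = lorentz (X u) (X w) := by
  obtain ⟨g, hg⟩ := h
  rw [hg, hg, lorentz_pullback]

lemma exists_image_disk_eq (h : MoebiusEquiv X X') :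
    ∃ f, IsMoebius f ∧ ∀ u, f '' (X u).disk = (X' u).disk := by
  obtain ⟨g, hg⟩ := h.symm
  exact ⟨fun p ↦ g • p, isMoebius_iff.2 ⟨g, rfl⟩, fun u ↦ by rw [hg, smul_image_disk]⟩

end MoebiusEquiv

/-- The disks of `X x` and `X y` are the two components of the complement of the strip
`0 < Im z < 1`. -/
structure IsStripPosition (X : V → CircleForm) (x y : V) : Prop where
  left : X x = lowerHalfPlane
  right : X y = upperHalfPlane

lemma IsFormPacking.exists_isStripPosition (h : IsFormPacking G X) (hxy : G.Adj x y)
    (hwx : w ≠ x) (hwy : w ≠ y) :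
    ∃ Y, MoebiusEquiv X Y ∧ IsFormPacking G Y ∧ IsStripPosition Y x y := by
  obtain ⟨g, hg⟩ := exists_pullback_eq_lowerHalfPlane (h.lorentz_self x)
  have hB := (h.pullback g).lorentz_eq_neg_one hxy.symm
  rw [hg, lorentz_lowerHalfPlane] at hB
  obtain ⟨g', hg', hA⟩ := exists_A_pullback_eq_zero ((h.pullback g).lorentz_self y) hB
  have hpack := h.pullback (g * g')
  rw [← pullback_mul] at hA
  rw [← hg, ← pullback_mul, hg] at hg'
  have hC := hpack.C_pos_of_A_eq_zero hg' hxy.ne' hwy hwx hA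
  have hdisj := hpack.openDisjoint y x hxy.ne'
  simp only [hg'] at hdisj
  refine ⟨_, ⟨g * g' * realAffine (half_pos hC) 0, fun u ↦ rfl⟩, h.pullback _, ?_, ?_⟩
  · rw [pullback_mul, hg', pullback_realAffine_lowerHalfPlane]
  · rw [pullback_mul]
    exact pullback_realAffine_eq_upperHalfPlane hA
      (hdisj.eq_of_A_eq_zero (hpack.lorentz_self y) hA).1 hC

namespace IsStripPosition

lemma reflect (hX : IsStripPosition X x y) : IsStripPosition (fun u ↦ (X u).reflect) x y where
  left := by simp [hX.left, CircleForm.reflect, lowerHalfPlane]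
  right := by simp [hX.right, CircleForm.reflect, upperHalfPlane]

lemma A_pos (hX : IsStripPosition X x y) (h : IsFormPacking G X) (hwx : w ≠ x) (hwy : w ≠ y) :
    0 < (X w).A := by
  have hle := h.lorentz_le hwx
  have hle' := h.lorentz_le hwy
  rw [hX.left, lorentz_lowerHalfPlane] at hle
  rw [hX.right, lorentz_upperHalfPlane] at hle'
  linarith

lemma B_im_eq_and_A_eq (hX : IsStripPosition X x y) (hX' : IsStripPosition X' x y)
    (hgram : ∀ u w, lorentz (X u) (X w) = lorentz (X' u) (X' w)) (u : V) :
    (X u).B.im = (X' u).B.im ∧ (X u).A = (X' u).A := by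
  have hx := hgram u x
  have hy := hgram u y
  rw [hX.left, hX'.left, lorentz_lowerHalfPlane, lorentz_lowerHalfPlane] at hx
  rw [hX.right, hX'.right, lorentz_upperHalfPlane, lorentz_upperHalfPlane] at hy
  exact ⟨hx, by linarith⟩

lemma moebiusEquiv (hX : IsStripPosition X x y) (hX' : IsStripPosition X' x y) {c : ℝ}
    (hc : ∀ u, u ≠ x → u ≠ y → X' u = (X u).pullback (realAffine one_pos c)) :
    MoebiusEquiv X X' := by
  refine ⟨realAffine one_pos c, fun u ↦ ?_⟩
  by_cases hux : u = x
  · rw [hux, hX.left, hX'.left, pullback_realAffine_lowerHalfPlane]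
  by_cases huy : u = y
  · rw [huy, hX.right, hX'.right, pullback_realAffine_one_upperHalfPlane]
  exact hc u hux huy

lemma moebiusEquiv_or_moebiusEquiv_reflect (hX : IsStripPosition X x y)
    (hX' : IsStripPosition X' x y) (h : IsFormPacking G X) (h' : IsFormPacking G X')
    (hgram : ∀ u w, lorentz (X u) (X w) = lorentz (X' u) (X' w)) :
    MoebiusEquiv X X' ∨ MoebiusEquiv (fun u ↦ (X u).reflect) X' := by
  have hcoeff := hX.B_im_eq_and_A_eq hX' hgram
  have hA0 {u : V} (hux : u ≠ x) (huy : u ≠ y) : (X u).A ≠ 0 := (hX.A_pos h hux huy).ne'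
  obtain ⟨c, hc | hc⟩ := exists_eq_add_or_exists_eq_neg_add
    (S := {u : V // u ≠ x ∧ u ≠ y}) (t := fun u ↦ (X u).B.re / (X u).A)
    (t' := fun u ↦ (X' u).B.re / (X' u).A) fun u w ↦ re_div_sub_sq_eq (h.lorentz_self _)
      (h.lorentz_self _) (h'.lorentz_self _) (h'.lorentz_self _) (hgram _ _) (hcoeff _).2
      (hcoeff _).2 (hcoeff _).1 (hcoeff _).1 (hA0 u.2.1 u.2.2) (hA0 w.2.1 w.2.2)
  · exact Or.inl <| hX.moebiusEquiv hX' fun u hux huy ↦ eq_pullback_realAffine_one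
      (h.lorentz_self u) (h'.lorentz_self u) (hA0 hux huy) (hcoeff u).2.symm (hcoeff u).1.symm
      (hc ⟨u, hux, huy⟩)
  · refine Or.inr <| hX.reflect.moebiusEquiv hX' (c := c) fun u hux huy ↦
      eq_pullback_realAffine_one
      ((lorentz_reflect_self _).trans (h.lorentz_self u)) (h'.lorentz_self u) (hA0 hux huy)
      (hcoeff u).2.symm ?_ ?_
    · simp [CircleForm.reflect, (hcoeff u).1]
    · simpa [CircleForm.reflect, neg_div] using hc ⟨u, hux, huy⟩

end IsStripPosition

lemma IsFormPacking.moebiusEquiv_or_moebiusEquiv_conjugate (h : IsFormPacking G X)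
    (h' : IsFormPacking G X') (hxy : G.Adj x y) (hwx : w ≠ x) (hwy : w ≠ y)
    (hgram : ∀ u w, lorentz (X u) (X w) = lorentz (X' u) (X' w)) :
    MoebiusEquiv X X' ∨ MoebiusEquiv (fun u ↦ (X u).conjugate) X' := by
  obtain ⟨Y, hXY, hY, hstrip⟩ := h.exists_isStripPosition hxy hwx hwy
  obtain ⟨Y', hXY', hY', hstrip'⟩ := h'.exists_isStripPosition hxy hwx hwy
  have hgramY (u w : V) : lorentz (Y u) (Y w) = lorentz (Y' u) (Y' w) := by
    rw [hXY.lorentz_eq, hXY'.lorentz_eq, hgram]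
  refine (hstrip.moebiusEquiv_or_moebiusEquiv_reflect hstrip' hY hY' hgramY).imp
    (fun hYY' ↦ (hXY.trans hYY').trans hXY'.symm) fun hYY' ↦ ?_
  have hreflect : MoebiusEquiv (fun u ↦ (Y u).conjugate) fun u ↦ (Y u).reflect :=
    ⟨_, fun u ↦ reflect_eq_pullback_conjugate (Y u)⟩
  exact ((hXY.conjugate.trans hreflect).trans hYY').trans hXY'.symm

end EqualGram

/-! ### Rigidity -/

section Rigidity

open CircleForm

variable {V : Type*} {G : SimpleGraph V} {X X' : V → CircleForm}

section EdgeCount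

lemma card_dart_eq_three_mul_card [Fintype V] [DecidableEq V] [DecidableRel G.Adj]
    {F : Finset (Finset V)} (hthree : ∀ f ∈ F, f.card = 3)
    (hclique : ∀ f ∈ F, ∀ u ∈ f, ∀ v ∈ f, u ≠ v → G.Adj u v)
    (htwo : ∀ u v, G.Adj u v → (F.filter fun f ↦ u ∈ f ∧ v ∈ f).card = 2) :
    Fintype.card G.Dart = 3 * F.card := by
  have hbelow : ∀ f ∈ F,
      (Finset.univ.bipartiteBelow (fun (d : G.Dart) f ↦ d.fst ∈ f ∧ d.snd ∈ f) f).card = 6 := by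
    intro f hf
    have hoff : f.offDiag.card = 6 := by rw [Finset.offDiag_card, hthree f hf]
    rw [← hoff]
    refine Finset.card_bij (fun d _ ↦ d.toProd) (fun d hd ↦ ?_)
      (fun d _ d' _ hdd' ↦ SimpleGraph.Dart.ext _ _ hdd') fun p hp ↦ ?_
    · rw [Finset.mem_bipartiteBelow] at hd
      exact Finset.mem_offDiag.2 ⟨hd.2.1, hd.2.2, d.adj.ne⟩
    · obtain ⟨hp₁, hp₂, hne⟩ := Finset.mem_offDiag.1 hp
      exact ⟨⟨p, hclique f hf _ hp₁ _ hp₂ hne⟩,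
        (Finset.mem_bipartiteBelow _).2 ⟨Finset.mem_univ _, hp₁, hp₂⟩, rfl⟩
  have hdouble := Finset.card_mul_eq_card_mul (fun (d : G.Dart) f ↦ d.fst ∈ f ∧ d.snd ∈ f)
    (fun d _ ↦ htwo d.fst d.snd d.adj) hbelow
  rw [Finset.card_univ] at hdouble
  omega

lemma ncard_edgeSet_add_six_of_isSphereTriangulation [Fintype V] [DecidableEq V]
    [DecidableRel G.Adj] {F : Finset (Finset V)} (hT : IsSphereTriangulation G F) :
    G.edgeSet.ncard + 6 = 3 * Nat.card V := by
  obtain ⟨hthree, hclique, htwo, -, -, heuler⟩ := hT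
  have hdart := card_dart_eq_three_mul_card hthree hclique htwo
  rw [G.dart_card_eq_twice_card_edges] at hdart
  rw [Nat.card_eq_fintype_card, ← G.coe_edgeFinset, Set.ncard_coe_finset]
  omega

lemma two_lt_card_of_ncard_edgeSet_add_six (hconn : G.Connected)
    (hcard : G.edgeSet.ncard + 6 = 3 * Nat.card V) : 2 < Nat.card V := by
  have hle := hconn.card_vert_le_card_edgeSet_add_one
  rw [Nat.card_coe_set_eq] at hle
  omega

variable [Finite V]

lemma eq_top_of_ncard_edgeSet_add_six (hcard : G.edgeSet.ncard + 6 = 3 * Nat.card V)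
    (hthree : Nat.card V = 3) : G = ⊤ := by
  classical
  have := Fintype.ofFinite V
  have htop : (⊤ : SimpleGraph V).edgeSet.ncard = 3 := by
    rw [← SimpleGraph.coe_edgeFinset, Set.ncard_coe_finset,
      SimpleGraph.card_edgeFinset_top_eq_card_choose_two, ← Nat.card_eq_fintype_card, hthree]
    rfl
  exact SimpleGraph.edgeSet_injective <|
    Set.eq_of_subset_of_ncard_le (SimpleGraph.edgeSet_mono le_top) (by omega)

lemma exists_adj_avoiding (hcard : G.edgeSet.ncard + 6 = 3 * Nat.card V)
    (hfour : 4 ≤ Nat.card V) (v : V) : ∃ p q, G.Adj p q ∧ v ≠ p ∧ v ≠ q := by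
  by_contra! hno
  have hempty : (G.induce {v}ᶜ).edgeSet = ∅ := by
    rw [SimpleGraph.edgeSet_eq_empty]
    ext p q
    simp only [SimpleGraph.comap_adj, SimpleGraph.bot_adj, iff_false]
    exact fun hpq ↦ q.2 (hno _ _ hpq fun h ↦ p.2 h.symm).symm
  have hcount := ncard_edgeSet_induce_add_ncard_neighborSet G v
  have hdeg : (G.neighborSet v).ncard ≤ Nat.card V := Set.ncard_le_card _
  rw [hempty, Set.ncard_empty] at hcount
  omega

end EdgeCount

lemma IsFormPacking.lorentz_eq_lorentz [Finite V] (h : IsFormPacking G X)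
    (h' : IsFormPacking G X') (hconn : G.Connected)
    (hcard : G.edgeSet.ncard + 6 = 3 * Nat.card V) (u w : V) :
    lorentz (X u) (X w) = lorentz (X' u) (X' w) := by
  by_cases hfour : 4 ≤ Nat.card V
  · have hgram := (h.isPackingGram hcard hfour).eq (h'.isPackingGram hcard hfour) hconn
      (exists_adj_avoiding hcard hfour)
    exact congrFun₂ hgram u w
  have htwo := two_lt_card_of_ncard_edgeSet_add_six hconn hcard
  have htop := eq_top_of_ncard_edgeSet_add_six hcard (by omega)
  by_cases huw : u = w
  · rw [huw, h.lorentz_self, h'.lorentz_self]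
  have hadj : G.Adj u w := htop ▸ huw
  rw [h.lorentz_eq_neg_one hadj, h'.lorentz_eq_neg_one hadj]

lemma exists_adj_and_ne_of_two_lt_card (hconn : G.Connected) (htwo : 2 < Nat.card V) :
    ∃ x y w, G.Adj x y ∧ w ≠ x ∧ w ≠ y := by
  have : Finite V := Nat.finite_of_card_ne_zero (by omega)
  have : Nontrivial V := Finite.one_lt_card_iff_nontrivial.1 (by omega)
  obtain ⟨x⟩ := hconn.nonempty
  obtain ⟨y, hxy⟩ := hconn.preconnected.exists_adj_of_nontrivial x
  obtain ⟨w, hw⟩ : ∃ w, w ∉ ({x, y} : Set V) := by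
    by_contra! hall
    have huniv : ({x, y} : Set V) = Set.univ := Set.eq_univ_of_forall hall
    have := Set.ncard_pair hxy.ne
    rw [huniv, Set.ncard_univ] at this
    omega
  simp only [Set.mem_insert_iff, Set.mem_singleton_iff, not_or] at hw
  exact ⟨x, y, w, hxy, hw⟩

end Rigidity

end CirclePacking

open CirclePacking in
theorem koebe_andreev_thurston_rigidity_general
    {V : Type*} [Finite V] (G : SimpleGraph V) (hconn : G.Connected)
    (hcard : G.edgeSet.ncard + 6 = 3 * Nat.card V)
    (D D' : V → Set RS)
    (hD : ∀ v, IsDiskRS (D v)) (hD' : ∀ v, IsDiskRS (D' v))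
    (hdisj : ∀ u v : V, u ≠ v → Disjoint (interior (D u)) (interior (D v)))
    (hdisj' : ∀ u v : V, u ≠ v → Disjoint (interior (D' u)) (interior (D' v)))
    (hcg : ∀ u v : V, u ≠ v → ((D u ∩ D v).Nonempty ↔ G.Adj u v))
    (hcg' : ∀ u v : V, u ≠ v → ((D' u ∩ D' v).Nonempty ↔ G.Adj u v)) :
    ∃ f : RS → RS, (IsMoebius f ∨ IsAntiMoebius f) ∧ ∀ v, f '' D v = D' v := by
  obtain ⟨X, hX, hXD⟩ := exists_isFormPacking hD hdisj hcg
  obtain ⟨X', hX', hXD'⟩ := exists_isFormPacking hD' hdisj' hcg'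
  have htwo := two_lt_card_of_ncard_edgeSet_add_six hconn hcard
  obtain ⟨x, y, w, hxy, hwx, hwy⟩ := exists_adj_and_ne_of_two_lt_card hconn htwo
  have hgram := hX.lorentz_eq_lorentz hX' hconn hcard
  simp only [← hXD, ← hXD']
  rcases hX.moebiusEquiv_or_moebiusEquiv_conjugate hX' hxy hwx hwy hgram with hmoeb | hanti
  · obtain ⟨f, hf, himage⟩ := hmoeb.exists_image_disk_eq
    exact ⟨f, Or.inl hf, himage⟩
  · obtain ⟨f, hf, himage⟩ := hanti.exists_image_disk_eq
    refine ⟨fun z ↦ f (conjRS z), Or.inr ⟨f, hf, rfl⟩, fun v ↦ ?_⟩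
    rw [← himage v, ← CircleForm.conjRS_image_disk, Set.image_image]

/-- **Koebe–Andreev–Thurston rigidity.**  Let `G` be the 1-skeleton of a
triangulation of the 2-sphere, and let `{D_v}` and `{D'_v}` be circle packings in the
Riemann sphere (collections of closed disks with pairwise disjoint interiors) both
realizing `G` as contact graph.  Then some Möbius or anti-Möbius transformation
carries `D_v` to `D'_v` for every vertex `v`. -/
theorem koebe_andreev_thurston_rigidity
    {V : Type*} [Fintype V] [DecidableEq V]
    (G : SimpleGraph V) [DecidableRel G.Adj] (F : Finset (Finset V))
    (hT : IsSphereTriangulation G F)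
    (D D' : V → Set RS)
    (hD : ∀ v, IsDiskRS (D v)) (hD' : ∀ v, IsDiskRS (D' v))
    (hdisj : ∀ u v : V, u ≠ v → Disjoint (interior (D u)) (interior (D v)))
    (hdisj' : ∀ u v : V, u ≠ v → Disjoint (interior (D' u)) (interior (D' v)))
    (hcg : ∀ u v : V, u ≠ v → ((D u ∩ D v).Nonempty ↔ G.Adj u v))
    (hcg' : ∀ u v : V, u ≠ v → ((D' u ∩ D' v).Nonempty ↔ G.Adj u v)) :
    ∃ f : RS → RS, (IsMoebius f ∨ IsAntiMoebius f) ∧ ∀ v, f '' D v = D' v := by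
  exact koebe_andreev_thurston_rigidity_general G hT.2.2.2.2.1
    (CirclePacking.ncard_edgeSet_add_six_of_isSphereTriangulation hT) D D' hD hD' hdisj hdisj'
    hcg hcg'
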